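/- There exists a universal constant C > 0 such that for every n ≥ 2 and every convex body K ⊆ ℝⁿ in isotropic position, M(K) ≤ C·ψ_n·√(log(n+1))/√n. -/

import Mathlib

/-!
Let `f = ‖·‖_K`. Since `f ≤ 1` on `K`, its integral against the uniform measure `μ` on `K` is at most
`1`. A discrete version of stochastic localization bounds this integral from below by the expectation
of `f` along a random walk, and that expectation is a multiple of `M(K)`.

A log-concave probability measure `μ` on `K` with invertible covariance `A` is tilted by the affine
density `1 + ⟨A⁻¹ g, x - bary μ⟩`, where `g` is uniform on a small ball. The tilted measure is again
log-concave, `∫ f` is unchanged on average, the barycentre moves by `g`, and `A` changes by a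
contraction of the third-moment tensor with `A⁻¹ g`, minus `g ⊗ g`. As long as the spectrum of `A`
stays in `[1/2, 3/2]`, the Poincaré inequality with constant `ψₙ²`, applied to quadratic forms after
normalising `μ` to be isotropic, bounds the contraction in Hilbert–Schmidt norm
(`IsState.thirdMom_bound`). Hence the potential `tr (A - 1)^p + n 4^{-p}`, with `p` even, grows on
average by a factor of at most `1 + O(p² ψₙ² s)` per step, where `s` is the variance of a coordinate
of `g` (`exists_pot_step`).

Induction on the number of steps (`walk_le_integral`) gives: `∫ f dμ` is at least the expectation of
`f` along the walk started at the barycentre, up to a relative error controlled by the potential. For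
the isotropic body, with `p` of order `log (n + 1)` and total variance `N s` of order `1 / (p ψₙ²)`, the
error is at most half of the main term (`growth_budget`). Since the walk started at `0` has a rotation
invariant law and `f` is homogeneous, its expectation is `M(K)` times the expected norm of the walk
(`walk_eq_sphere_mean`), which is at least `√(n N s) / 5` (`walk_norm_zero`). So
`M(K) √(n / (ψₙ² log (n + 1)))` is bounded.

The supremum defining `ψₙ` must be known to be finite. This is a Poincaré inequality for isotropic
log-concave measures with a constant depending on the dimension (`exists_poincare`). It is proved by
comparing the values of a function at two independent points with its value at their midpoint; the
path is integrated using log-concavity and the exponential decay of the density (`exists_decay`).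
-/

open MeasureTheory Real Pointwise RealInnerProductSpace
open scoped ENNReal

noncomputable section

/-- A convex body: a compact convex set with non-empty interior. -/
def IsConvexBody {n : ℕ} (K : Set (EuclideanSpace ℝ (Fin n))) : Prop :=
  IsCompact K ∧ Convex ℝ K ∧ (interior K).Nonempty

/-- The uniform probability measure on a set `K`. -/
def unifOn {n : ℕ} (K : Set (EuclideanSpace ℝ (Fin n))) : Measure (EuclideanSpace ℝ (Fin n)) :=
  (volume K)⁻¹ • volume.restrict K

/-- A probability measure `μ` on `ℝⁿ` is isotropic: its barycenter vanishes and its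
covariance matrix is the identity. -/
def IsIsotropicMeasure {n : ℕ} (μ : Measure (EuclideanSpace ℝ (Fin n))) : Prop :=
  (∀ i, ∫ x, x i ∂μ = 0) ∧ ∀ i j, ∫ x, x i * x j ∂μ = if i = j then 1 else 0

/-- A convex body is in isotropic position if the uniform probability measure on it
is isotropic. -/
def IsIsotropicBody {n : ℕ} (K : Set (EuclideanSpace ℝ (Fin n))) : Prop :=
  IsIsotropicMeasure (unifOn K)

/-- A log-concave density: nonnegative, and multiplicatively convex. This is equivalent to:
`{p > 0}` is convex and `log (1/p)` is convex on it. -/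
def IsLogConcaveDensity {n : ℕ} (p : EuclideanSpace ℝ (Fin n) → ℝ) : Prop :=
  (∀ x, 0 ≤ p x) ∧ ∀ x y : EuclideanSpace ℝ (Fin n), ∀ t : ℝ, 0 ≤ t → t ≤ 1 →
    p x ^ t * p y ^ (1 - t) ≤ p (t • x + (1 - t) • y)

/-- A measure on `ℝⁿ` is log-concave if it has a log-concave density w.r.t. Lebesgue. -/
def IsLogConcaveMeasure {n : ℕ} (μ : Measure (EuclideanSpace ℝ (Fin n))) : Prop :=
  ∃ p : EuclideanSpace ℝ (Fin n) → ℝ, Measurable p ∧ IsLogConcaveDensity p ∧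
    μ = volume.withDensity fun x => ENNReal.ofReal (p x)

/-- The standard Gaussian probability measure on `ℝⁿ`. -/
def stdGaussian (n : ℕ) : Measure (EuclideanSpace ℝ (Fin n)) :=
  volume.withDensity fun x => ENNReal.ofReal ((2 * π) ^ (-(n : ℝ) / 2) * Real.exp (-‖x‖ ^ 2 / 2))

/-- The Poincaré constant of a measure: the least `A ≥ 0` such that
`Var f ≤ A ⬝ E |∇ f|²` for all locally Lipschitz `f`. -/
def poincareConst {n : ℕ} (μ : Measure (EuclideanSpace ℝ (Fin n))) : ℝ :=
  sInf {A : ℝ | 0 ≤ A ∧ ∀ f : EuclideanSpace ℝ (Fin n) → ℝ, LocallyLipschitz f →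
    ∫ x, (f x - ∫ y, f y ∂μ) ^ 2 ∂μ ≤ A * ∫ x, ‖gradient f x‖ ^ 2 ∂μ}

/-- The KLS constant `ψₙ`. -/
def KLSConst (n : ℕ) : ℝ :=
  sSup {s : ℝ | ∃ μ : Measure (EuclideanSpace ℝ (Fin n)), IsProbabilityMeasure μ ∧
    IsLogConcaveMeasure μ ∧ IsIsotropicMeasure μ ∧ s = Real.sqrt (poincareConst μ)}

/-- The Hilbert-Schmidt norm of a matrix. -/
def hsNorm {n : ℕ} (M : Matrix (Fin n) (Fin n) ℝ) : ℝ :=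
  Real.sqrt (∑ i, ∑ j, (M i j) ^ 2)

/-- The coefficient `κₙ`, the supremum of `‖E [X₁ (X ⊗ X)]‖_HS` over all isotropic
log-concave random vectors `X` in `ℝⁿ`. -/
def kappaConst (n : ℕ) : ℝ :=
  sSup {s : ℝ | ∃ μ : Measure (EuclideanSpace ℝ (Fin n)), IsProbabilityMeasure μ ∧
    IsLogConcaveMeasure μ ∧ IsIsotropicMeasure μ ∧ ∃ h : 0 < n,
    s = hsNorm (Matrix.of fun i j => ∫ x, x ⟨0, h⟩ * (x i * x j) ∂μ)}

/-- A gauge function on `ℝⁿ`: non-negative, convex, positively homogeneous. -/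
def IsGauge {n : ℕ} (f : EuclideanSpace ℝ (Fin n) → ℝ) : Prop :=
  (∀ x, 0 ≤ f x) ∧ ConvexOn ℝ Set.univ f ∧
    ∀ (c : ℝ), 0 ≤ c → ∀ x, f (c • x) = c * f x

/-- `M(K)`: the mean of the Minkowski functional of `K` over the unit sphere, w.r.t. the
uniform probability measure on the sphere. -/
def Mparam (n : ℕ) (K : Set (EuclideanSpace ℝ (Fin n))) : ℝ :=
  ∫ x : Metric.sphere (0 : EuclideanSpace ℝ (Fin n)) 1,
    gauge K x ∂(((volume : Measure (EuclideanSpace ℝ (Fin n))).toSphere Set.univ)⁻¹ •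
      (volume : Measure (EuclideanSpace ℝ (Fin n))).toSphere)

/-- The polar body. -/
def polarBody {n : ℕ} (K : Set (EuclideanSpace ℝ (Fin n))) : Set (EuclideanSpace ℝ (Fin n)) :=
  {x | ∀ y ∈ K, ⟪x, y⟫ ≤ 1}

/-- `R(K)`: the maximal Euclidean norm of a point of `K`. -/
def Rparam {n : ℕ} (K : Set (EuclideanSpace ℝ (Fin n))) : ℝ :=
  sSup {r : ℝ | ∃ x ∈ K, r = ‖x‖}

/-- The operator norm `‖A : K → T‖ = sup_{x ≠ 0} ‖Ax‖_T / ‖x‖_K` (Minkowski functionals). -/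
def mapNorm {n : ℕ} (K T : Set (EuclideanSpace ℝ (Fin n)))
    (A : Matrix (Fin n) (Fin n) ℝ) : ℝ :=
  sSup {r : ℝ | ∃ x : EuclideanSpace ℝ (Fin n), x ≠ 0 ∧
    r = gauge T (Matrix.toEuclideanLin A x) / gauge K x}

/-- The ℓ₂ operator norm of a matrix. -/
def matOpNorm {n : ℕ} (M : Matrix (Fin n) (Fin n) ℝ) : ℝ :=
  ‖LinearMap.toContinuousLinearMap (Matrix.toEuclideanLin M)‖

section Proof
open scoped NNReal

/-! ### Isotropic log-concave densities: boundedness and exponential decay -/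

/-- Shorthand for `ℝⁿ` with the Euclidean norm. -/
abbrev Eu (n : ℕ) := EuclideanSpace ℝ (Fin n)

lemma lintegral_affine {n : ℕ} (φ : Eu n → ℝ≥0∞) (a : Eu n) {c : ℝ} (hc : 0 < c) :
    ∫⁻ y, φ (a + c • y) = ENNReal.ofReal ((c ^ n)⁻¹) * ∫⁻ x, φ x := by
  have h1 := Measure.map_addHaar_smul (volume : Measure (Eu n)) hc.ne'
  have hs : MeasurableEmbedding (fun y : Eu n => c • y) :=
    (Homeomorph.smulOfNeZero c hc.ne').measurableEmbedding
  calc ∫⁻ y, φ (a + c • y) = ∫⁻ x, φ (a + x) ∂(Measure.map (fun y : Eu n => c • y) volume) := by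
        rw [hs.lintegral_map]
    _ = ENNReal.ofReal ((c ^ n)⁻¹) * ∫⁻ x, φ (a + x) := by
        rw [h1, lintegral_smul_measure, finrank_euclideanSpace_fin, abs_of_pos (by positivity)]
        rfl
    _ = _ := by rw [lintegral_add_left_eq_self]

section LogConcave
variable {n : ℕ} {p : Eu n → ℝ}

lemma IsLogConcaveDensity.half (hp : IsLogConcaveDensity p) (x y : Eu n) :
    √(p x) * √(p y) ≤ p ((1 / 2 : ℝ) • x + (1 / 2 : ℝ) • y) := by
  have := hp.2 x y (1 / 2) (by norm_num) (by norm_num)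
  rw [show (1 : ℝ) - 1 / 2 = 1 / 2 by norm_num] at this
  rwa [← sqrt_eq_rpow, ← sqrt_eq_rpow] at this

/-- A log-concave probability density is bounded: `√(p x) √(p y) ≤ p ((x + y) / 2)`, integrated in
`y`, bounds `√(p x) ∫ √p` by `2ⁿ`. -/
lemma IsLogConcaveDensity.bddAbove (hp : IsLogConcaveDensity p) (hm : Measurable p)
    (h1 : ∫⁻ x, ENNReal.ofReal (p x) = 1) : BddAbove (Set.range p) := by
  set S := ∫⁻ y, ENNReal.ofReal (√(p y)) with hS
  have hS0 : S ≠ 0 := by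
    intro h0
    rw [hS, lintegral_eq_zero_iff (by fun_prop)] at h0
    have : ∫⁻ x, ENNReal.ofReal (p x) = 0 := by
      rw [lintegral_eq_zero_iff (by fun_prop)]
      filter_upwards [h0] with x hx
      simp only [Pi.zero_apply, ENNReal.ofReal_eq_zero] at hx ⊢
      exact Real.sqrt_eq_zero'.1 (le_antisymm hx (sqrt_nonneg _))
    rw [h1] at this; exact one_ne_zero this
  have key : ∀ x, ENNReal.ofReal (√(p x)) * S ≤ ENNReal.ofReal (2 ^ n) := by
    intro x
    rw [hS, ← lintegral_const_mul _ (by fun_prop)]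
    calc _ ≤ ∫⁻ y, ENNReal.ofReal (p ((1 / 2 : ℝ) • x + (1 / 2 : ℝ) • y)) := by
          refine lintegral_mono fun y => ?_
          rw [← ENNReal.ofReal_mul (sqrt_nonneg _)]
          exact ENNReal.ofReal_le_ofReal (hp.half x y)
      _ = _ := by
          rw [lintegral_affine (fun z => ENNReal.ofReal (p z)) _ (by norm_num), h1, mul_one]
          congr 1; simp
  obtain ⟨s, hs0, hsS⟩ : ∃ s : ℝ, 0 < s ∧ ENNReal.ofReal s ≤ S := by
    obtain ⟨s, hs, hsS⟩ := ENNReal.lt_iff_exists_nnreal_btwn.1 (pos_iff_ne_zero.2 hS0)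
    exact ⟨s, by exact_mod_cast hs, by simpa using hsS.le⟩
  refine ⟨(2 ^ n / s) ^ 2, ?_⟩
  rintro _ ⟨x, rfl⟩
  have h2 : ENNReal.ofReal (√(p x)) * ENNReal.ofReal s ≤ ENNReal.ofReal (2 ^ n) :=
    (mul_le_mul_right hsS _).trans (key x)
  rw [← ENNReal.ofReal_mul (sqrt_nonneg _), ENNReal.ofReal_le_ofReal_iff (by positivity)] at h2
  have h3 : √(p x) ≤ 2 ^ n / s := (le_div_iff₀ hs0).2 h2
  exact (Real.sqrt_le_left (by positivity)).1 h3

end LogConcave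

section Iso
variable {n : ℕ} {μ : Measure (Eu n)}

lemma IsIsotropicMeasure.integrable_mul [IsProbabilityMeasure μ] (h : IsIsotropicMeasure μ)
    (i : Fin n) : Integrable (fun x : Eu n => x i * x i) μ := by
  by_contra hc
  have := h.2 i i
  rw [integral_undef hc] at this
  simp at this

lemma IsIsotropicMeasure.integrable_coord [IsProbabilityMeasure μ] (h : IsIsotropicMeasure μ)
    (i : Fin n) : Integrable (fun x : Eu n => x i) μ := by
  have hm : MemLp (fun x : Eu n => x i) 2 μ := by
    rw [memLp_two_iff_integrable_sq (by fun_prop)]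
    simpa [sq] using h.integrable_mul i
  exact hm.integrable (by norm_num)

lemma IsIsotropicMeasure.lintegral_norm_add [IsProbabilityMeasure μ] (h : IsIsotropicMeasure μ)
    (x : Eu n) : ∫⁻ y, ENNReal.ofReal (‖x + y‖ ^ 2) ∂μ = ENNReal.ofReal (‖x‖ ^ 2 + n) := by
  have e : ∀ y : Eu n, ‖x + y‖ ^ 2 = ∑ i, (x i * x i + 2 * x i * y i + y i * y i) := by
    intro y
    rw [EuclideanSpace.real_norm_sq_eq]
    refine Finset.sum_congr rfl fun i _ => ?_
    simp only [PiLp.add_apply]; ring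
  have hint : ∀ i, Integrable (fun y : Eu n => x i * x i + 2 * x i * y i + y i * y i) μ := fun i =>
    ((integrable_const _).add ((h.integrable_coord i).const_mul _)).add (h.integrable_mul i)
  rw [← ofReal_integral_eq_lintegral_ofReal]
  · congr 1
    simp_rw [e]
    rw [integral_finsetSum _ fun i _ => hint i]
    rw [EuclideanSpace.real_norm_sq_eq]
    have : ∀ i, ∫ y : Eu n, (x i * x i + 2 * x i * y i + y i * y i) ∂μ = x i ^ 2 + 1 := by
      intro i
      rw [integral_add, integral_add, integral_const, integral_const_mul, h.1 i, h.2 i i]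
      · simp [sq]
      · exact integrable_const _
      · exact (h.integrable_coord i).const_mul _
      · exact (integrable_const _).add ((h.integrable_coord i).const_mul _)
      · exact h.integrable_mul i
    simp [this, Finset.sum_add_distrib]
  · simp_rw [e]; exact integrable_finsetSum _ fun i _ => hint i
  · exact Filter.Eventually.of_forall fun y => by positivity

end Iso

/-- Points where an isotropic log-concave density is comparable to its maximum lie in a ball
whose radius depends on the dimension only: the law of `X` dominates a multiple of the law of
`(x + X) / 2`, and second moments are compared. -/
lemma level_set_bound {n : ℕ} {p : Eu n → ℝ} (hp : IsLogConcaveDensity p) (hm : Measurable p)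
    (hprob : IsProbabilityMeasure ((volume : Measure (Eu n)).withDensity fun x => ENNReal.ofReal (p x)))
    (hiso : IsIsotropicMeasure ((volume : Measure (Eu n)).withDensity fun x => ENNReal.ofReal (p x)))
    {m : ℝ} (hpm : ∀ x, p x ≤ m) {x : Eu n} (hx : m * exp (-1) ≤ p x) :
    ‖x‖ ^ 2 ≤ 4 * exp 1 * 2 ^ n * n := by
  have h1 : ∀ y, exp (-1) * p y ≤ p ((1 / 2 : ℝ) • x + (1 / 2 : ℝ) • y) := by
    intro y
    refine le_trans ?_ (hp.half x y)
    have h0 := hp.1 y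
    have hm0 : 0 ≤ m := h0.trans (hpm y)
    have : exp (-1) * p y ≤ √(p x * p y) := by
      apply Real.le_sqrt_of_sq_le
      have e1 : exp (-1) ≤ 1 := by rw [exp_le_one_iff]; norm_num
      have e0 := exp_pos (-1)
      calc (exp (-1) * p y) ^ 2 = (exp (-1) * p y) * exp (-1) * p y := by ring
        _ ≤ (1 * m) * exp (-1) * p y := by gcongr; exact hpm y
        _ = m * exp (-1) * p y := by ring
        _ ≤ p x * p y := by gcongr
    rwa [Real.sqrt_mul (hp.1 x)] at this
  have hmo : Measurable fun x => ENNReal.ofReal (p x) := by fun_prop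
  have e0 := hiso.lintegral_norm_add (0 : Eu n)
  have ex := hiso.lintegral_norm_add x
  rw [lintegral_withDensity_eq_lintegral_mul _ hmo (by fun_prop)] at e0 ex
  simp only [Pi.mul_apply, zero_add, norm_zero] at e0 ex
  have h2 := lintegral_affine (fun z => ENNReal.ofReal (p z) * ENNReal.ofReal (‖z‖ ^ 2))
    ((1 / 2 : ℝ) • x) (c := 1 / 2) (by norm_num)
  rw [e0] at h2
  have h3 : ENNReal.ofReal (exp (-1) * (1 / 4)) *
      ENNReal.ofReal (‖x‖ ^ 2 + n) ≤ ENNReal.ofReal (((1 / 2 : ℝ) ^ n)⁻¹) * ENNReal.ofReal (0 ^ 2 + n) := by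
    rw [← h2, ← ex, ← lintegral_const_mul _ (by fun_prop)]
    refine lintegral_mono fun y => ?_
    rw [← smul_add, norm_smul, ← ENNReal.ofReal_mul (hp.1 _), ← ENNReal.ofReal_mul (by positivity),
      ← ENNReal.ofReal_mul (hp.1 _)]
    apply ENNReal.ofReal_le_ofReal
    have := h1 y
    rw [← smul_add] at this
    calc _ = (exp (-1) * p y) * (‖(1 / 2 : ℝ)‖ * ‖x + y‖) ^ 2 := by norm_num; ring
      _ ≤ _ := by gcongr
  rw [← ENNReal.ofReal_mul (by positivity), ← ENNReal.ofReal_mul (by positivity),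
    ENNReal.ofReal_le_ofReal_iff (by positivity)] at h3
  have h4 : exp 1 * exp (-1) = 1 := by rw [← exp_add]; simp
  have h5 : ((1 / 2 : ℝ) ^ n)⁻¹ = 2 ^ n := by simp
  rw [h5] at h3
  have e1 := exp_pos 1
  have := mul_le_mul_of_nonneg_left h3 (by positivity : 0 ≤ 4 * exp 1)
  have h6 : 4 * exp 1 * (exp (-1) * (1 / 4) * (‖x‖ ^ 2 + n)) = ‖x‖ ^ 2 + n := by
    linear_combination (‖x‖ ^ 2 + n) * h4
  rw [h6] at this
  have hn : (0 : ℝ) ≤ n := by positivity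
  nlinarith

/-- Exponential decay of isotropic log-concave densities, at a rate depending on the dimension
only: along a ray from a near-maximum `x₀` the density has dropped by a constant factor at a distance
given by `level_set_bound`, and log-concavity propagates the drop. -/
lemma exists_decay (n : ℕ) : ∃ b : ℝ, 0 < b ∧ ∀ p : Eu n → ℝ, IsLogConcaveDensity p → Measurable p →
    IsProbabilityMeasure ((volume : Measure (Eu n)).withDensity fun x => ENNReal.ofReal (p x)) →
    IsIsotropicMeasure ((volume : Measure (Eu n)).withDensity fun x => ENNReal.ofReal (p x)) →
    ∃ (m : ℝ) (x₀ : Eu n), 0 < m ∧ (∀ x, p x ≤ m) ∧ m * exp (-1 / 2) ≤ p x₀ ∧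
      ∀ x, p x ≤ exp 1 * m * exp (-b * ‖x - x₀‖) := by
  set D : ℝ := √(4 * exp 1 * 2 ^ n * n) + 1 with hD
  have hD0 : 0 < D := by positivity
  refine ⟨1 / (4 * D), by positivity, fun p hp hm hprob hiso => ?_⟩
  have h1 : ∫⁻ x, ENNReal.ofReal (p x) = 1 := by
    have := hprob.measure_univ
    rwa [withDensity_apply _ MeasurableSet.univ, Measure.restrict_univ] at this
  have hb := hp.bddAbove hm h1
  set m := sSup (Set.range p)
  have hpm : ∀ x, p x ≤ m := fun x => le_csSup hb ⟨x, rfl⟩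
  have hm0 : 0 < m := by
    by_contra hc
    have : ∀ x, ENNReal.ofReal (p x) = 0 := fun x =>
      ENNReal.ofReal_eq_zero.2 ((hpm x).trans (not_lt.1 hc))
    simp [this] at h1
  obtain ⟨x₀, hx₀⟩ : ∃ x₀, m * exp (-1 / 2) < p x₀ := by
    have : m * exp (-1 / 2) < m := by
      have : exp (-1 / 2) < 1 := by rw [exp_lt_one_iff]; norm_num
      nlinarith
    obtain ⟨_, ⟨x, rfl⟩, hx⟩ := exists_lt_of_lt_csSup (Set.range_nonempty p) this
    exact ⟨x, hx⟩
  refine ⟨m, x₀, hm0, hpm, hx₀.le, fun x => ?_⟩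
  have hlev : ∀ x, m * exp (-1) ≤ p x → ‖x‖ < D := by
    intro x hx
    have := level_set_bound hp hm hprob hiso hpm hx
    have := Real.le_sqrt_of_sq_le this
    linarith
  have hx0D : ‖x₀‖ < D := hlev _ ((mul_le_mul_of_nonneg_left
    (exp_le_exp.2 (by norm_num)) hm0.le).trans hx₀.le)
  set s := ‖x - x₀‖ / (2 * D) with hs
  have hbs : -(1 / (4 * D)) * ‖x - x₀‖ = -s / 2 := by rw [hs]; field_simp; ring
  rw [hbs]
  by_cases hs1 : s ≤ 1
  · calc p x ≤ m := hpm x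
      _ = m * 1 := by ring
      _ ≤ m * exp (1 + -s / 2) := by gcongr; apply one_le_exp; linarith
      _ = _ := by rw [exp_add]; ring
  push Not at hs1
  have hs0 : 0 < s := by linarith
  set w := s⁻¹ • x + (1 - s⁻¹) • x₀ with hw
  have hw' : p w < m * exp (-1) := by
    by_contra hc
    have h := hlev w (not_lt.1 hc)
    have hwx : w - x₀ = s⁻¹ • (x - x₀) := by rw [hw]; module
    have hn : ‖w - x₀‖ = 2 * D := by
      rw [hwx, norm_smul, norm_of_nonneg (by positivity), hs]
      have : ‖x - x₀‖ ≠ 0 := by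
        intro h0; rw [hs, h0] at hs0; simp at hs0
      field_simp
    have := norm_sub_le w x₀
    linarith
  have hlc := hp.2 x x₀ s⁻¹ (by positivity) (inv_le_one_of_one_le₀ hs1.le)
  have hlt := hlc.trans_lt hw'
  rcases (hp.1 x).eq_or_lt with h0 | hpos
  · rw [← h0]; positivity
  have hp0 : 0 < p x₀ := lt_of_le_of_lt (by positivity) hx₀
  have hl := Real.log_lt_log (by positivity) hlt
  rw [Real.log_mul (by positivity) (by positivity), Real.log_mul hm0.ne' (exp_ne_zero _), Real.log_exp,
    Real.log_rpow hpos, Real.log_rpow hp0] at hl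
  have hl0 := Real.log_lt_log (by positivity) hx₀
  rw [Real.log_mul hm0.ne' (exp_ne_zero _), Real.log_exp] at hl0
  have hfin : Real.log (p x) ≤ Real.log (exp 1 * m * exp (-s / 2)) := by
    rw [Real.log_mul (by positivity) (by positivity), Real.log_mul (by positivity) hm0.ne',
      Real.log_exp, Real.log_exp]
    have h3 : s * (s⁻¹ * Real.log (p x) + (1 - s⁻¹) * Real.log (p x₀)) <
        s * (Real.log m + -1) := mul_lt_mul_of_pos_left hl hs0
    have h4 : s * (s⁻¹ * Real.log (p x) + (1 - s⁻¹) * Real.log (p x₀))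
      = Real.log (p x) + (s - 1) * Real.log (p x₀) := by field_simp
    rw [h4] at h3
    have h5 : (s - 1) * (Real.log m + -1 / 2) ≤ (s - 1) * Real.log (p x₀) :=
      mul_le_mul_of_nonneg_left hl0.le (by linarith)
    nlinarith
  exact (Real.log_le_log_iff hpos (by positivity)).1 hfin

/-! ### Increments of locally Lipschitz functions along segments -/

lemma LocallyLipschitz.ae_differentiableAt' {n : ℕ} {f : Eu n → ℝ} (hf : LocallyLipschitz f) :
    ∀ᵐ x : Eu n, DifferentiableAt ℝ f x := by
  rw [ae_iff]
  refine measure_null_of_locally_null _ fun x _ => ?_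
  obtain ⟨K, t, ht, hK⟩ := hf x
  obtain ⟨u, hut, huo, hxu⟩ := mem_nhds_iff.1 ht
  refine ⟨{x | ¬ DifferentiableAt ℝ f x} ∩ u, ?_, ?_⟩
  · exact inter_mem_nhdsWithin _ (huo.mem_nhds hxu)
  · have h := (hK.mono hut).ae_differentiableWithinAt_of_mem (μ := (volume : Measure (Eu n)))
    rw [ae_iff] at h
    refine measure_mono_null ?_ h
    rintro z ⟨hz, hzu⟩
    simp only [Set.mem_ofPred_eq, Classical.not_imp]
    exact ⟨hzu, fun hd => hz (hd.differentiableAt (huo.mem_nhds hzu))⟩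

lemma norm_gradient_eq {n : ℕ} (f : Eu n → ℝ) (x : Eu n) : ‖gradient f x‖ = ‖fderiv ℝ f x‖ := by
  simp [gradient]

lemma lintegral_cs {α : Type*} [MeasurableSpace α] {μ : Measure α} {u v : α → ℝ≥0∞}
    (hu : AEMeasurable u μ) (hv : AEMeasurable v μ) :
    (∫⁻ a, u a * v a ∂μ) ^ 2 ≤ (∫⁻ a, u a ^ 2 ∂μ) * ∫⁻ a, v a ^ 2 ∂μ := by
  have h := ENNReal.lintegral_mul_le_Lp_mul_Lq μ Real.HolderConjugate.two_two hu hv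
  have h2 := pow_le_pow_left' h 2
  refine h2.trans_eq ?_
  rw [mul_pow]
  simp only [ENNReal.rpow_two]
  rw [← ENNReal.rpow_natCast, ← ENNReal.rpow_natCast, ← ENNReal.rpow_mul, ← ENNReal.rpow_mul]
  norm_num

lemma lintegral_exp_le {β r : ℝ} (hβ : 0 < β) (hr : 0 ≤ r) :
    ∫⁻ t in Set.Ioc (0 : ℝ) (1 / 2), ENNReal.ofReal (r * exp (-β * t * r)) ≤ ENNReal.ofReal (1 / β) := by
  have hd : ∀ t : ℝ, HasDerivAt (fun t => -(exp (-β * t * r)) / β) (r * exp (-β * t * r)) t := by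
    intro t
    have h1 : HasDerivAt (fun t : ℝ => -β * t * r) (-β * r) t := by
      simpa using ((hasDerivAt_id t).const_mul (-β)).mul_const r
    have h2 := (h1.exp.neg).div_const β
    have e : r * exp (-β * t * r) = -(exp (-β * t * r) * (-β * r)) / β := by
      rw [eq_div_iff hβ.ne']; ring
    rw [e]; exact h2
  have hc : Continuous fun t : ℝ => r * exp (-β * t * r) := by fun_prop
  rw [← ofReal_integral_eq_lintegral_ofReal]
  · apply ENNReal.ofReal_le_ofReal
    rw [← intervalIntegral.integral_of_le (by norm_num),
      intervalIntegral.integral_eq_sub_of_hasDerivAt (fun t _ => hd t) (hc.intervalIntegrable _ _)]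
    have : 0 < exp (-β * (1 / 2) * r) / β := by positivity
    simp only [mul_zero, zero_mul, exp_zero]
    rw [neg_div, neg_div]; linarith
  · exact hc.integrableOn_Ioc
  · exact Filter.Eventually.of_forall fun t => by positivity

/-- The increment of a locally Lipschitz function from `x` to the midpoint of `x` and `y`. -/
lemma segment_bound {n : ℕ} {f : Eu n → ℝ} (hf : LocallyLipschitz f) (x y : Eu n)
    (hd : ∀ᵐ t ∂(volume.restrict (Set.Ioc (0 : ℝ) (1 / 2))),
      DifferentiableAt ℝ f (t • y + (1 - t) • x)) :
    ENNReal.ofReal |f x - f ((1 / 2 : ℝ) • y + (1 / 2 : ℝ) • x)| ≤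
      ∫⁻ t in Set.Ioc (0 : ℝ) (1 / 2),
        ENNReal.ofReal (‖fderiv ℝ f (t • y + (1 - t) • x)‖ * ‖x - y‖) := by
  set γ : ℝ → Eu n := fun t => t • y + (1 - t) • x with hγ
  have hγd : ∀ t, HasDerivAt γ (y - x) t := by
    intro t
    have h1 : HasDerivAt (fun t : ℝ => t • y) ((1 : ℝ) • y) t := (hasDerivAt_id t).smul_const y
    have h2 : HasDerivAt (fun t : ℝ => (1 - t) • x) ((-1 : ℝ) • x) t := by
      have : HasDerivAt (fun t : ℝ => 1 - t) (-1) t := by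
        simpa using (hasDerivAt_id t).const_sub 1
      exact this.smul_const x
    have e : y - x = (1 : ℝ) • y + (-1 : ℝ) • x := by module
    rw [e]
    exact h1.add h2
  have hγl : LocallyLipschitz γ := by
    have : ContDiff ℝ 1 γ := by rw [hγ]; fun_prop
    exact this.locallyLipschitz
  have hφ : LocallyLipschitz (f ∘ γ) := hf.comp hγl
  obtain ⟨K, hK⟩ := (hφ.locallyLipschitzOn (s := Set.uIcc 0 (1 / 2))).exists_lipschitzOnWith_of_compact
    isCompact_uIcc
  have hac := hK.absolutelyContinuousOnInterval
  have hftc := hac.integral_deriv_eq_sub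
  have hx : γ 0 = x := by simp [hγ]
  have hw : γ (1 / 2) = (1 / 2 : ℝ) • y + (1 / 2 : ℝ) • x := by
    simp only [hγ]; norm_num
  rw [Function.comp_apply, Function.comp_apply, hx, hw] at hftc
  rw [abs_sub_comm, ← hftc]
  have h1 := intervalIntegral.norm_integral_le_integral_norm (f := deriv (f ∘ γ)) (a := 0) (b := 1 / 2)
    (μ := volume) (by norm_num)
  rw [Real.norm_eq_abs] at h1
  refine (ENNReal.ofReal_le_ofReal h1).trans ?_
  rw [intervalIntegral.integral_of_le (by norm_num), ofReal_integral_eq_lintegral_ofReal]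
  · refine lintegral_mono_ae ?_
    filter_upwards [hd] with t ht
    apply ENNReal.ofReal_le_ofReal
    have hh : HasDerivAt (f ∘ γ) (fderiv ℝ f (γ t) (y - x)) t :=
      ht.hasFDerivAt.comp_hasDerivAt t (hγd t)
    rw [hh.deriv, norm_sub_rev x y]
    exact ContinuousLinearMap.le_opNorm _ _
  · have := (hac.intervalIntegrable_deriv).norm
    rwa [intervalIntegrable_iff_integrableOn_Ioc_of_le (by norm_num)] at this
  · exact Filter.Eventually.of_forall fun t => norm_nonneg _

lemma ae_segment_diff {n : ℕ} {f : Eu n → ℝ} (hf : LocallyLipschitz f) (y : Eu n) :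
    ∀ᵐ x : Eu n, ∀ᵐ t ∂(volume.restrict (Set.Ioc (0 : ℝ) (1 / 2))),
      DifferentiableAt ℝ f (t • y + (1 - t) • x) := by
  have hD : MeasurableSet {x | DifferentiableAt ℝ f x} := measurableSet_of_differentiableAt ℝ f
  have hmeas : Measurable fun q : Eu n × ℝ => q.2 • y + (1 - q.2) • q.1 := by fun_prop
  have hS : MeasurableSet {q : Eu n × ℝ | DifferentiableAt ℝ f (q.2 • y + (1 - q.2) • q.1)} := hmeas hD
  rw [Measure.ae_ae_comm (p := fun x t => DifferentiableAt ℝ f (t • y + (1 - t) • x)) hS]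
  filter_upwards [ae_restrict_mem measurableSet_Ioc] with t ht
  have h1t : 0 < 1 - t := by linarith [ht.2]
  have := hf.ae_differentiableAt'
  rw [ae_iff] at this ⊢
  set N := {a | ¬ DifferentiableAt ℝ f a}
  have hN : MeasurableSet N := hD.compl
  have e := lintegral_affine (N.indicator 1) (t • y) h1t
  rw [lintegral_indicator_one hN, this, mul_zero] at e
  have e2 : ∀ x : Eu n, N.indicator (1 : Eu n → ℝ≥0∞) (t • y + (1 - t) • x) =
      Set.indicator {a | ¬ DifferentiableAt ℝ f (t • y + (1 - t) • a)} 1 x := fun x => rfl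
  simp_rw [e2] at e
  rwa [lintegral_indicator_one] at e
  exact (show Measurable fun x : Eu n => t • y + (1 - t) • x by fun_prop) hN

/-! ### The Poincaré inequality with constant `ψₙ²` -/

/-- Moving from `x` towards `y`, the product `p x * p y` is dominated by the density at the
intermediate point, with an exponential gain in the distance travelled. -/
lemma density_split {n : ℕ} {p : Eu n → ℝ} (hp : IsLogConcaveDensity p) {b m : ℝ} {x₀ : Eu n}
    (hb : 0 < b) (hm : 0 < m) (hpm : ∀ x, p x ≤ m)
    (hdec : ∀ x, p x ≤ exp 1 * m * exp (-b * ‖x - x₀‖)) (x y : Eu n) {t : ℝ} (ht : 0 ≤ t)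
    (ht2 : t ≤ 1 / 2) :
    p x * p y ≤ exp 1 * p (t • y + (1 - t) • x) * (p y ^ (1 / 4 : ℝ) * m ^ (3 / 4 : ℝ)) *
      exp (-(b / 4) * t * ‖x - y‖) := by
  have hz0 := hp.1 (t • y + (1 - t) • x)
  rcases (hp.1 x).eq_or_lt with h0 | hx
  · rw [← h0, zero_mul]; have := hp.1 y; positivity
  rcases (hp.1 y).eq_or_lt with h0 | hy
  · rw [← h0, mul_zero]; positivity
  have hlc := hp.2 y x t ht (by linarith)
  have hz : 0 < p (t • y + (1 - t) • x) := lt_of_lt_of_le (by positivity) hlc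
  set z := t • y + (1 - t) • x
  have h1 := Real.log_le_log (by positivity) hlc
  rw [Real.log_mul (by positivity) (by positivity), Real.log_rpow hy, Real.log_rpow hx] at h1
  have hd : ∀ u, 0 < p u → Real.log (p u) ≤ 1 + Real.log m - b * ‖u - x₀‖ := by
    intro u hu
    have := Real.log_le_log hu (hdec u)
    rw [Real.log_mul (by positivity) (by positivity), Real.log_mul (by positivity) hm.ne',
      Real.log_exp, Real.log_exp] at this
    linarith
  have h2 := hd x hx
  have h3 := hd y hy
  have h4 := Real.log_le_log hy (hpm y)
  have htri : ‖x - y‖ ≤ ‖x - x₀‖ + ‖y - x₀‖ := by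
    have := norm_sub_le (x - x₀) (y - x₀); simpa using this
  rw [← Real.log_le_log_iff (by positivity) (by positivity), Real.log_mul hx.ne' hy.ne',
    Real.log_mul (by positivity) (by positivity), Real.log_mul (by positivity) (by positivity),
    Real.log_mul (by positivity) (by positivity), Real.log_mul (by positivity) (by positivity),
    Real.log_exp, Real.log_exp, Real.log_rpow hy, Real.log_rpow hm]
  have k1 := mul_le_mul_of_nonneg_left h2 ht
  have k2 := mul_le_mul_of_nonneg_left h4 (by linarith : 0 ≤ 1 / 2 - t)
  have k3 := mul_le_mul_of_nonneg_left htri (by positivity : 0 ≤ b / 4 * t)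
  have k4 := mul_le_mul_of_nonneg_right ht2 (by positivity : 0 ≤ b * ‖y - x₀‖)
  have k5 : 0 ≤ b * t * ‖x - x₀‖ := by positivity
  have k6 : 0 ≤ b * ‖y - x₀‖ := by positivity
  nlinarith

set_option maxHeartbeats 1000000 in
/-- The energy bound for the increments of `f` between `x` and the midpoint of `x` and `y`, for fixed
`y`: `segment_bound`, Cauchy–Schwarz with an exponential weight in `t`, `density_split`, and the
change of variables `z = t y + (1 - t) x`, whose inverse Jacobian is at most `2ⁿ` for `t ≤ 1/2`. -/
lemma per_point_bound {n : ℕ} {p : Eu n → ℝ} (hp : IsLogConcaveDensity p) (hpmeas : Measurable p)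
    {b m : ℝ} {x₀ : Eu n}
    (hb : 0 < b) (hm : 0 < m) (hpm : ∀ x, p x ≤ m)
    (hdec : ∀ x, p x ≤ exp 1 * m * exp (-b * ‖x - x₀‖))
    {f : Eu n → ℝ} (hf : LocallyLipschitz f) (y : Eu n) :
    ∫⁻ x, ENNReal.ofReal ((f x - f ((1 / 2 : ℝ) • y + (1 / 2 : ℝ) • x)) ^ 2 * (p x * p y)) ≤
      ENNReal.ofReal (1 / (b / 8) * (exp 1 * (p y ^ (1 / 4 : ℝ) * m ^ (3 / 4 : ℝ)))) *
      (ENNReal.ofReal (2 ^ n) * (ENNReal.ofReal (2 * (1 / (b / 8))) *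
        ∫⁻ z, ENNReal.ofReal (‖fderiv ℝ f z‖ ^ 2 * p z))) := by
  set β := b / 8 with hβ
  have hβ0 : 0 < β := by positivity
  set W := p y ^ (1 / 4 : ℝ) * m ^ (3 / 4 : ℝ) with hW
  have hW0 : 0 ≤ W := by have := hp.1 y; positivity
  set F : Eu n → ℝ := fun z => ‖fderiv ℝ f z‖ with hF
  have hFm : Measurable F := (measurable_fderiv ℝ f).norm
  obtain ⟨H, hH⟩ : ∃ H : ℝ → Eu n → ℝ≥0∞, ∀ t z, H t z =
      ENNReal.ofReal (F z ^ 2 * p z * (2 * (‖z - y‖ * exp (-β * t * ‖z - y‖)))) :=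
    ⟨_, fun _ _ => rfl⟩
  set I := volume.restrict (Set.Ioc (0 : ℝ) (1 / 2)) with hI
  have hHm : Measurable (Function.uncurry H) := by
    have e : Function.uncurry H = fun q : ℝ × Eu n => ENNReal.ofReal (F q.2 ^ 2 * p q.2 *
      (2 * (‖q.2 - y‖ * exp (-β * q.1 * ‖q.2 - y‖)))) := funext fun q => hH q.1 q.2
    rw [e]
    apply Measurable.ennreal_ofReal
    have : Measurable fun q : ℝ × Eu n => F q.2 := hFm.comp measurable_snd
    have : Measurable fun q : ℝ × Eu n => p q.2 := hpmeas.comp measurable_snd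
    show Measurable fun q : ℝ × Eu n => F q.2 ^ 2 * p q.2 *
      (2 * (‖q.2 - y‖ * exp (-β * q.1 * ‖q.2 - y‖)))
    fun_prop
  have hpt : ∀ᵐ x : Eu n, ENNReal.ofReal ((f x - f ((1 / 2 : ℝ) • y + (1 / 2 : ℝ) • x)) ^ 2 *
      (p x * p y)) ≤ ENNReal.ofReal (1 / β * (exp 1 * W)) * ∫⁻ t, H t (t • y + (1 - t) • x) ∂I := by
    filter_upwards [ae_segment_diff hf y] with x hx
    have hseg := segment_bound hf x y hx
    set r := ‖x - y‖ with hr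
    have hr0 : 0 ≤ r := norm_nonneg _
    have hzm : Measurable fun t : ℝ => F (t • y + (1 - t) • x) :=
      hFm.comp (by fun_prop)
    have h1 : ∫⁻ t, ENNReal.ofReal (‖fderiv ℝ f (t • y + (1 - t) • x)‖ * r) ∂I =
        ∫⁻ t, ENNReal.ofReal (√(r * exp (-β * t * r))) *
          ENNReal.ofReal (F (t • y + (1 - t) • x) * √(r * exp (β * t * r))) ∂I := by
      refine lintegral_congr fun t => ?_
      rw [← ENNReal.ofReal_mul (sqrt_nonneg _)]
      congr 1
      have : √(r * exp (-β * t * r)) * √(r * exp (β * t * r)) = r := by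
        rw [← Real.sqrt_mul (by positivity)]
        rw [show r * exp (-β * t * r) * (r * exp (β * t * r)) =
          r ^ 2 * (exp (-β * t * r) * exp (β * t * r)) by ring, ← exp_add]
        rw [show -β * t * r + β * t * r = 0 by ring, exp_zero, mul_one, Real.sqrt_sq hr0]
      simp only [hF]
      linear_combination -‖fderiv ℝ f (t • y + (1 - t) • x)‖ * this
    have h2 := lintegral_cs (μ := I) (u := fun t => ENNReal.ofReal (√(r * exp (-β * t * r))))
      (v := fun t => ENNReal.ofReal (F (t • y + (1 - t) • x) * √(r * exp (β * t * r))))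
      (by fun_prop) (by fun_prop)
    have h3 : ∫⁻ t, ENNReal.ofReal (√(r * exp (-β * t * r))) ^ 2 ∂I ≤ ENNReal.ofReal (1 / β) := by
      refine le_trans (le_of_eq ?_) (lintegral_exp_le hβ0 hr0)
      refine lintegral_congr fun t => ?_
      rw [← ENNReal.ofReal_pow (sqrt_nonneg _), Real.sq_sqrt (by positivity)]
    have h4 : ENNReal.ofReal ((f x - f ((1 / 2 : ℝ) • y + (1 / 2 : ℝ) • x)) ^ 2) ≤
        ENNReal.ofReal (1 / β) * ∫⁻ t, ENNReal.ofReal (F (t • y + (1 - t) • x) ^ 2 *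
          (r * exp (β * t * r))) ∂I := by
      rw [← sq_abs, ENNReal.ofReal_pow (abs_nonneg _)]
      refine (pow_le_pow_left' hseg 2).trans ?_
      rw [h1]
      refine h2.trans ?_
      refine mul_le_mul' h3 (le_of_eq ?_)
      refine lintegral_congr fun t => ?_
      rw [← ENNReal.ofReal_pow (by positivity), mul_pow, Real.sq_sqrt (by positivity)]
    have hpp : 0 ≤ p x * p y := mul_nonneg (hp.1 x) (hp.1 y)
    rw [ENNReal.ofReal_mul' hpp]
    calc _ ≤ ENNReal.ofReal (1 / β) * (∫⁻ t, ENNReal.ofReal (F (t • y + (1 - t) • x) ^ 2 *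
          (r * exp (β * t * r))) ∂I) * ENNReal.ofReal (p x * p y) := by gcongr
      _ = ENNReal.ofReal (1 / β) * ∫⁻ t, ENNReal.ofReal (F (t • y + (1 - t) • x) ^ 2 *
          (r * exp (β * t * r))) * ENNReal.ofReal (p x * p y) ∂I := by
            rw [lintegral_mul_const _ (by fun_prop), mul_assoc]
      _ ≤ ENNReal.ofReal (1 / β) * ∫⁻ t, ENNReal.ofReal (exp 1 * W) *
            H t (t • y + (1 - t) • x) ∂I := by
            refine mul_le_mul' le_rfl (lintegral_mono_ae ?_)
            filter_upwards [ae_restrict_mem measurableSet_Ioc] with t ht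
            rw [hH, ← ENNReal.ofReal_mul' hpp, ← ENNReal.ofReal_mul (by positivity)]
            apply ENNReal.ofReal_le_ofReal
            have hds := density_split hp hb hm hpm hdec x y ht.1.le ht.2
            set z := t • y + (1 - t) • x with hz
            have hzy : ‖z - y‖ = (1 - t) * r := by
              rw [show z - y = (1 - t) • (x - y) by rw [hz]; module, norm_smul,
                norm_of_nonneg (by linarith [ht.2])]
            have hpz := hp.1 z
            have ht0 := ht.1
            have h5 : r ≤ 2 * ‖z - y‖ := by rw [hzy]; nlinarith [ht.2]
            have h6 : ‖z - y‖ ≤ r := by rw [hzy]; nlinarith [ht.1]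
            calc F z ^ 2 * (r * exp (β * t * r)) * (p x * p y)
                ≤ F z ^ 2 * (r * exp (β * t * r)) * (exp 1 * p z * W * exp (-(b / 4) * t * r)) := by
                  gcongr
              _ = exp 1 * W * (F z ^ 2 * p z * (r * (exp (β * t * r) * exp (-(b / 4) * t * r)))) := by
                  ring
              _ = exp 1 * W * (F z ^ 2 * p z * (r * exp (-(β * t * r)))) := by
                  rw [← exp_add]; congr 5; rw [hβ]; ring
              _ ≤ exp 1 * W * (F z ^ 2 * p z * ((2 * ‖z - y‖) * exp (-(β * t * ‖z - y‖)))) := by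
                  gcongr
              _ = _ := by simp only [neg_mul, mul_assoc]
      _ = _ := by
            have hm3 : Measurable fun t : ℝ => H t (t • y + (1 - t) • x) :=
              hHm.comp (by fun_prop : Measurable fun t : ℝ => (t, t • y + (1 - t) • x))
            rw [lintegral_const_mul _ hm3, ← mul_assoc, ← ENNReal.ofReal_mul (by positivity)]
  refine (lintegral_mono_ae hpt).trans ?_
  have hm2 : Measurable (Function.uncurry fun (x : Eu n) (t : ℝ) => H t (t • y + (1 - t) • x)) :=
    hHm.comp (by fun_prop : Measurable fun q : Eu n × ℝ => (q.2, q.2 • y + (1 - q.2) • q.1))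
  rw [lintegral_const_mul _ (Measurable.lintegral_prod_right hm2), lintegral_lintegral_swap hm2.aemeasurable]
  refine mul_le_mul' le_rfl ?_
  calc ∫⁻ t, (∫⁻ x : Eu n, H t (t • y + (1 - t) • x)) ∂I
      ≤ ∫⁻ t, (ENNReal.ofReal (2 ^ n) * ∫⁻ z : Eu n, H t z) ∂I := by
        refine lintegral_mono_ae ?_
        filter_upwards [ae_restrict_mem measurableSet_Ioc] with t ht
        have h1t : 1 / 2 ≤ 1 - t := by linarith [ht.2]
        rw [lintegral_affine (H t) (t • y) (by linarith : 0 < 1 - t)]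
        gcongr
        have : (1 / 2 : ℝ) ^ n ≤ (1 - t) ^ n := by gcongr
        calc ((1 - t) ^ n)⁻¹ ≤ ((1 / 2 : ℝ) ^ n)⁻¹ := by gcongr
          _ = 2 ^ n := by simp
    _ = ENNReal.ofReal (2 ^ n) * ∫⁻ z, ∫⁻ t, H t z ∂I := by
        rw [lintegral_const_mul _ (Measurable.lintegral_prod_right hHm), lintegral_lintegral_swap hHm.aemeasurable]
    _ ≤ _ := by
        refine mul_le_mul' le_rfl ?_
        rw [← lintegral_const_mul _ (by fun_prop)]
        refine lintegral_mono fun z => ?_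
        have hpz := hp.1 z
        calc ∫⁻ t, H t z ∂I = ∫⁻ t, ENNReal.ofReal (F z ^ 2 * p z * 2) *
              ENNReal.ofReal (‖z - y‖ * exp (-β * t * ‖z - y‖)) ∂I := by
              refine lintegral_congr fun t => ?_
              rw [hH, ← ENNReal.ofReal_mul (by positivity)]
              congr 1; ring
          _ ≤ ENNReal.ofReal (F z ^ 2 * p z * 2) * ENNReal.ofReal (1 / β) := by
              rw [lintegral_const_mul _ (by fun_prop)]
              gcongr
              exact lintegral_exp_le hβ0 (norm_nonneg _)
          _ = _ := by
              rw [← ENNReal.ofReal_mul (by positivity), ← ENNReal.ofReal_mul (by positivity)]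
              congr 1; ring

/-- A Poincaré inequality with a dimensional constant: the oscillation of `f` around some
constant is controlled by its Dirichlet energy. -/
lemma exists_poincare_lintegral (n : ℕ) : ∃ C : ℝ, 0 ≤ C ∧ ∀ μ : Measure (Eu n),
    IsProbabilityMeasure μ → IsLogConcaveMeasure μ → IsIsotropicMeasure μ →
    ∀ f : Eu n → ℝ, LocallyLipschitz f → ∃ c : ℝ,
      ∫⁻ x, ENNReal.ofReal ((f x - c) ^ 2) ∂μ ≤
        ENNReal.ofReal C * ∫⁻ x, ENNReal.ofReal (‖gradient f x‖ ^ 2) ∂μ := by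
  obtain ⟨b, hb, hdecay⟩ := exists_decay n
  refine ⟨4 * ((1 / (b / 8) * exp 1) * (exp 1 * 4 ^ n) * (2 ^ n * (2 * (1 / (b / 8))))), by positivity, ?_⟩
  rintro μ hprob ⟨p, hpmeas, hp, rfl⟩ hiso f hf
  obtain ⟨m, x₀, hm, hpm, hx₀, hdec⟩ := hdecay p hp hpmeas hprob hiso
  have h1 : ∫⁻ x, ENNReal.ofReal (p x) = 1 := by
    have := hprob.measure_univ
    rwa [withDensity_apply _ MeasurableSet.univ, Measure.restrict_univ] at this
  have hfm : Measurable f := hf.continuous.measurable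
  have hgm : Measurable fun x => ‖fderiv ℝ f x‖ := (measurable_fderiv ℝ f).norm
  set μ := (volume : Measure (Eu n)).withDensity fun x => ENNReal.ofReal (p x) with hμ
  have hpm' : Measurable fun x => ENNReal.ofReal (p x) := by fun_prop
  have hW : ∫⁻ y, ENNReal.ofReal (p y ^ (1 / 4 : ℝ) * m ^ (3 / 4 : ℝ)) ≤
      ENNReal.ofReal (exp 1 * 4 ^ n) := by
    calc _ ≤ ∫⁻ y, ENNReal.ofReal (exp 1) * ENNReal.ofReal (p ((3 / 4 : ℝ) • x₀ + (1 / 4 : ℝ) • y)) := by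
          refine lintegral_mono fun y => ?_
          rw [← ENNReal.ofReal_mul (exp_pos _).le]
          apply ENNReal.ofReal_le_ofReal
          have hy := hp.1 y
          have hlc := hp.2 x₀ y (3 / 4) (by norm_num) (by norm_num)
          rw [show (1 : ℝ) - 3 / 4 = 1 / 4 by norm_num] at hlc
          have hm' : m ≤ exp 1 * p x₀ := by
            have e1 : exp 1 * exp (-1) = 1 := by rw [← exp_add]; simp
            have e2 : exp (-1) ≤ exp (-1 / 2) := exp_le_exp.2 (by norm_num)
            have : m * exp (-1) ≤ p x₀ := (mul_le_mul_of_nonneg_left e2 hm.le).trans hx₀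
            calc m = exp 1 * (m * exp (-1)) := by linear_combination -m * e1
              _ ≤ _ := by gcongr
          have hm2 : m ^ (3 / 4 : ℝ) ≤ exp 1 * p x₀ ^ (3 / 4 : ℝ) := by
            calc m ^ (3 / 4 : ℝ) ≤ (exp 1 * p x₀) ^ (3 / 4 : ℝ) := by gcongr
              _ = (exp 1) ^ (3 / 4 : ℝ) * p x₀ ^ (3 / 4 : ℝ) := Real.mul_rpow (exp_pos _).le (hp.1 _)
              _ ≤ (exp 1) ^ (1 : ℝ) * p x₀ ^ (3 / 4 : ℝ) := by
                have := hp.1 x₀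
                gcongr
                · exact one_le_exp zero_le_one
                · norm_num
              _ = _ := by rw [Real.rpow_one]
          calc _ ≤ p y ^ (1 / 4 : ℝ) * (exp 1 * p x₀ ^ (3 / 4 : ℝ)) := by gcongr
            _ = exp 1 * (p x₀ ^ (3 / 4 : ℝ) * p y ^ (1 / 4 : ℝ)) := by ring
            _ ≤ _ := by gcongr
      _ = _ := by
          rw [lintegral_const_mul _ (by fun_prop),
            lintegral_affine (fun z => ENNReal.ofReal (p z)) _ (by norm_num), h1, mul_one,
            ← ENNReal.ofReal_mul (by positivity)]
          congr 2; rw [one_div, inv_pow, inv_inv]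
  set E := ∫⁻ z, ENNReal.ofReal (‖fderiv ℝ f z‖ ^ 2 * p z) with hE
  have hE' : ∫⁻ x, ENNReal.ofReal (‖gradient f x‖ ^ 2) ∂μ = E := by
    simp_rw [norm_gradient_eq]
    rw [hμ, lintegral_withDensity_eq_lintegral_mul _ hpm' (by fun_prop)]
    refine lintegral_congr fun x => ?_
    rw [Pi.mul_apply, ← ENNReal.ofReal_mul (hp.1 x), mul_comm]
  set w : Eu n → Eu n → Eu n := fun x y => (1 / 2 : ℝ) • y + (1 / 2 : ℝ) • x with hw
  have hwc : ∀ x y, w x y = w y x := fun x y => add_comm _ _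
  have hwm : Measurable fun q : Eu n × Eu n => f (w q.1 q.2) := hfm.comp (by fun_prop)
  have hhalf : ∫⁻ y, ∫⁻ x, ENNReal.ofReal ((f x - f (w x y)) ^ 2 * (p x * p y)) ≤
      ENNReal.ofReal ((1 / (b / 8) * exp 1) * (exp 1 * 4 ^ n) * (2 ^ n * (2 * (1 / (b / 8))))) * E := by
    calc _ ≤ ∫⁻ y, ENNReal.ofReal (p y ^ (1 / 4 : ℝ) * m ^ (3 / 4 : ℝ)) *
          (ENNReal.ofReal ((1 / (b / 8) * exp 1) * (2 ^ n * (2 * (1 / (b / 8))))) * E) := by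
          refine lintegral_mono fun y => ?_
          refine (per_point_bound hp hpmeas hb hm hpm hdec hf y).trans (le_of_eq ?_)
          have hy := hp.1 y
          rw [← hE, ← mul_assoc (ENNReal.ofReal (2 ^ n)), ← mul_assoc, ← mul_assoc,
            ← ENNReal.ofReal_mul (by positivity), ← ENNReal.ofReal_mul (by positivity),
            ← mul_assoc (ENNReal.ofReal (p y ^ (1 / 4 : ℝ) * m ^ (3 / 4 : ℝ))),
            ← ENNReal.ofReal_mul (by positivity)]
          congr 2; ring
      _ ≤ ENNReal.ofReal (exp 1 * 4 ^ n) *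
          (ENNReal.ofReal ((1 / (b / 8) * exp 1) * (2 ^ n * (2 * (1 / (b / 8))))) * E) := by
          rw [lintegral_mul_const _ (by fun_prop)]
          exact mul_le_mul' hW le_rfl
      _ = _ := by
          rw [← mul_assoc, ← ENNReal.ofReal_mul (by positivity)]
          congr 2; ring
  have hm1 : Measurable (Function.uncurry fun (y x : Eu n) =>
      ENNReal.ofReal ((f x - f (w x y)) ^ 2 * (p x * p y))) := by
    apply Measurable.ennreal_ofReal
    have : Measurable fun q : Eu n × Eu n => f (w q.2 q.1) := hwm.comp measurable_swap
    show Measurable fun q : Eu n × Eu n => (f q.2 - f (w q.2 q.1)) ^ 2 * (p q.2 * p q.1)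
    fun_prop
  have hm2 : Measurable (Function.uncurry fun (y x : Eu n) =>
      ENNReal.ofReal ((f y - f (w x y)) ^ 2 * (p x * p y))) := by
    apply Measurable.ennreal_ofReal
    have : Measurable fun q : Eu n × Eu n => f (w q.2 q.1) := hwm.comp measurable_swap
    show Measurable fun q : Eu n × Eu n => (f q.1 - f (w q.2 q.1)) ^ 2 * (p q.2 * p q.1)
    fun_prop
  have hsymm : ∫⁻ y, ∫⁻ x, ENNReal.ofReal ((f y - f (w x y)) ^ 2 * (p x * p y)) =
      ∫⁻ y, ∫⁻ x, ENNReal.ofReal ((f x - f (w x y)) ^ 2 * (p x * p y)) := by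
    rw [lintegral_lintegral_swap hm2.aemeasurable]
    refine lintegral_congr fun y => lintegral_congr fun x => ?_
    rw [hwc, mul_comm (p y)]
  have hfull : ∫⁻ y, ∫⁻ x, ENNReal.ofReal ((f x - f y) ^ 2 * (p x * p y)) ≤
      ENNReal.ofReal (4 * ((1 / (b / 8) * exp 1) * (exp 1 * 4 ^ n) * (2 ^ n * (2 * (1 / (b / 8)))))) * E := by
    calc _ ≤ ∫⁻ y, (ENNReal.ofReal 2 * (∫⁻ x, ENNReal.ofReal ((f x - f (w x y)) ^ 2 * (p x * p y)) )+
            ENNReal.ofReal 2 * ∫⁻ x, ENNReal.ofReal ((f y - f (w x y)) ^ 2 * (p x * p y))) := by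
          refine lintegral_mono fun y => ?_
          dsimp only
          rw [← lintegral_const_mul _ (hm1.of_uncurry_left), ← lintegral_const_mul _ hm2.of_uncurry_left,
            ← lintegral_add_left ((hm1.of_uncurry_left).const_mul _)]
          refine lintegral_mono fun x => ?_
          have hpp : 0 ≤ p x * p y := mul_nonneg (hp.1 x) (hp.1 y)
          dsimp only
          rw [← ENNReal.ofReal_mul (by norm_num), ← ENNReal.ofReal_mul (by norm_num),
            ← ENNReal.ofReal_add (by positivity) (by positivity)]
          apply ENNReal.ofReal_le_ofReal
          nlinarith [sq_nonneg (f x - f (w x y) + (f y - f (w x y))), mul_nonneg hpp (sq_nonneg (f x - f (w x y) + (f y - f (w x y))))]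
      _ ≤ _ := by
          rw [lintegral_add_left ((Measurable.lintegral_prod_right hm1).const_mul _),
            lintegral_const_mul _ (Measurable.lintegral_prod_right hm1),
            lintegral_const_mul _ (Measurable.lintegral_prod_right hm2), hsymm, ← add_mul,
            ← ENNReal.ofReal_add (by norm_num) (by norm_num)]
          norm_num only
          rw [ENNReal.ofReal_mul (by norm_num : (0:ℝ) ≤ 4), mul_assoc]
          refine mul_le_mul' le_rfl ?_
          convert hhalf using 3
  have hmm : Measurable (Function.uncurry fun (y x : Eu n) => ENNReal.ofReal ((f x - f y) ^ 2)) := by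
    apply Measurable.ennreal_ofReal
    show Measurable fun q : Eu n × Eu n => (f q.2 - f q.1) ^ 2
    fun_prop
  obtain ⟨y, hy⟩ := exists_le_lintegral (μ := μ)
    (f := fun y => ∫⁻ x, ENNReal.ofReal ((f x - f y) ^ 2) ∂μ)
    (Measurable.lintegral_prod_right hmm).aemeasurable
  refine ⟨f y, hy.trans ?_⟩
  rw [hE']
  refine le_trans (le_of_eq ?_) hfull
  rw [hμ, lintegral_withDensity_eq_lintegral_mul _ hpm' (Measurable.lintegral_prod_right hmm)]
  refine lintegral_congr fun y => ?_
  rw [Pi.mul_apply, lintegral_withDensity_eq_lintegral_mul _ hpm' (by fun_prop),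
    ← lintegral_const_mul _ (by fun_prop)]
  refine lintegral_congr fun x => ?_
  rw [Pi.mul_apply, ← ENNReal.ofReal_mul (hp.1 x), ← ENNReal.ofReal_mul (hp.1 y)]
  congr 1; ring

lemma integral_sq_sub_le {n : ℕ} {μ : Measure (Eu n)} [IsProbabilityMeasure μ] {f : Eu n → ℝ}
    (hf : Continuous f) {c : ℝ} (hc : Integrable (fun x => (f x - c) ^ 2) μ) :
    ∫ x, (f x - ∫ y, f y ∂μ) ^ 2 ∂μ ≤ ∫ x, (f x - c) ^ 2 ∂μ := by
  have h2 : MemLp (fun x => f x - c) 2 μ :=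
    (memLp_two_iff_integrable_sq (by fun_prop)).2 hc
  have hi : Integrable (fun x => f x - c) μ := h2.integrable (by norm_num)
  have hfi : Integrable f μ := by
    refine (hi.add (integrable_const c)).congr (Filter.Eventually.of_forall fun x => ?_)
    simp only [Pi.add_apply]; ring
  set a := ∫ y, f y ∂μ with ha
  have e : ∀ x, (f x - c) ^ 2 = (f x - a) ^ 2 + (2 * (a - c) * (f x - a) + (a - c) ^ 2) := by
    intro x; ring
  have hia : Integrable (fun x => f x - a) μ := hfi.sub (integrable_const a)
  have h3 : Integrable (fun x => 2 * (a - c) * (f x - a) + (a - c) ^ 2) μ :=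
    (hia.const_mul _).add (integrable_const _)
  have h4 : Integrable (fun x => (f x - a) ^ 2) μ := by
    refine (hc.sub h3).congr (Filter.Eventually.of_forall fun x => ?_)
    simp only [Pi.sub_apply]; rw [e x]; ring
  have h5 : ∫ x, (f x - a) ∂μ = 0 := by
    rw [integral_sub hfi (integrable_const _)]; simp [ha]
  calc _ ≤ ∫ x, (f x - a) ^ 2 ∂μ + (a - c) ^ 2 := by nlinarith [sq_nonneg (a - c)]
    _ = _ := by
      simp_rw [e]
      rw [integral_add h4 h3, integral_add (hia.const_mul _) (integrable_const _),
        integral_const_mul, h5]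
      simp

/-- The Poincaré inequality with a dimensional constant, for functions of finite energy. -/
lemma exists_poincare (n : ℕ) : ∃ C : ℝ, 0 ≤ C ∧ ∀ μ : Measure (Eu n),
    IsProbabilityMeasure μ → IsLogConcaveMeasure μ → IsIsotropicMeasure μ →
    ∀ f : Eu n → ℝ, LocallyLipschitz f → Integrable (fun x => ‖gradient f x‖ ^ 2) μ →
      ∫ x, (f x - ∫ y, f y ∂μ) ^ 2 ∂μ ≤ C * ∫ x, ‖gradient f x‖ ^ 2 ∂μ := by
  obtain ⟨C, hC, h⟩ := exists_poincare_lintegral n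
  refine ⟨C, hC, fun μ hprob hlc hiso f hf hint => ?_⟩
  obtain ⟨c, hc⟩ := h μ hprob hlc hiso f hf
  have hcont := hf.continuous
  have e2 : ∫⁻ x, ENNReal.ofReal (‖gradient f x‖ ^ 2) ∂μ = ENNReal.ofReal (∫ x, ‖gradient f x‖ ^ 2 ∂μ) :=
    (ofReal_integral_eq_lintegral_ofReal hint (Filter.Eventually.of_forall fun x => by positivity)).symm
  rw [e2, ← ENNReal.ofReal_mul hC] at hc
  have hci : Integrable (fun x => (f x - c) ^ 2) μ := by
    refine ⟨by fun_prop, ?_⟩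
    rw [hasFiniteIntegral_iff_ofReal (Filter.Eventually.of_forall fun x => by positivity)]
    exact hc.trans_lt ENNReal.ofReal_lt_top
  refine (integral_sq_sub_le hcont hci).trans ?_
  rw [← ofReal_integral_eq_lintegral_ofReal hci (Filter.Eventually.of_forall fun x => by positivity)] at hc
  exact (ENNReal.ofReal_le_ofReal_iff (mul_nonneg hC (integral_nonneg fun x => by positivity))).1 hc

/-- The set of admissible constants in the definition of `poincareConst`. -/
def poincareSet {n : ℕ} (μ : Measure (Eu n)) : Set ℝ :=
  {A : ℝ | 0 ≤ A ∧ ∀ f : Eu n → ℝ, LocallyLipschitz f →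
    ∫ x, (f x - ∫ y, f y ∂μ) ^ 2 ∂μ ≤ A * ∫ x, ‖gradient f x‖ ^ 2 ∂μ}

/-- Poincaré constants of isotropic log-concave measures are bounded in each dimension, so the supremum
defining `KLSConst` is over a bounded set. If no constant is admissible, `poincareConst` is the junk
value `0`, which satisfies the bound too. -/
lemma exists_poincareConst_le (n : ℕ) : ∃ C : ℝ, 0 ≤ C ∧ ∀ μ : Measure (Eu n),
    IsProbabilityMeasure μ → IsLogConcaveMeasure μ → IsIsotropicMeasure μ → poincareConst μ ≤ C := by
  obtain ⟨C, hC, h⟩ := exists_poincare n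
  refine ⟨C, hC, fun μ hprob hlc hiso => ?_⟩
  show sInf (poincareSet μ) ≤ C
  rcases (poincareSet μ).eq_empty_or_nonempty with he | ⟨A, hA⟩
  · rw [he, Real.sInf_empty]; exact hC
  · refine csInf_le ⟨0, fun B hB => hB.1⟩ ⟨hC, fun f hf => ?_⟩
    by_cases hi : Integrable (fun x => ‖gradient f x‖ ^ 2) μ
    · exact h μ hprob hlc hiso f hf hi
    -- for `f` of infinite energy the right side has the junk value `0` for every constant, so the
    -- inequality with `A` already gives the one with `C`
    · have := hA.2 f hf
      rw [integral_undef hi, mul_zero] at this ⊢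
      exact this

lemma poincareConst_le_KLS {n : ℕ} (μ : Measure (Eu n))
    (h1 : IsProbabilityMeasure μ) (h2 : IsLogConcaveMeasure μ) (h3 : IsIsotropicMeasure μ) :
    poincareConst μ ≤ KLSConst n ^ 2 := by
  have h0 : 0 ≤ poincareConst μ := Real.sInf_nonneg fun A hA => hA.1
  obtain ⟨C, hC, h⟩ := exists_poincareConst_le n
  have : √(poincareConst μ) ≤ KLSConst n := by
    refine le_csSup ⟨√C, ?_⟩ ⟨μ, h1, h2, h3, rfl⟩
    rintro s ⟨ν, k1, k2, k3, rfl⟩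
    exact Real.sqrt_le_sqrt (h ν k1 k2 k3)
  calc poincareConst μ = √(poincareConst μ) ^ 2 := (Real.sq_sqrt h0).symm
    _ ≤ _ := by gcongr

/-- For compactly supported isotropic log-concave measures the Poincaré inequality holds with
constant `ψₙ²` for all locally Lipschitz functions; the compact support makes every energy finite, so
that the set of admissible constants is nonempty. -/
lemma poincare_KLS {n : ℕ} (μ : Measure (Eu n))
    (h1 : IsProbabilityMeasure μ) (h2 : IsLogConcaveMeasure μ) (h3 : IsIsotropicMeasure μ)
    {B : Set (Eu n)} (hB : IsCompact B) (hμB : μ Bᶜ = 0) {f : Eu n → ℝ} (hf : LocallyLipschitz f) :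
    ∫ x, (f x - ∫ y, f y ∂μ) ^ 2 ∂μ ≤ KLSConst n ^ 2 * ∫ x, ‖gradient f x‖ ^ 2 ∂μ := by
  obtain ⟨C, hC, h⟩ := exists_poincare n
  have hbdd : BddBelow (poincareSet μ) := ⟨0, fun B hB => hB.1⟩
  have hne : C ∈ poincareSet μ := by
    refine ⟨hC, fun g hg => h μ h1 h2 h3 g hg ?_⟩
    obtain ⟨K, hK⟩ : ∃ K : ℝ, ∀ x ∈ B, ‖gradient g x‖ ≤ K := by
      have hloc : ∀ x ∈ B, ∃ t ∈ nhdsWithin x B, ∃ K : ℝ, ∀ z ∈ t, ‖gradient g z‖ ≤ K := by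
        intro x _
        obtain ⟨K, t, ht, hK⟩ := hg x
        obtain ⟨u, hut, huo, hxu⟩ := mem_nhds_iff.1 ht
        refine ⟨u, mem_nhdsWithin_of_mem_nhds (huo.mem_nhds hxu), K, fun z hz => ?_⟩
        rw [norm_gradient_eq]
        exact norm_fderiv_le_of_lipschitzOn ℝ (huo.mem_nhds hz) (hK.mono hut)
      refine hB.induction_on (p := fun s => ∃ K : ℝ, ∀ x ∈ s, ‖gradient g x‖ ≤ K) ⟨0, by simp⟩ ?_ ?_ hloc
      · rintro s t hst ⟨K, hK⟩; exact ⟨K, fun x hx => hK x (hst hx)⟩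
      · rintro s t ⟨K, hK⟩ ⟨L, hL⟩
        refine ⟨max K L, fun x hx => ?_⟩
        rcases hx with hx | hx
        · exact (hK x hx).trans (le_max_left _ _)
        · exact (hL x hx).trans (le_max_right _ _)
    refine Integrable.of_bound (C := K ^ 2) ?_ ?_
    · simp_rw [norm_gradient_eq]
      exact ((measurable_fderiv ℝ g).norm.pow_const 2).aestronglyMeasurable
    · have : ∀ᵐ x ∂μ, x ∈ B := by rw [ae_iff]; exact hμB
      filter_upwards [this] with x hx
      rw [norm_of_nonneg (by positivity)]
      gcongr
      exact hK x hx
  have hI : 0 ≤ ∫ x, ‖gradient f x‖ ^ 2 ∂μ := integral_nonneg fun x => by positivity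
  have key : ∫ x, (f x - ∫ y, f y ∂μ) ^ 2 ∂μ ≤ poincareConst μ * ∫ x, ‖gradient f x‖ ^ 2 ∂μ := by
    rcases hI.eq_or_lt with h0 | h0
    · have := hne.2 f hf
      rw [← h0, mul_zero] at this ⊢; exact this
    · rw [← div_le_iff₀ h0]
      refine le_csInf ⟨C, hne⟩ fun A hA => ?_
      rw [div_le_iff₀ h0]
      exact hA.2 f hf
  exact key.trans (mul_le_mul_of_nonneg_right (poincareConst_le_KLS μ h1 h2 h3) hI)

/-! ### Traces of powers of symmetric matrices -/

section MatrixPart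
open Matrix

variable {n : ℕ}

lemma exists_diag {B : Matrix (Fin n) (Fin n) ℝ} (hB : Bᵀ = B) :
    ∃ (U : Matrix (Fin n) (Fin n) ℝ) (d : Fin n → ℝ), Uᵀ * U = 1 ∧ U * Uᵀ = 1 ∧
      B = U * diagonal d * Uᵀ := by
  have hH : B.IsHermitian := by rw [IsHermitian, conjTranspose_eq_transpose_of_trivial, hB]
  refine ⟨hH.eigenvectorUnitary, hH.eigenvalues, ?_, ?_, ?_⟩
  · have := Unitary.coe_star_mul_self hH.eigenvectorUnitary
    rwa [star_eq_conjTranspose, conjTranspose_eq_transpose_of_trivial] at this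
  · have := Unitary.coe_mul_star_self hH.eigenvectorUnitary
    rwa [Unitary.coe_star, star_eq_conjTranspose, conjTranspose_eq_transpose_of_trivial] at this
  · have := hH.spectral_theorem
    rw [Unitary.conjStarAlgAut_apply, star_eq_conjTranspose,
      conjTranspose_eq_transpose_of_trivial] at this
    exact this

lemma diag_pow {U : Matrix (Fin n) (Fin n) ℝ} {d : Fin n → ℝ} (hU : Uᵀ * U = 1) (hU' : U * Uᵀ = 1)
    (k : ℕ) : (U * diagonal d * Uᵀ) ^ k = U * diagonal (fun i => d i ^ k) * Uᵀ := by
  induction k with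
  | zero => simp [hU']
  | succ k ih =>
    rw [pow_succ, ih]
    calc _ = U * diagonal (fun i => d i ^ k) * (Uᵀ * U) * diagonal d * Uᵀ := by
          simp only [Matrix.mul_assoc]
      _ = _ := by
          rw [hU, Matrix.mul_one, Matrix.mul_assoc U, diagonal_mul_diagonal]
          simp only [pow_succ]

lemma trace_diag_pow {U : Matrix (Fin n) (Fin n) ℝ} {d : Fin n → ℝ} (hU : Uᵀ * U = 1)
    (hU' : U * Uᵀ = 1) (k : ℕ) : ((U * diagonal d * Uᵀ) ^ k).trace = ∑ i, d i ^ k := by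
  rw [diag_pow hU hU', Matrix.trace_mul_comm, ← Matrix.mul_assoc, hU, Matrix.one_mul, trace_diagonal]

lemma trace_diag_two {U D : Matrix (Fin n) (Fin n) ℝ} {d : Fin n → ℝ} (hU : Uᵀ * U = 1)
    (hU' : U * Uᵀ = 1) (hD : Dᵀ = D) (a b : ℕ) :
    ((U * diagonal d * Uᵀ) ^ a * D * (U * diagonal d * Uᵀ) ^ b * D).trace =
      ∑ i, ∑ j, d i ^ a * d j ^ b * ((Uᵀ * D * U) i j) ^ 2 := by
  set E := Uᵀ * D * U with hE
  have hEt : Eᵀ = E := by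
    rw [hE, transpose_mul, transpose_mul, hD, transpose_transpose, Matrix.mul_assoc]
  rw [diag_pow hU hU', diag_pow hU hU']
  have : (U * diagonal (fun i => d i ^ a) * Uᵀ * D * (U * diagonal (fun i => d i ^ b) * Uᵀ) * D).trace
      = (diagonal (fun i => d i ^ a) * E * (diagonal (fun i => d i ^ b) * E)).trace := by
    calc _ = (U * (diagonal (fun i => d i ^ a) * (Uᵀ * (D * (U * (diagonal (fun i => d i ^ b) *
              (Uᵀ * D))))))).trace := by simp only [Matrix.mul_assoc]
      _ = _ := by
          rw [Matrix.trace_mul_comm, hE]; simp only [Matrix.mul_assoc]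
  rw [this]
  simp only [Matrix.trace, diag_apply, Matrix.mul_apply (M := diagonal (fun i => d i ^ a) * E), diagonal_mul]
  refine Finset.sum_congr rfl fun i _ => Finset.sum_congr rfl fun j _ => ?_
  have : E j i = E i j := by conv_lhs => { rw [← hEt, transpose_apply] }
  rw [this]; ring

lemma abs_pow_mul_le {a b : ℕ} (x y : ℝ) (hab : Even (a + b)) :
    |x ^ a * y ^ b| ≤ x ^ (a + b) + y ^ (a + b) := by
  rw [abs_mul, abs_pow, abs_pow, ← hab.pow_abs x, ← hab.pow_abs y]
  have hx := abs_nonneg x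
  have hy := abs_nonneg y
  rcases le_total |x| |y| with h | h
  · calc |x| ^ a * |y| ^ b ≤ |y| ^ a * |y| ^ b := by gcongr
      _ = |y| ^ (a + b) := by rw [pow_add]
      _ ≤ _ := by have := pow_nonneg hx (a + b); linarith
  · calc |x| ^ a * |y| ^ b ≤ |x| ^ a * |x| ^ b := by gcongr
      _ = |x| ^ (a + b) := by rw [pow_add]
      _ ≤ _ := by have := pow_nonneg hy (a + b); linarith

/-- With `D` written in an eigenbasis of `B` and `d` the eigenvalues, the left side is `∑ d i ^ a * d j ^ b * (D i j) ^ 2`. -/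
lemma trace_two_le {B D : Matrix (Fin n) (Fin n) ℝ} (hB : Bᵀ = B) (hD : Dᵀ = D) {a b q : ℕ}
    (hq : a + b = q) (he : Even q) :
    (B ^ a * D * B ^ b * D).trace ≤ 2 * (B ^ q * D * D).trace := by
  subst hq
  obtain ⟨U, d, hU, hU', rfl⟩ := exists_diag hB
  have h2 := trace_diag_two (d := d) hU hU' hD (a + b) 0
  rw [pow_zero, Matrix.mul_one] at h2
  rw [trace_diag_two hU hU' hD, h2, two_mul]
  simp only [pow_zero, mul_one]
  set E := Uᵀ * D * U with hE
  have hEt : Eᵀ = E := by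
    rw [hE, transpose_mul, transpose_mul, hD, transpose_transpose, Matrix.mul_assoc]
  have hEs : ∀ i j, E i j = E j i := fun i j => by conv_lhs => { rw [← hEt, transpose_apply] }
  have hsw : ∑ i, ∑ j, d i ^ (a + b) * E i j ^ 2 = ∑ i, ∑ j, d j ^ (a + b) * E i j ^ 2 := by
    rw [Finset.sum_comm]
    refine Finset.sum_congr rfl fun i _ => Finset.sum_congr rfl fun j _ => ?_
    rw [hEs]
  calc _ ≤ ∑ i, ∑ j, (d i ^ (a + b) + d j ^ (a + b)) * E i j ^ 2 := by
        refine Finset.sum_le_sum fun i _ => Finset.sum_le_sum fun j _ => ?_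
        gcongr
        exact (le_abs_self _).trans (abs_pow_mul_le _ _ he)
    _ = _ := by
        simp only [add_mul, Finset.sum_add_distrib]
        rw [← hsw]

lemma trace_two_nonneg {B D : Matrix (Fin n) (Fin n) ℝ} (hB : Bᵀ = B) (hD : Dᵀ = D) {q : ℕ}
    (he : Even q) : 0 ≤ (B ^ q * D * D).trace := by
  obtain ⟨U, d, hU, hU', rfl⟩ := exists_diag hB
  have h2 := trace_diag_two (d := d) hU hU' hD q 0
  rw [pow_zero, Matrix.mul_one] at h2
  rw [h2]
  refine Finset.sum_nonneg fun i _ => Finset.sum_nonneg fun j _ => ?_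
  have := he.pow_nonneg (d i)
  positivity

/-- First order part of `(B + D) ^ k` in `D`. -/
def powD1 (B D : Matrix (Fin n) (Fin n) ℝ) : ℕ → Matrix (Fin n) (Fin n) ℝ
  | 0 => 0
  | k + 1 => powD1 B D k * B + B ^ k * D

/-- Second order part of `(B + D) ^ k` in `D`. -/
def powD2 (B D : Matrix (Fin n) (Fin n) ℝ) : ℕ → Matrix (Fin n) (Fin n) ℝ
  | 0 => 0
  | k + 1 => powD2 B D k * B + powD1 B D k * D

lemma trace_powD1 (B D : Matrix (Fin n) (Fin n) ℝ) (k j : ℕ) :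
    (powD1 B D (k + 1) * B ^ j).trace = (k + 1) * (B ^ (k + j) * D).trace := by
  induction k generalizing j with
  | zero =>
    simp only [powD1, Matrix.zero_mul, zero_add, pow_zero, Matrix.one_mul]
    rw [Matrix.trace_mul_comm]; simp
  | succ k ih =>
    rw [powD1, Matrix.add_mul, trace_add, Matrix.mul_assoc, ← pow_succ', ih,
      show (B ^ (k + 1) * D * B ^ j).trace = (B ^ (k + 1 + j) * D).trace by
        rw [Matrix.trace_mul_comm, ← Matrix.mul_assoc, ← pow_add, add_comm j]]
    rw [show k + (j + 1) = k + 1 + j by ring]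
    push_cast; ring

lemma trace_powD1_mul_le {B D : Matrix (Fin n) (Fin n) ℝ} (hB : Bᵀ = B) (hD : Dᵀ = D) (k : ℕ)
    {b j q : ℕ} (hq : k + b + j = q + 1) (he : Even q) :
    (powD1 B D k * B ^ b * D * B ^ j).trace ≤ 2 * k * (B ^ q * D * D).trace := by
  induction k generalizing b with
  | zero => simp [powD1]
  | succ k ih =>
    have e : powD1 B D (k + 1) * B ^ b * D * B ^ j =
        powD1 B D k * B ^ (b + 1) * D * B ^ j + B ^ k * D * B ^ b * D * B ^ j := by
      rw [powD1, pow_succ']; simp only [Matrix.add_mul, Matrix.mul_assoc]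
    rw [e, trace_add]
    have h1 := ih (b := b + 1) (by omega)
    have h2 : (B ^ k * D * B ^ b * D * B ^ j).trace ≤ 2 * (B ^ q * D * D).trace := by
      rw [Matrix.trace_mul_comm]
      have := trace_two_le hB hD (a := j + k) (b := b) (q := q) (by omega) he
      rw [pow_add] at this
      simpa only [Matrix.mul_assoc] using this
    push_cast; linarith

/-- The second-order term in the expansion of `tr (B + D) ^ p` is at most `p²` times
`tr (B ^ (p - 2) * D²)`. -/
lemma trace_powD2_le {B D : Matrix (Fin n) (Fin n) ℝ} (hB : Bᵀ = B) (hD : Dᵀ = D) (k : ℕ)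
    {j q : ℕ} (hq : k + j = q + 2) (he : Even q) :
    (powD2 B D k * B ^ j).trace ≤ k ^ 2 * (B ^ q * D * D).trace := by
  induction k generalizing j with
  | zero => simp [powD2]
  | succ k ih =>
    have e : powD2 B D (k + 1) * B ^ j =
        powD2 B D k * B ^ (j + 1) + powD1 B D k * B ^ 0 * D * B ^ j := by
      rw [powD2, pow_succ', pow_zero, Matrix.mul_one]; simp only [Matrix.add_mul, Matrix.mul_assoc]
    rw [e, trace_add]
    have h1 := ih (j := j + 1) (by omega)
    have h2 := trace_powD1_mul_le hB hD k (b := 0) (j := j) (q := q) (by omega) he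
    have h3 := trace_two_nonneg hB hD he
    push_cast; nlinarith

attribute [local instance] Matrix.linftyOpNormedRing Matrix.linftyOpNormedAlgebra

/-- Third order Taylor remainder for matrix powers. -/
lemma exists_pow_remainder (n : ℕ) (r : ℝ) (k : ℕ) : ∃ C : ℝ, 0 ≤ C ∧ ∀ B D : Matrix (Fin n) (Fin n) ℝ,
    ‖B‖ ≤ r → ‖D‖ ≤ 1 → ‖powD1 B D k‖ ≤ C * ‖D‖ ∧ ‖powD2 B D k‖ ≤ C * ‖D‖ ^ 2 ∧
      ‖B ^ k‖ ≤ C ∧ ‖(B + D) ^ k - B ^ k - powD1 B D k - powD2 B D k‖ ≤ C * ‖D‖ ^ 3 := by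
  induction k with
  | zero =>
    refine ⟨‖(1 : Matrix (Fin n) (Fin n) ℝ)‖, norm_nonneg _, fun B D _ _ => ?_⟩
    refine ⟨?_, ?_, ?_, ?_⟩
    · rw [powD1, norm_zero]; positivity
    · rw [powD2, norm_zero]; positivity
    · rw [pow_zero]
    · rw [powD1, powD2, pow_zero, pow_zero, sub_self, sub_zero, sub_zero, norm_zero]; positivity
  | succ k ih =>
    obtain ⟨C, hC, h⟩ := ih
    refine ⟨C * (|r| + 2), by positivity, fun B D hB hD => ?_⟩
    obtain ⟨h1, h2, h3, h4⟩ := h B D hB hD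
    have hr : ‖B‖ ≤ |r| := hB.trans (le_abs_self r)
    have hD0 := norm_nonneg D
    refine ⟨?_, ?_, ?_, ?_⟩
    · rw [powD1]
      calc _ ≤ ‖powD1 B D k‖ * ‖B‖ + ‖B ^ k‖ * ‖D‖ :=
            (norm_add_le _ _).trans (add_le_add (norm_mul_le _ _) (norm_mul_le _ _))
        _ ≤ C * ‖D‖ * |r| + C * ‖D‖ := by gcongr
        _ ≤ _ := by nlinarith [mul_nonneg hC hD0]
    · rw [powD2]
      calc _ ≤ ‖powD2 B D k‖ * ‖B‖ + ‖powD1 B D k‖ * ‖D‖ :=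
            (norm_add_le _ _).trans (add_le_add (norm_mul_le _ _) (norm_mul_le _ _))
        _ ≤ C * ‖D‖ ^ 2 * |r| + C * ‖D‖ * ‖D‖ := by gcongr
        _ ≤ _ := by nlinarith [mul_nonneg hC (sq_nonneg ‖D‖)]
    · rw [pow_succ]
      calc _ ≤ ‖B ^ k‖ * ‖B‖ := norm_mul_le _ _
        _ ≤ C * |r| := by gcongr
        _ ≤ _ := by nlinarith
    · have e : (B + D) ^ (k + 1) - B ^ (k + 1) - powD1 B D (k + 1) - powD2 B D (k + 1) =
          ((B + D) ^ k - B ^ k - powD1 B D k - powD2 B D k) * (B + D) + powD2 B D k * D := by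
        rw [powD1, powD2, pow_succ, pow_succ]; noncomm_ring
      rw [e]
      have hBD : ‖B + D‖ ≤ |r| + 1 := (norm_add_le _ _).trans (add_le_add hr hD)
      calc _ ≤ ‖(B + D) ^ k - B ^ k - powD1 B D k - powD2 B D k‖ * ‖B + D‖ + ‖powD2 B D k‖ * ‖D‖ :=
            (norm_add_le _ _).trans (add_le_add (norm_mul_le _ _) (norm_mul_le _ _))
        _ ≤ C * ‖D‖ ^ 3 * (|r| + 1) + C * ‖D‖ ^ 2 * ‖D‖ := by gcongr
        _ = _ := by ring

lemma abs_entry_le_norm (M : Matrix (Fin n) (Fin n) ℝ) (i j : Fin n) : |M i j| ≤ ‖M‖ := by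
  rw [Matrix.linfty_opNorm_def]
  have h1 : ∑ j, ‖M i j‖₊ ≤ Finset.univ.sup fun i => ∑ j, ‖M i j‖₊ :=
    Finset.le_sup (f := fun i => ∑ j, ‖M i j‖₊) (Finset.mem_univ i)
  have h2 : ‖M i j‖₊ ≤ ∑ j, ‖M i j‖₊ := Finset.single_le_sum (f := fun j => ‖M i j‖₊)
    (fun _ _ => zero_le) (Finset.mem_univ j)
  exact_mod_cast h2.trans h1

lemma norm_le_of_entry (M : Matrix (Fin n) (Fin n) ℝ) {c : ℝ} (hc : 0 ≤ c) (h : ∀ i j, |M i j| ≤ c) :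
    ‖M‖ ≤ n * c := by
  lift c to NNReal using hc
  rw [Matrix.linfty_opNorm_def]
  have : (Finset.univ.sup fun i => ∑ j, ‖M i j‖₊) ≤ n * c := by
    refine Finset.sup_le fun i _ => ?_
    have h1 : ∀ j ∈ Finset.univ, ‖M i j‖₊ ≤ c := fun j _ => by exact_mod_cast h i j
    simpa using Finset.sum_le_card_nsmul Finset.univ _ c h1
  exact_mod_cast this

/-- Second order Taylor bound for `D ↦ tr (B + D) ^ p`, `p = q + 2`, uniform over `B` with entries at
most `r` and symmetric `D` with entries at most `c`. -/
lemma exists_trace_taylor (n : ℕ) (r : ℝ) (q : ℕ) (he : Even q) :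
    ∃ C δ : ℝ, 0 ≤ C ∧ 0 < δ ∧ ∀ (B D : Matrix (Fin n) (Fin n) ℝ) (c : ℝ),
    Bᵀ = B → Dᵀ = D → (∀ i j, |B i j| ≤ r) → 0 ≤ c → c ≤ δ → (∀ i j, |D i j| ≤ c) →
    ((B + D) ^ (q + 2)).trace ≤ (B ^ (q + 2)).trace + (q + 2) * (B ^ (q + 1) * D).trace +
      (q + 2) ^ 2 * (B ^ q * D * D).trace + C * c ^ 3 := by
  obtain ⟨C, hC, h⟩ := exists_pow_remainder n (n * |r|) (q + 2)
  refine ⟨n * (C * n ^ 3), 1 / (n + 1), by positivity, by positivity, fun B D c hB hD hBr hc hcδ hDc => ?_⟩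
  have hBn : ‖B‖ ≤ n * |r| := norm_le_of_entry B (abs_nonneg r) fun i j => (hBr i j).trans (le_abs_self r)
  have hDn : ‖D‖ ≤ n * c := norm_le_of_entry D hc hDc
  have hD1 : ‖D‖ ≤ 1 := by
    refine hDn.trans ?_
    calc (n : ℝ) * c ≤ n * (1 / (n + 1)) := by gcongr
      _ ≤ 1 := by rw [mul_one_div, div_le_one (by positivity)]; linarith
  obtain ⟨-, -, -, h4⟩ := h B D hBn hD1
  set R := (B + D) ^ (q + 2) - B ^ (q + 2) - powD1 B D (q + 2) - powD2 B D (q + 2) with hR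
  have hsum : (B + D) ^ (q + 2) = B ^ (q + 2) + powD1 B D (q + 2) + powD2 B D (q + 2) + R := by
    rw [hR]; abel
  rw [hsum, trace_add, trace_add, trace_add]
  have t1 := trace_powD1 B D (q + 1) 0
  have t2 := trace_powD2_le hB hD (q + 2) (j := 0) (q := q) (by omega) he
  rw [pow_zero, Matrix.mul_one] at t1 t2
  rw [add_zero] at t1
  have t3 : R.trace ≤ n * (C * n ^ 3) * c ^ 3 := by
    calc R.trace ≤ ∑ i : Fin n, ‖R‖ := by
          refine Finset.sum_le_sum fun i _ => ?_
          exact (le_abs_self _).trans (abs_entry_le_norm R i i)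
      _ = n * ‖R‖ := by simp
      _ ≤ n * (C * (n * c) ^ 3) := by
          refine mul_le_mul_of_nonneg_left (h4.trans ?_) (by positivity)
          gcongr
      _ = _ := by ring
  push_cast at t1 t2
  have t1' : (powD1 B D (q + 2)).trace = (q + 2) * (B ^ (q + 1) * D).trace := by
    rw [t1]; ring
  linarith

end MatrixPart

/-! ### The potential of a covariance matrix -/

section MatrixPart2
open Matrix

variable {n : ℕ}

lemma integrable_of_compact {μ : Measure (Eu n)} [IsFiniteMeasure μ] {B : Set (Eu n)}
    (hB : IsCompact B) (hμ : μ Bᶜ = 0) {f : Eu n → ℝ} (hf : Continuous f) : Integrable f μ := by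
  have h : μ.restrict B = μ := Measure.restrict_eq_self_of_ae_mem (by
    rw [ae_iff]; exact hμ)
  rw [← h]
  exact hf.continuousOn.integrableOn_compact hB

/-- The potential that controls how far a covariance matrix is from the identity. The additive term
`n / 4 ^ p` makes the growth of the potential comparable to the potential itself. -/
def pot (p : ℕ) (A : Matrix (Fin n) (Fin n) ℝ) : ℝ := ((A - 1) ^ p).trace + n * (1 / 4) ^ p

lemma pow_le_pot {q : ℕ} (he : Even q) (x : ℝ) :
    x ^ q ≤ 16 * (x ^ (q + 2) + (1 / 4) ^ (q + 2)) := by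
  rcases le_total (1 / 4) |x| with h | h
  · have h1 : (1/4)^2 ≤ x ^ 2 := by rw [← sq_abs x]; gcongr
    have h2 : 0 ≤ x ^ q := he.pow_nonneg x
    have h3 : x ^ (q + 2) = x ^ q * x ^ 2 := pow_add ..
    have h4 : (0:ℝ) ≤ (1 / 4) ^ (q + 2) := by positivity
    nlinarith
  · have h1 : x ^ q ≤ (1 / 4) ^ q := by rw [← he.pow_abs]; gcongr
    have h2 : 0 ≤ x ^ (q + 2) := (he.add (by decide)).pow_nonneg x
    have h3 : ((1:ℝ) / 4) ^ (q + 2) = (1 / 4) ^ q * (1 / 16) := by rw [pow_add]; norm_num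
    linarith

lemma neg_pow_le_pot {q : ℕ} (he : Even q) (x : ℝ) :
    -x ^ (q + 1) ≤ 4 * (x ^ (q + 2) + (1 / 4) ^ (q + 2)) := by
  have h0 : -x ^ (q+1) ≤ |x| ^ (q + 1) := by rw [← abs_pow]; exact neg_le_abs _
  refine h0.trans ?_
  have h5 : x ^ (q+2) = |x| ^ (q+2) := ((he.add (by decide)).pow_abs x).symm
  rw [h5]
  rcases le_total (1 / 4) |x| with h | h
  · have h2 : 0 ≤ |x| ^ (q+1) := by positivity
    have h3 : |x| ^ (q + 2) = |x| ^ (q+1) * |x| := pow_succ ..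
    have h4 : (0:ℝ) ≤ (1 / 4) ^ (q + 2) := by positivity
    nlinarith
  · have h1 : |x| ^ (q+1) ≤ (1 / 4) ^ (q+1) := by gcongr
    have h2 : 0 ≤ |x| ^ (q + 2) := by positivity
    have h3 : ((1:ℝ) / 4) ^ (q + 2) = (1 / 4) ^ (q+1) * (1 / 4) := pow_succ ..
    linarith

lemma trace_pow_le_pot {q : ℕ} (he : Even q) {A : Matrix (Fin n) (Fin n) ℝ} (hA : Aᵀ = A) :
    ((A - 1) ^ q).trace ≤ 16 * pot (q + 2) A ∧ -((A - 1) ^ (q + 1)).trace ≤ 4 * pot (q + 2) A := by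
  have hB : (A - 1)ᵀ = A - 1 := by rw [transpose_sub, hA, transpose_one]
  obtain ⟨U, d, hU, hU', h⟩ := exists_diag hB
  unfold pot
  rw [h, trace_diag_pow hU hU', trace_diag_pow hU hU', trace_diag_pow hU hU']
  have : (n : ℝ) * (1 / 4) ^ (q + 2) = ∑ _i : Fin n, (1 / 4 : ℝ) ^ (q + 2) := by simp
  rw [this, ← Finset.sum_add_distrib, Finset.mul_sum, Finset.mul_sum, ← Finset.sum_neg_distrib]
  exact ⟨Finset.sum_le_sum fun i _ => pow_le_pot he _, Finset.sum_le_sum fun i _ => neg_pow_le_pot he _⟩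

lemma pot_ge {q : ℕ} (he : Even q) {A : Matrix (Fin n) (Fin n) ℝ} (hA : Aᵀ = A) :
    n * (1 / 4) ^ q ≤ pot q A := by
  have hB : (A - 1)ᵀ = A - 1 := by rw [transpose_sub, hA, transpose_one]
  obtain ⟨U, d, hU, hU', h⟩ := exists_diag hB
  unfold pot
  rw [h, trace_diag_pow hU hU']
  have := Finset.sum_nonneg (s := Finset.univ) fun i (_ : i ∈ Finset.univ) => he.pow_nonneg (d i)
  linarith

/-- A small potential forces the spectrum into `[1/2, 3/2]`. -/
lemma pot_pinch {p : ℕ} (he : Even p) {A : Matrix (Fin n) (Fin n) ℝ} (hA : Aᵀ = A)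
    (h : pot p A < (1 / 2) ^ p) : ∃ (U : Matrix (Fin n) (Fin n) ℝ) (d : Fin n → ℝ),
      Uᵀ * U = 1 ∧ U * Uᵀ = 1 ∧ A = U * diagonal d * Uᵀ ∧ ∀ i, 1 / 2 ≤ d i ∧ d i ≤ 3 / 2 := by
  have hB : (A - 1)ᵀ = A - 1 := by rw [transpose_sub, hA, transpose_one]
  obtain ⟨U, d, hU, hU', hd⟩ := exists_diag hB
  refine ⟨U, fun i => 1 + d i, hU, hU', ?_, fun i => ?_⟩
  · have : (diagonal fun i => 1 + d i) = 1 + diagonal d := by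
      rw [← diagonal_one, diagonal_add]
    rw [this, mul_add, Matrix.mul_one, add_mul, hU', ← hd]; abel
  · unfold pot at h
    rw [hd, trace_diag_pow hU hU'] at h
    have h1 := Finset.single_le_sum (f := fun i => d i ^ p) (fun j _ => he.pow_nonneg (d j))
      (Finset.mem_univ i)
    have h2 : (0:ℝ) ≤ n * (1 / 4) ^ p := by positivity
    have h3 : |d i| < 1 / 2 := by
      refine lt_of_pow_lt_pow_left₀ p (by norm_num) ?_
      rw [he.pow_abs]; linarith
    rw [abs_lt] at h3
    constructor <;> linarith [h3.1, h3.2]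

lemma sum_sq_mulVec {U : Matrix (Fin n) (Fin n) ℝ} (hU : Uᵀ * U = 1) (z : Fin n → ℝ) :
    ∑ i, (U *ᵥ z) i ^ 2 = ∑ i, z i ^ 2 := by
  have h : (U *ᵥ z) ⬝ᵥ (U *ᵥ z) = z ⬝ᵥ z := by
    rw [dotProduct_mulVec, vecMul_mulVec, ← dotProduct_mulVec, hU, one_mulVec]
  simpa [dotProduct, sq] using h

/-- The inverse built from an orthogonal diagonalisation. -/
lemma diag_inv_facts {U : Matrix (Fin n) (Fin n) ℝ} {d : Fin n → ℝ} (hU : Uᵀ * U = 1)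
    (hU' : U * Uᵀ = 1) (hd : ∀ i, 1 / 2 ≤ d i) :
    ∃ W : Matrix (Fin n) (Fin n) ℝ, Wᵀ = W ∧ (U * diagonal d * Uᵀ) * W = 1 ∧
      ∀ z : Fin n → ℝ, ∑ i, (W *ᵥ z) i ^ 2 ≤ 4 * ∑ i, z i ^ 2 := by
  refine ⟨U * diagonal (fun i => (d i)⁻¹) * Uᵀ, ?_, ?_, fun z => ?_⟩
  · simp [transpose_mul, Matrix.mul_assoc]
  · have hne : ∀ i, d i ≠ 0 := fun i => by linarith [hd i]
    calc _ = U * diagonal d * (Uᵀ * U) * diagonal (fun i => (d i)⁻¹) * Uᵀ := by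
          simp only [Matrix.mul_assoc]
      _ = 1 := by
          rw [hU, Matrix.mul_one, Matrix.mul_assoc U, diagonal_mul_diagonal]
          simp [hne, hU']
  · rw [← mulVec_mulVec, ← mulVec_mulVec, sum_sq_mulVec hU,
      ← sum_sq_mulVec (U := Uᵀ) (by simpa using hU') z, Finset.mul_sum]
    refine Finset.sum_le_sum fun i _ => ?_
    rw [mulVec_diagonal, mul_pow]
    have h1 : (d i)⁻¹ ≤ 2 := by
      rw [inv_le_comm₀ (by linarith [hd i]) (by norm_num)]; linarith [hd i]
    have h2 : 0 ≤ (d i)⁻¹ := by have := hd i; positivity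
    have h3 : (d i)⁻¹ ^ 2 ≤ 4 := by nlinarith
    exact mul_le_mul_of_nonneg_right h3 (sq_nonneg _)

end MatrixPart2

/-! ### Growth of the potential under one random tilt -/

section MatrixPart3
open Matrix

variable {n : ℕ}

/-- A centred increment law: mean zero, covariance `s • 1`, supported in the ball of
radius `ρ`, with `ρ²` controlled by `n s`. -/
structure IsStep (γ : Measure (Eu n)) (ρ s : ℝ) : Prop where
  prob : IsProbabilityMeasure γ
  supp : γ (Metric.closedBall 0 ρ)ᶜ = 0
  mean : ∀ i, ∫ g, g i ∂γ = 0
  cov : ∀ i j, ∫ g, g i * g j ∂γ = if i = j then s else 0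
  pos : 0 < ρ
  low : 3 / 16 * ρ ^ 2 ≤ n * s

lemma IsStep.integrable {γ : Measure (Eu n)} {ρ s : ℝ} (h : IsStep γ ρ s) {f : Eu n → ℝ}
    (hf : Continuous f) : Integrable f γ := by
  have := h.prob
  exact integrable_of_compact (isCompact_closedBall 0 ρ) h.supp hf

lemma IsStep.ae_norm {γ : Measure (Eu n)} {ρ s : ℝ} (h : IsStep γ ρ s) : ∀ᵐ g ∂γ, ‖g‖ ≤ ρ := by
  have := h.supp
  filter_upwards [show ∀ᵐ g ∂γ, g ∈ Metric.closedBall 0 ρ from by rw [ae_iff]; exact this] with g hg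
  simpa using hg

/-- Second moment of a linear form. -/
lemma IsStep.sq_lin {γ : Measure (Eu n)} {ρ s : ℝ} (h : IsStep γ ρ s) (c : Fin n → ℝ) :
    ∫ g, (∑ i, c i * g i) ^ 2 ∂γ = s * ∑ i, c i ^ 2 := by
  have e : ∀ g : Eu n, (∑ i, c i * g i) ^ 2 = ∑ i, ∑ j, c i * c j * (g i * g j) := fun g => by
    rw [sq, Finset.sum_mul_sum]
    exact Finset.sum_congr rfl fun i _ => Finset.sum_congr rfl fun j _ => by ring
  simp_rw [e]
  rw [integral_finsetSum _ fun i _ => h.integrable (by fun_prop)]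
  rw [Finset.mul_sum]
  refine Finset.sum_congr rfl fun i _ => ?_
  rw [integral_finsetSum _ fun j _ => h.integrable (by fun_prop)]
  simp_rw [integral_const_mul, h.cov]
  simp; ring

lemma IsStep.lin {γ : Measure (Eu n)} {ρ s : ℝ} (h : IsStep γ ρ s) (c : Fin n → ℝ) :
    ∫ g, (∑ i, c i * g i) ∂γ = 0 := by
  rw [integral_finsetSum _ fun i _ => h.integrable (by fun_prop)]
  simp [integral_const_mul, h.mean]

lemma IsStep.s_pos {γ : Measure (Eu n)} {ρ s : ℝ} (h : IsStep γ ρ s) : 0 < s := by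
  have := h.low; have := h.pos
  by_contra hs
  push Not at hs
  have : (n:ℝ) * s ≤ 0 := mul_nonpos_of_nonneg_of_nonpos (by positivity) hs
  nlinarith [sq_pos_of_pos h.pos]

/-- The increment of the covariance matrix under the tilt in direction `g`; `W` is the inverse
covariance and `T` the third central moment tensor. -/
def covInc (W : Matrix (Fin n) (Fin n) ℝ) (T : Fin n → Fin n → Fin n → ℝ) (g : Fin n → ℝ) :
    Matrix (Fin n) (Fin n) ℝ := fun j k => ∑ i, (W *ᵥ g) i * T i j k - g j * g k

lemma covInc_symm {W : Matrix (Fin n) (Fin n) ℝ} {T : Fin n → Fin n → Fin n → ℝ}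
    (hT : ∀ i j k, T i j k = T i k j) (g : Fin n → ℝ) : (covInc W T g)ᵀ = covInc W T g := by
  ext j k
  simp only [transpose_apply, covInc]
  rw [mul_comm (g k)]
  simp_rw [hT _ k j]

lemma trace_sq_eq {S D : Matrix (Fin n) (Fin n) ℝ} (hS : Sᵀ = S) (hD : Dᵀ = D) :
    (S * S * D * D).trace = ∑ j, ∑ l, ((D * S) j l) ^ 2 := by
  have h1 : (S * S * D * D).trace = (D * S * (D * S)ᵀ).trace := by
    rw [transpose_mul, hS, hD, Matrix.mul_assoc (S * S), Matrix.trace_mul_comm]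
    rw [Matrix.mul_assoc D D, Matrix.trace_mul_comm D]
    simp only [← Matrix.mul_assoc]
  rw [h1, Matrix.trace]
  refine Finset.sum_congr rfl fun j _ => ?_
  rw [diag_apply, Matrix.mul_apply]
  exact Finset.sum_congr rfl fun l _ => by rw [transpose_apply, sq]

lemma coord_sq_le (g : Eu n) : ∑ i, g i ^ 2 = ‖g‖ ^ 2 := by
  rw [EuclideanSpace.norm_sq_eq]; simp

/-- The second-order term of the averaged potential. The linear part of `covInc` contributes through
the Hilbert–Schmidt bound `κ` on contractions of `T`, using the symmetry of `T` to move the contraction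
to the columns of `S`; the part `g ⊗ g` contributes at most `2 s tr S²`, as `|g| ≤ 1`. -/
lemma second_order {γ : Measure (Eu n)} {ρ s : ℝ} (h : IsStep γ ρ s) (hρ : ρ ≤ 1)
    {W S : Matrix (Fin n) (Fin n) ℝ} {T : Fin n → Fin n → Fin n → ℝ} (hS : Sᵀ = S) (hW : Wᵀ = W)
    (hT : ∀ i j k, T i j k = T i k j) (hT' : ∀ i j k, T i j k = T k j i)
    (hW2 : ∀ z : Fin n → ℝ, ∑ i, (W *ᵥ z) i ^ 2 ≤ 4 * ∑ i, z i ^ 2)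
    {κ : ℝ} (hκ : 1 ≤ κ)
    (h3 : ∀ v : Fin n → ℝ, ∑ j, ∑ k, (∑ i, v i * T i j k) ^ 2 ≤ κ * ∑ i, v i ^ 2) :
    ∫ g : Eu n, (S * S * covInc W T g * covInc W T g).trace ∂γ ≤ 10 * κ * s * (S * S).trace := by
  have htr : (S * S).trace = ∑ l, ∑ k, S k l ^ 2 := by
    nth_rw 1 [← hS]
    simp [Matrix.trace, Matrix.mul_apply, sq]
  have hs := h.s_pos
  have hprob := h.prob
  -- coefficients of the part of `(covInc W T g * S) j l` that is linear in `g`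
  set c : Fin n → Fin n → Fin n → ℝ := fun j l => W *ᵥ fun i => ∑ k, T i j k * S k l with hc
  have key : ∀ (g : Eu n) j l, (covInc W T g * S) j l =
      (∑ m, c j l m * g m) - g j * ∑ k, S k l * g k := by
    intro g j l
    have e1 : ∑ m, c j l m * g m = (W *ᵥ fun i => ∑ k, T i j k * S k l) ⬝ᵥ (g : Fin n → ℝ) := rfl
    rw [e1, ← hW, mulVec_transpose, ← dotProduct_mulVec]
    simp only [Matrix.mul_apply, covInc, sub_mul, Finset.sum_sub_distrib, dotProduct, Finset.sum_mul,
      Finset.mul_sum]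
    rw [hW, Finset.sum_comm]
    congr 1
    · exact Finset.sum_congr rfl fun i _ => Finset.sum_congr rfl fun k _ => by ring
    · exact Finset.sum_congr rfl fun k _ => by ring
  have bound : ∀ g : Eu n, ‖g‖ ≤ ρ → (S * S * covInc W T g * covInc W T g).trace ≤
      ∑ j, ∑ l, 2 * (∑ m, c j l m * g m) ^ 2 + 2 * ∑ l, (∑ k, S k l * g k) ^ 2 := by
    intro g hg
    rw [trace_sq_eq hS (covInc_symm hT g)]
    have h1 : ∀ j l, ((covInc W T g * S) j l) ^ 2 ≤
        2 * (∑ m, c j l m * g m) ^ 2 + 2 * (g j ^ 2 * (∑ k, S k l * g k) ^ 2) := fun j l => by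
      rw [key]; nlinarith [sq_nonneg ((∑ m, c j l m * g m) + g j * ∑ k, S k l * g k)]
    refine (Finset.sum_le_sum fun j _ => Finset.sum_le_sum fun l _ => h1 j l).trans ?_
    simp_rw [Finset.sum_add_distrib]
    gcongr
    simp_rw [← Finset.mul_sum, ← Finset.sum_mul]
    rw [coord_sq_le]
    have : ‖g‖ ^ 2 ≤ 1 := by nlinarith [norm_nonneg g]
    have h5 : 0 ≤ ∑ l, (∑ k, S k l * g k) ^ 2 := Finset.sum_nonneg fun _ _ => sq_nonneg _
    nlinarith
  have hcont : Continuous fun g : Eu n => (S * S * covInc W T g * covInc W T g).trace := by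
    have : Continuous fun g : Eu n => covInc W T g := by
      refine continuous_matrix fun j k => ?_
      unfold covInc
      simp only [mulVec, dotProduct]
      fun_prop
    exact ((continuous_const.matrix_mul this).matrix_mul this).matrix_trace
  calc _ ≤ ∫ g : Eu n, (∑ j, ∑ l, 2 * (∑ m, c j l m * g m) ^ 2 + 2 * ∑ l, (∑ k, S k l * g k) ^ 2) ∂γ := by
        refine integral_mono_ae (h.integrable hcont) (h.integrable (by fun_prop)) ?_
        filter_upwards [h.ae_norm] with g hg using bound g hg
    _ = ∑ j, ∑ l, 2 * (s * ∑ m, c j l m ^ 2) + 2 * ∑ l, s * ∑ k, S k l ^ 2 := by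
        rw [integral_add (h.integrable (by fun_prop)) (h.integrable (by fun_prop)),
          integral_finsetSum _ fun i _ => h.integrable (by fun_prop), integral_const_mul,
          integral_finsetSum _ fun i _ => h.integrable (by fun_prop)]
        congr 1
        · refine Finset.sum_congr rfl fun j _ => ?_
          rw [integral_finsetSum _ fun i _ => h.integrable (by fun_prop)]
          exact Finset.sum_congr rfl fun l _ => by rw [integral_const_mul, h.sq_lin]
        · congr 1
          exact Finset.sum_congr rfl fun l _ => by rw [h.sq_lin]
    _ ≤ ∑ j, ∑ l, 2 * (s * (4 * ∑ i, (∑ k, T i j k * S k l) ^ 2)) + 2 * ∑ l, s * ∑ k, S k l ^ 2 := by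
        gcongr with j _ l _
        exact hW2 _
    _ = 8 * s * ∑ l, ∑ i, ∑ j, (∑ k, S k l * T k j i) ^ 2 + 2 * s * (S * S).trace := by
        rw [htr, Finset.sum_comm, Finset.mul_sum, Finset.mul_sum, Finset.mul_sum]
        congr 1
        · refine Finset.sum_congr rfl fun l _ => ?_
          simp_rw [Finset.mul_sum]
          rw [Finset.sum_comm]
          refine Finset.sum_congr rfl fun i _ => Finset.sum_congr rfl fun j _ => ?_
          have : ∑ k, T i j k * S k l = ∑ k, S k l * T k j i :=
            Finset.sum_congr rfl fun k _ => by rw [hT' i j k]; ring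
          rw [this]; ring
        · exact Finset.sum_congr rfl fun l _ => by ring
    _ ≤ 8 * s * ∑ l, κ * ∑ k, S k l ^ 2 + 2 * s * (S * S).trace := by
        gcongr with l _
        rw [Finset.sum_comm]
        exact h3 _
    _ ≤ _ := by
        rw [← Finset.mul_sum, ← htr]
        have : 0 ≤ (S * S).trace := by rw [htr]; exact Finset.sum_nonneg fun _ _ => Finset.sum_nonneg fun _ _ => sq_nonneg _
        nlinarith [mul_nonneg (mul_nonneg hs.le this) (sub_nonneg.2 hκ)]

end MatrixPart3

section MatrixPart4
open Matrix

variable {n : ℕ}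

lemma continuous_covInc (W : Matrix (Fin n) (Fin n) ℝ) (T : Fin n → Fin n → Fin n → ℝ) :
    Continuous fun g : Eu n => covInc W T g := by
  refine continuous_matrix fun j k => ?_
  unfold covInc
  simp only [mulVec, dotProduct]
  fun_prop

lemma integral_covInc {γ : Measure (Eu n)} {ρ s : ℝ} (h : IsStep γ ρ s)
    (W : Matrix (Fin n) (Fin n) ℝ) (T : Fin n → Fin n → Fin n → ℝ) (j k : Fin n) :
    ∫ g : Eu n, covInc W T g j k ∂γ = if j = k then -s else 0 := by
  have e : ∀ g : Eu n, covInc W T g j k =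
      (∑ m, (∑ i, W i m * T i j k) * g m) - g j * g k := fun g => by
    simp only [covInc, mulVec, dotProduct, Finset.sum_mul]
    rw [Finset.sum_comm]
    congr 1
    exact Finset.sum_congr rfl fun m _ => Finset.sum_congr rfl fun i _ => by ring
  simp_rw [e]
  rw [integral_sub (h.integrable (by fun_prop)) (h.integrable (by fun_prop)), h.lin, h.cov]
  split_ifs <;> simp

/-- Only the quadratic part `-g ⊗ g` of `covInc` has a nonzero mean, namely `-s • 1`. -/
lemma first_order {γ : Measure (Eu n)} {ρ s : ℝ} (h : IsStep γ ρ s)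
    (W X : Matrix (Fin n) (Fin n) ℝ) (T : Fin n → Fin n → Fin n → ℝ) :
    ∫ g : Eu n, (X * covInc W T g).trace ∂γ = -s * X.trace := by
  have hc : ∀ j k, Continuous fun g : Eu n => covInc W T g j k := fun j k =>
    (continuous_covInc W T).matrix_elem j k
  simp only [Matrix.trace, diag_apply, Matrix.mul_apply]
  rw [integral_finsetSum _ fun i _ => h.integrable (by fun_prop), Finset.mul_sum]
  refine Finset.sum_congr rfl fun i _ => ?_
  rw [integral_finsetSum _ fun i _ => h.integrable (by fun_prop)]
  simp_rw [integral_const_mul, integral_covInc h]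
  simp; ring

lemma abs_covInc_le {W : Matrix (Fin n) (Fin n) ℝ} {T : Fin n → Fin n → Fin n → ℝ} {r ρ : ℝ}
    (hρ : ρ ≤ 1) (hT : ∀ i j k, |T i j k| ≤ r)
    (hW2 : ∀ z : Fin n → ℝ, ∑ i, (W *ᵥ z) i ^ 2 ≤ 4 * ∑ i, z i ^ 2) {g : Eu n} (hg : ‖g‖ ≤ ρ)
    (j k : Fin n) : |covInc W T g j k| ≤ (2 * n * r + 1) * ρ := by
  have hρ0 : 0 ≤ ρ := (norm_nonneg g).trans hg
  have hgi : ∀ i, |g i| ≤ ρ := fun i => (PiLp.norm_apply_le g i).trans hg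
  have hw : ∀ i, |(W *ᵥ (g : Fin n → ℝ)) i| ≤ 2 * ρ := fun i => by
    refine abs_le_of_sq_le_sq ?_ (by positivity)
    have h1 := Finset.single_le_sum (f := fun i => (W *ᵥ (g : Fin n → ℝ)) i ^ 2)
      (fun j _ => sq_nonneg _) (Finset.mem_univ i)
    have h2 := hW2 g
    rw [coord_sq_le] at h2
    have h3 : ‖g‖ ^ 2 ≤ ρ ^ 2 := by gcongr
    simp only at h1
    nlinarith
  unfold covInc
  have h1 : |∑ i, (W *ᵥ (g : Fin n → ℝ)) i * T i j k| ≤ n * (2 * ρ * r) := by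
    refine (Finset.abs_sum_le_sum_abs _ _).trans ((Finset.sum_le_sum fun i _ =>
      (abs_mul _ _).le.trans (mul_le_mul (hw i) (hT i j k) (abs_nonneg _) (by positivity))).trans ?_)
    simp
  have h2 : |g j * g k| ≤ ρ * 1 := by
    rw [abs_mul]; exact mul_le_mul (hgi j) ((hgi k).trans hρ) (abs_nonneg _) hρ0
  refine (abs_sub _ _).trans ?_
  linarith

/-- One random tilt increases the potential on average by at most a factor
`1 + 165 p² κ s`, where `p = q + 2`. In the Taylor expansion of the trace, the first-order term gives
`4 p s`, the second-order one `10 · 16 p² κ s`, and the remainder is below `s` for small `ρ`. -/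
lemma exists_pot_step (n : ℕ) (hn : 0 < n) (r : ℝ) (hr : 0 ≤ r) (q : ℕ) (he : Even q) :
    ∃ ρ0 : ℝ, 0 < ρ0 ∧ ρ0 ≤ 1 ∧ ∀ (γ : Measure (Eu n)) (ρ s : ℝ), IsStep γ ρ s → ρ ≤ ρ0 →
    ∀ (A W : Matrix (Fin n) (Fin n) ℝ) (T : Fin n → Fin n → Fin n → ℝ) (κ : ℝ), Aᵀ = A → Wᵀ = W →
    (∀ z : Fin n → ℝ, ∑ i, (W *ᵥ z) i ^ 2 ≤ 4 * ∑ i, z i ^ 2) →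
    (∀ i j k, T i j k = T i k j) → (∀ i j k, T i j k = T k j i) →
    (∀ i j, |(A - 1) i j| ≤ r) → (∀ i j k, |T i j k| ≤ r) → 1 ≤ κ →
    (∀ v : Fin n → ℝ, ∑ j, ∑ k, (∑ i, v i * T i j k) ^ 2 ≤ κ * ∑ i, v i ^ 2) →
    ∫ g : Eu n, pot (q + 2) (A + covInc W T g) ∂γ ≤
      (1 + 165 * (q + 2 : ℝ) ^ 2 * κ * s) * pot (q + 2) A := by
  obtain ⟨C, δ, hC, hδ, H⟩ := exists_trace_taylor n r q he
  set a : ℝ := 2 * n * r + 1 with ha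
  have ha0 : 0 < a := by positivity
  set D : ℝ := C * a ^ 3 + 1 with hD
  have hD0 : 0 < D := by positivity
  refine ⟨min 1 (min (δ / a) (3 / 16 * (1 / 4) ^ (q + 2) / D)), by positivity, min_le_left _ _, ?_⟩
  intro γ ρ s h hρ A W T κ hA hW hW2 hT hT' hAr hTr hκ h3
  have hρ1 : ρ ≤ 1 := hρ.trans (min_le_left _ _)
  have hρ2 : a * ρ ≤ δ := by
    have := hρ.trans ((min_le_right _ _).trans (min_le_left _ _))
    rwa [le_div_iff₀' ha0] at this
  have hρ3 : D * ρ ≤ 3 / 16 * (1 / 4) ^ (q + 2) := by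
    have := hρ.trans ((min_le_right _ _).trans (min_le_right _ _))
    rwa [le_div_iff₀' hD0] at this
  have hρ0 := h.pos
  have hs := h.s_pos
  have hprob := h.prob
  have hB : (A - 1)ᵀ = A - 1 := by rw [transpose_sub, hA, transpose_one]
  have hpot := pot_ge (he.add (by decide : Even 2)) hA
  have hpot0 : 0 ≤ pot (q + 2) A := le_trans (by positivity) hpot
  obtain ⟨m, hm⟩ := he
  set S := (A - 1) ^ m with hS
  have hSS : (A - 1) ^ q = S * S := by rw [hm, pow_add]
  have hSt : Sᵀ = S := by rw [hS, transpose_pow, hB]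
  have hcc := continuous_covInc W T
  have hpt : ∀ g : Eu n, ‖g‖ ≤ ρ → pot (q + 2) (A + covInc W T g) ≤
      pot (q + 2) A + (q + 2) * ((A - 1) ^ (q + 1) * covInc W T g).trace +
        (q + 2) ^ 2 * (S * S * covInc W T g * covInc W T g).trace + C * (a * ρ) ^ 3 := by
    intro g hg
    have := H (A - 1) (covInc W T g) (a * ρ) hB (covInc_symm hT g) hAr (by positivity) hρ2
      (fun i j => abs_covInc_le hρ1 hTr hW2 hg i j)
    unfold pot
    rw [show A + covInc W T g - 1 = A - 1 + covInc W T g by abel, ← hSS]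
    linarith
  have c1 : Continuous fun g : Eu n => ((A - 1) ^ (q + 1) * covInc W T g).trace :=
    (continuous_const.matrix_mul hcc).matrix_trace
  have c2 : Continuous fun g : Eu n => (S * S * covInc W T g * covInc W T g).trace :=
    ((continuous_const.matrix_mul hcc).matrix_mul hcc).matrix_trace
  have c3 : Continuous fun g : Eu n => pot (q + 2) (A + covInc W T g) := by
    unfold pot
    exact (((continuous_const.add hcc).sub continuous_const).pow _).matrix_trace.add continuous_const
  have e1 := first_order h W ((A - 1) ^ (q + 1)) T
  have e2 := second_order h hρ1 hSt hW hT hT' hW2 hκ h3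
  obtain ⟨t1, t2⟩ := trace_pow_le_pot ⟨m, hm⟩ hA
  rw [hSS] at t1
  have e3 : C * (a * ρ) ^ 3 ≤ s * pot (q + 2) A := by
    have h1 : C * (a * ρ) ^ 3 ≤ ρ ^ 2 * (D * ρ) := by
      have : C * (a * ρ) ^ 3 = ρ ^ 2 * ((D - 1) * ρ) := by rw [hD]; ring
      rw [this]; gcongr; linarith
    calc _ ≤ _ := h1
      _ ≤ ρ ^ 2 * (3 / 16 * (1 / 4) ^ (q + 2)) := by gcongr
      _ = (3 / 16 * ρ ^ 2) * (1 / 4) ^ (q + 2) := by ring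
      _ ≤ (n * s) * (1 / 4) ^ (q + 2) := mul_le_mul_of_nonneg_right h.low (by positivity)
      _ = s * (n * (1 / 4) ^ (q + 2)) := by ring
      _ ≤ _ := by gcongr
  calc _ ≤ ∫ g : Eu n, (pot (q + 2) A + (q + 2) * ((A - 1) ^ (q + 1) * covInc W T g).trace +
        (q + 2) ^ 2 * (S * S * covInc W T g * covInc W T g).trace + C * (a * ρ) ^ 3) ∂γ := by
        refine integral_mono_ae (h.integrable c3) (h.integrable (by fun_prop)) ?_
        filter_upwards [h.ae_norm] with g hg using hpt g hg
    _ = pot (q + 2) A + (q + 2) * (-s * ((A - 1) ^ (q + 1)).trace) +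
        (q + 2) ^ 2 * (∫ g : Eu n, (S * S * covInc W T g * covInc W T g).trace ∂γ) + C * (a * ρ) ^ 3 := by
        rw [integral_add (h.integrable (by fun_prop)) (h.integrable (by fun_prop)),
          integral_add (h.integrable (by fun_prop)) (h.integrable (by fun_prop)),
          integral_add (h.integrable (by fun_prop)) (h.integrable (by fun_prop)),
          integral_const_mul, integral_const_mul, e1]
        simp
    _ ≤ pot (q + 2) A + (q + 2) * (s * (4 * pot (q + 2) A)) +
        (q + 2) ^ 2 * (10 * κ * s * (16 * pot (q + 2) A)) + s * pot (q + 2) A := by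
        have f1 : -s * ((A - 1) ^ (q + 1)).trace ≤ s * (4 * pot (q + 2) A) := by
          have := mul_le_mul_of_nonneg_left t2 hs.le
          linarith
        have f2 : ∫ g : Eu n, (S * S * covInc W T g * covInc W T g).trace ∂γ ≤
            10 * κ * s * (16 * pot (q + 2) A) :=
          e2.trans (by gcongr)
        gcongr
    _ ≤ _ := by
        have hx : 0 ≤ s * pot (q + 2) A := by positivity
        have hq : (0:ℝ) ≤ q := by positivity
        have g1 : (1:ℝ) ≤ (q + 2) ^ 2 * κ := by nlinarith
        have g2 : (q + 2 : ℝ) ≤ (q + 2) ^ 2 * κ := by nlinarith [mul_nonneg (sq_nonneg (q+2 : ℝ)) (sub_nonneg.2 hκ)]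
        nlinarith [mul_le_mul_of_nonneg_left g1 hx, mul_le_mul_of_nonneg_left g2 hx]

end MatrixPart4

/-! ### The uniform law on a ball -/

section Walk

variable {n : ℕ}

lemma unifOn_prob {K : Set (Eu n)} (h0 : volume K ≠ 0) (h1 : volume K ≠ ⊤) :
    IsProbabilityMeasure (unifOn K) := ⟨by
  rw [unifOn, Measure.smul_apply, Measure.restrict_apply MeasurableSet.univ, Set.univ_inter,
    smul_eq_mul, ENNReal.inv_mul_cancel h0 h1]⟩

lemma unifOn_compl {K : Set (Eu n)} (hK : MeasurableSet K) : unifOn K Kᶜ = 0 := by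
  rw [unifOn, Measure.smul_apply, Measure.restrict_apply hK.compl]; simp

lemma unifOn_withDensity {K : Set (Eu n)} (hK : MeasurableSet K) :
    unifOn K = volume.withDensity (K.indicator fun _ => (volume K)⁻¹) := by
  rw [withDensity_indicator hK, withDensity_const, unifOn]

/-- The uniform law on the centred ball of radius `ρ`. -/
def ballLaw (n : ℕ) (ρ : ℝ) : Measure (Eu n) := unifOn (Metric.closedBall 0 ρ)

lemma ballLaw_prob {ρ : ℝ} (hρ : 0 < ρ) : IsProbabilityMeasure (ballLaw n ρ) :=
  unifOn_prob (Metric.measure_closedBall_pos volume 0 hρ).ne' measure_closedBall_lt_top.ne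

lemma ballLaw_compl (ρ : ℝ) : ballLaw n ρ (Metric.closedBall 0 ρ)ᶜ = 0 :=
  unifOn_compl Metric.isClosed_closedBall.measurableSet

lemma ballLaw_isom (ρ : ℝ) (e : Eu n ≃ₗᵢ[ℝ] Eu n) :
    MeasurePreserving e (ballLaw n ρ) (ballLaw n ρ) := by
  have h := (e.measurePreserving).restrict_preimage
    (s := Metric.closedBall (0 : Eu n) ρ) Metric.isClosed_closedBall.measurableSet
  have h2 : e ⁻¹' Metric.closedBall (0 : Eu n) ρ = Metric.closedBall 0 ρ := by
    ext x; simp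
  rw [h2] at h
  exact h.smul_measure _

lemma integral_ballLaw_isom (ρ : ℝ) (e : Eu n ≃ₗᵢ[ℝ] Eu n) (f : Eu n → ℝ) :
    ∫ g, f (e g) ∂ballLaw n ρ = ∫ g, f g ∂ballLaw n ρ :=
  (ballLaw_isom ρ e).integral_comp e.toHomeomorph.measurableEmbedding f

lemma lintegral_ballLaw_isom (ρ : ℝ) (e : Eu n ≃ₗᵢ[ℝ] Eu n) (f : Eu n → ℝ≥0∞) :
    ∫⁻ g, f (e g) ∂ballLaw n ρ = ∫⁻ g, f g ∂ballLaw n ρ :=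
  (ballLaw_isom ρ e).lintegral_comp_emb e.toHomeomorph.measurableEmbedding f

lemma integral_ballLaw_neg (ρ : ℝ) (f : Eu n → ℝ) :
    ∫ g, f (-g) ∂ballLaw n ρ = ∫ g, f g ∂ballLaw n ρ :=
  integral_ballLaw_isom ρ (LinearIsometryEquiv.neg ℝ) f

lemma integral_odd {ρ : ℝ} {f : Eu n → ℝ} (hf : ∀ g, f (-g) = -f g) :
    ∫ g, f g ∂ballLaw n ρ = 0 := by
  have := integral_ballLaw_neg ρ f
  simp_rw [hf, integral_neg] at this
  linarith

lemma integral_inner_sq_eq (ρ : ℝ) {u v : Eu n} (h : ‖u‖ = ‖v‖) :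
    ∫ g, ⟪u, g⟫ ^ 2 ∂ballLaw n ρ = ∫ g, ⟪v, g⟫ ^ 2 ∂ballLaw n ρ := by
  have hr := Submodule.reflection_sub h
  set e := (Submodule.span ℝ {u - v})ᗮ.reflection
  rw [← integral_ballLaw_isom ρ e fun g => ⟪v, g⟫ ^ 2]
  simp_rw [← hr, LinearIsometryEquiv.inner_map_map]

/-- The variance of a coordinate under `ballLaw`, written as `E |g|² / n`. -/
def ballVar (n : ℕ) (ρ : ℝ) : ℝ := (∫ g, ‖g‖ ^ 2 ∂ballLaw n ρ) / n

lemma ballLaw_integrable {ρ : ℝ} (hρ : 0 < ρ) {f : Eu n → ℝ} (hf : Continuous f) :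
    Integrable f (ballLaw n ρ) := by
  have := ballLaw_prob (n := n) hρ
  exact integrable_of_compact (isCompact_closedBall 0 ρ) (ballLaw_compl ρ) hf

/-- At least `3/4` of the ball lies outside the concentric ball of half the radius, since `n ≥ 2`. -/
lemma ballLaw_sq_lower (hn : 2 ≤ n) {ρ : ℝ} (hρ : 0 < ρ) :
    3 / 16 * ρ ^ 2 ≤ ∫ g, ‖g‖ ^ 2 ∂ballLaw n ρ := by
  have hprob := ballLaw_prob (n := n) hρ
  have : Nonempty (Fin n) := ⟨⟨0, by omega⟩⟩
  set B := Metric.closedBall (0 : Eu n) (ρ / 2)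
  have hB : MeasurableSet B := Metric.isClosed_closedBall.measurableSet
  have h1 : (ballLaw n ρ).real B ≤ 1 / 4 := by
    have hsub : B ⊆ Metric.closedBall 0 ρ := Metric.closedBall_subset_closedBall (by linarith)
    have e : ballLaw n ρ B = ENNReal.ofReal ((1 / 2) ^ n) := by
      rw [ballLaw, unifOn, Measure.smul_apply, Measure.restrict_apply hB,
        Set.inter_eq_left.2 hsub, Measure.addHaar_closedBall _ _ hρ.le,
        show volume B = _ from Measure.addHaar_closedBall _ _ (by positivity), smul_eq_mul]
      have hb0 : volume (Metric.ball (0 : Eu n) 1) ≠ 0 := (Metric.measure_ball_pos volume 0 one_pos).ne'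
      have hb1 : volume (Metric.ball (0 : Eu n) 1) ≠ ⊤ := measure_ball_lt_top.ne
      rw [← ENNReal.div_eq_inv_mul, ENNReal.mul_div_mul_right _ _ hb0 hb1,
        ← ENNReal.ofReal_div_of_pos (by positivity), ← div_pow, finrank_euclideanSpace_fin]
      congr 2
      field_simp
    rw [Measure.real, e, ENNReal.toReal_ofReal (by positivity)]
    calc ((1:ℝ) / 2) ^ n ≤ (1 / 2) ^ 2 := pow_le_pow_of_le_one (by norm_num) (by norm_num) hn
      _ = 1 / 4 := by norm_num
  have h2 : (ballLaw n ρ).real Bᶜ = 1 - (ballLaw n ρ).real B := probReal_compl_eq_one_sub hB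
  have h3 : ∫ g, Bᶜ.indicator (fun _ => (ρ / 2) ^ 2) g ∂ballLaw n ρ ≤ ∫ g, ‖g‖ ^ 2 ∂ballLaw n ρ := by
    refine integral_mono ((integrable_const _).indicator hB.compl)
      (ballLaw_integrable hρ (by fun_prop)) fun g => ?_
    refine Set.indicator_le' (f := fun _ => (ρ / 2) ^ 2) (g := fun g : Eu n => ‖g‖ ^ 2)
      (fun x hx => ?_) (fun x _ => by positivity) g
    have : ρ / 2 < ‖x‖ := by simpa [B] using hx
    show (ρ / 2) ^ 2 ≤ ‖x‖ ^ 2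
    gcongr
  rw [integral_indicator hB.compl, setIntegral_const, smul_eq_mul, h2] at h3
  nlinarith [sq_nonneg ρ]

lemma ballLaw_isStep (hn : 2 ≤ n) {ρ : ℝ} (hρ : 0 < ρ) :
    IsStep (ballLaw n ρ) ρ (ballVar n ρ) := by
  have hn0 : (n : ℝ) ≠ 0 := by positivity
  have hco : ∀ i (g : Eu n), ⟪EuclideanSpace.single i (1:ℝ), g⟫ = g i := fun i g => by
    simp [EuclideanSpace.inner_single_left]
  have hdiag : ∀ i, ∫ g, g i * g i ∂ballLaw n ρ = ballVar n ρ := by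
    intro i
    have h1 : ∀ j, ∫ g, g j ^ 2 ∂ballLaw n ρ = ∫ g, g i ^ 2 ∂ballLaw n ρ := fun j => by
      have := integral_inner_sq_eq (n := n) ρ (u := EuclideanSpace.single j (1:ℝ))
        (v := EuclideanSpace.single i (1:ℝ)) (by simp)
      simpa only [hco] using this
    rw [ballVar]
    simp_rw [← coord_sq_le]
    rw [integral_finsetSum _ fun i _ => ballLaw_integrable hρ (by fun_prop)]
    simp_rw [h1]
    simp only [Finset.sum_const, Finset.card_univ, Fintype.card_fin, nsmul_eq_mul]
    rw [mul_div_cancel_left₀ _ hn0]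
    simp_rw [sq]
  refine ⟨ballLaw_prob hρ, ballLaw_compl ρ, fun i => integral_odd fun g => by simp, fun i j => ?_, hρ, ?_⟩
  · split_ifs with hij
    · subst hij; exact hdiag i
    · have h := integral_inner_sq_eq (n := n) ρ
        (u := EuclideanSpace.single i (1:ℝ) + EuclideanSpace.single j 1)
        (v := EuclideanSpace.single i (1:ℝ) - EuclideanSpace.single j 1) (by
          rw [← sq_eq_sq₀ (norm_nonneg _) (norm_nonneg _), norm_add_sq_real, norm_sub_sq_real, hco]
          simp [hij])
      simp only [inner_add_left, inner_sub_left, hco, add_sq, sub_sq] at h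
      rw [integral_add (ballLaw_integrable hρ (by fun_prop)) (ballLaw_integrable hρ (by fun_prop)),
        integral_add (ballLaw_integrable hρ (by fun_prop)) (ballLaw_integrable hρ (by fun_prop)),
        integral_add (ballLaw_integrable hρ (by fun_prop)) (ballLaw_integrable hρ (by fun_prop)),
        integral_sub (ballLaw_integrable hρ (by fun_prop)) (ballLaw_integrable hρ (by fun_prop))] at h
      simp_rw [mul_assoc, integral_const_mul] at h
      linarith
  · rw [ballVar, mul_div_cancel₀ _ hn0]
    exact ballLaw_sq_lower hn hρ

end Walk

/-! ### The random walk with ball increments -/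

section Walk2

variable {n : ℕ}

/-- `walk ρ f k a` is the expectation of `f` at time `k` of the random walk started at `a`
whose increments are uniform on the ball of radius `ρ`. -/
def walk (ρ : ℝ) (f : Eu n → ℝ) : ℕ → Eu n → ℝ
  | 0 => f
  | k + 1 => fun a => ∫ g, walk ρ f k (a + g) ∂ballLaw n ρ

lemma walk_lipschitz {ρ : ℝ} (hρ : 0 < ρ) {f : Eu n → ℝ} {L : ℝ≥0} (hf : LipschitzWith L f) (k : ℕ) :
    LipschitzWith L (walk ρ f k) := by
  have hprob := ballLaw_prob (n := n) hρ
  induction k with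
  | zero => exact hf
  | succ k ih =>
    have hc := ih.continuous
    refine LipschitzWith.of_dist_le_mul fun a b => ?_
    simp only [walk]
    rw [Real.dist_eq, ← integral_sub (ballLaw_integrable hρ (by fun_prop)) (ballLaw_integrable hρ (by fun_prop))]
    have h := norm_integral_le_of_norm_le_const (μ := ballLaw n ρ) (C := L * dist a b)
      (f := fun g => walk ρ f k (a + g) - walk ρ f k (b + g)) (ae_of_all _ fun g => by
        have := ih.dist_le_mul (a + g) (b + g)
        rwa [dist_add_right, dist_eq_norm] at this)
    simpa using h

lemma walk_int {ρ : ℝ} (hρ : 0 < ρ) {f : Eu n → ℝ} {L : ℝ≥0} (hf : LipschitzWith L f) (k : ℕ) (a : Eu n) :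
    Integrable (fun g => walk ρ f k (a + g)) (ballLaw n ρ) := by
  have hc := (walk_lipschitz hρ hf k).continuous
  exact ballLaw_integrable hρ (by fun_prop)

lemma walk_nonneg {ρ : ℝ} {f : Eu n → ℝ} (hf : ∀ x, 0 ≤ f x) (k : ℕ) (a : Eu n) :
    0 ≤ walk ρ f k a := by
  induction k generalizing a with
  | zero => exact hf a
  | succ k ih => exact integral_nonneg fun g => ih _

lemma walk_add_le {ρ : ℝ} (hρ : 0 < ρ) {f : Eu n → ℝ} {L : ℝ≥0} (hf : LipschitzWith L f)
    (hs : ∀ x y, f (x + y) ≤ f x + f y) (k : ℕ) (a b : Eu n) :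
    walk ρ f k (a + b) ≤ f a + walk ρ f k b := by
  have hprob := ballLaw_prob (n := n) hρ
  induction k generalizing b with
  | zero => exact hs a b
  | succ k ih =>
    simp only [walk]
    calc _ ≤ ∫ g, (f a + walk ρ f k (b + g)) ∂ballLaw n ρ := by
          refine integral_mono (walk_int hρ hf k _) ((integrable_const _).add (walk_int hρ hf k _)) fun g => ?_
          show walk ρ f k (a + b + g) ≤ _
          rw [add_assoc]; exact ih _
      _ = _ := by rw [integral_add (integrable_const _) (walk_int hρ hf k _)]; simp

lemma walk_midpoint {ρ : ℝ} (hρ : 0 < ρ) {f : Eu n → ℝ} {L : ℝ≥0} (hf : LipschitzWith L f)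
    (hs : ∀ x y, 2 * f x ≤ f (x + y) + f (x - y)) (k : ℕ) (a b : Eu n) :
    2 * walk ρ f k a ≤ walk ρ f k (a + b) + walk ρ f k (a - b) := by
  induction k generalizing a with
  | zero => exact hs a b
  | succ k ih =>
    simp only [walk]
    rw [← integral_const_mul, ← integral_add (walk_int hρ hf k _) (walk_int hρ hf k _)]
    refine integral_mono ((walk_int hρ hf k _).const_mul _) ((walk_int hρ hf k _).add (walk_int hρ hf k _)) fun g => ?_
    have := ih (a + g)
    show 2 * walk ρ f k (a + g) ≤ walk ρ f k (a + b + g) + walk ρ f k (a - b + g)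
    rwa [add_right_comm, show a - b + g = a + g - b by abel]

/-- By convexity of `f` and symmetry of the increments, `f` along the walk is a submartingale. -/
lemma walk_zero_mono {ρ : ℝ} (hρ : 0 < ρ) {f : Eu n → ℝ} {L : ℝ≥0} (hf : LipschitzWith L f)
    (hs : ∀ x y, 2 * f x ≤ f (x + y) + f (x - y)) : Monotone fun k => walk ρ f k 0 := by
  have hprob := ballLaw_prob (n := n) hρ
  refine monotone_nat_of_le_succ fun k => ?_
  have h1 : ∫ g, walk ρ f k (0 - g) ∂ballLaw n ρ = ∫ g, walk ρ f k (0 + g) ∂ballLaw n ρ := by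
    have := integral_ballLaw_neg (n := n) ρ fun g => walk ρ f k (0 + g)
    simpa [sub_eq_add_neg] using this
  have hi : Integrable (fun g => walk ρ f k (0 - g)) (ballLaw n ρ) := by
    have hc := (walk_lipschitz hρ hf k).continuous
    exact ballLaw_integrable hρ (by fun_prop)
  have h2 : ∫ _g : Eu n, 2 * walk ρ f k 0 ∂ballLaw n ρ ≤
      ∫ g, (walk ρ f k (0 + g) + walk ρ f k (0 - g)) ∂ballLaw n ρ :=
    integral_mono (integrable_const _) ((walk_int hρ hf k _).add hi)
      fun g => walk_midpoint hρ hf hs k 0 g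
  rw [integral_add (walk_int hρ hf k _) hi, h1] at h2
  simp only [integral_const, probReal_univ, one_smul] at h2
  show _ ≤ ∫ g, walk ρ f k (0 + g) ∂ballLaw n ρ
  linarith

/-- A lower bound for `r` by its second and fourth powers, whose expectations along the walk can be
computed. -/
lemma norm_ge_quartic {τ : ℝ} (hτ : 0 < τ) {r : ℝ} (hr : 0 ≤ r) :
    1 / τ * r ^ 2 - 1 / (4 * τ ^ 3) * r ^ 4 ≤ r := by
  obtain ⟨u, rfl⟩ : ∃ u, r = u * τ := ⟨r / τ, by field_simp⟩
  have hu : 0 ≤ u := by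
    by_contra h; push Not at h; nlinarith
  have : 1 / τ * (u * τ) ^ 2 - 1 / (4 * τ ^ 3) * (u * τ) ^ 4 = τ * (u ^ 2 - u ^ 4 / 4) := by
    field_simp
  rw [this, mul_comm u]
  refine mul_le_mul_of_nonneg_left ?_ hτ.le
  have : 0 ≤ u * (1 - u + u ^ 3 / 4) := mul_nonneg hu (by nlinarith [sq_nonneg (u - 1), sq_nonneg (u-6/5), mul_nonneg hu (sq_nonneg (u - 6/5))])
  nlinarith

lemma integral_norm_add_sq (hn : 2 ≤ n) {ρ : ℝ} (hρ : 0 < ρ) (x : Eu n) :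
    ∫ g, ‖x + g‖ ^ 2 ∂ballLaw n ρ = ‖x‖ ^ 2 + n * ballVar n ρ := by
  have hprob := ballLaw_prob (n := n) hρ
  have hn0 : (n : ℝ) ≠ 0 := by positivity
  simp_rw [norm_add_sq_real]
  rw [integral_add (ballLaw_integrable hρ (by fun_prop)) (ballLaw_integrable hρ (by fun_prop)),
    integral_add (ballLaw_integrable hρ (by fun_prop)) (ballLaw_integrable hρ (by fun_prop)),
    integral_odd (f := fun g : Eu n => 2 * ⟪x, g⟫) (fun g => by simp [inner_neg_right])]
  rw [ballVar, mul_div_cancel₀ _ hn0]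
  simp

lemma integral_norm_add_four (hn : 2 ≤ n) {ρ : ℝ} (hρ : 0 < ρ) (x : Eu n) :
    ∫ g, ‖x + g‖ ^ 4 ∂ballLaw n ρ ≤
      ‖x‖ ^ 4 + 6 * (n * ballVar n ρ) * ‖x‖ ^ 2 + 6 * (n * ballVar n ρ) ^ 2 := by
  have hprob := ballLaw_prob (n := n) hρ
  have hstep := ballLaw_isStep hn hρ
  have hn0 : (n : ℝ) ≠ 0 := by positivity
  have hS : ∫ g, ‖g‖ ^ 2 ∂ballLaw n ρ = n * ballVar n ρ := by
    rw [ballVar, mul_div_cancel₀ _ hn0]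
  have hS0 : 0 ≤ n * ballVar n ρ := by rw [← hS]; positivity
  set S := n * ballVar n ρ
  have e : ∀ g : Eu n, ‖x + g‖ ^ 4 ≤ (4 * ‖x‖ ^ 2 * ⟪x, g⟫ + 4 * ⟪x, g⟫ * ‖g‖ ^ 2) +
      (‖x‖ ^ 4 + 6 * ‖x‖ ^ 2 * ‖g‖ ^ 2 + ‖g‖ ^ 4) := fun g => by
    have h1 : ‖x + g‖ ^ 4 = (‖x + g‖ ^ 2) ^ 2 := by ring
    have h2 : ⟪x, g⟫ ^ 2 ≤ ‖x‖ ^ 2 * ‖g‖ ^ 2 := by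
      rw [← mul_pow]; exact sq_le_sq.2 (by rw [abs_of_nonneg (mul_nonneg (norm_nonneg x) (norm_nonneg g))]; exact abs_real_inner_le_norm x g)
    rw [h1, norm_add_sq_real]
    nlinarith
  have h4 : ∫ g, ‖g‖ ^ 4 ∂ballLaw n ρ ≤ ρ ^ 2 * S := by
    rw [← hS, ← integral_const_mul]
    refine integral_mono_ae (ballLaw_integrable hρ (by fun_prop)) (ballLaw_integrable hρ (by fun_prop)) ?_
    filter_upwards [hstep.ae_norm] with g hg
    calc ‖g‖ ^ 4 = ‖g‖ ^ 2 * ‖g‖ ^ 2 := by ring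
      _ ≤ _ := by gcongr
  refine (integral_mono (ballLaw_integrable hρ (by fun_prop)) (ballLaw_integrable hρ (by fun_prop)) e).trans ?_
  rw [integral_add (ballLaw_integrable hρ (by fun_prop)) (ballLaw_integrable hρ (by fun_prop)),
    integral_odd (f := fun g : Eu n => 4 * ‖x‖ ^ 2 * ⟪x, g⟫ + 4 * ⟪x, g⟫ * ‖g‖ ^ 2)
      (fun g => by simp only [inner_neg_right, norm_neg]; ring),
    integral_add (ballLaw_integrable hρ (by fun_prop)) (ballLaw_integrable hρ (by fun_prop)),
    integral_add (ballLaw_integrable hρ (by fun_prop)) (ballLaw_integrable hρ (by fun_prop)),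
    integral_const_mul, hS]
  simp only [integral_const, probReal_univ, one_smul]
  have h5 : 3 / 16 * ρ ^ 2 ≤ S := hstep.low
  nlinarith

/-- The expected norm of the walk, bounded below through its second and fourth moments as in
`norm_ge_quartic`. -/
lemma walk_norm_lower (hn : 2 ≤ n) {ρ : ℝ} (hρ : 0 < ρ) {τ : ℝ} (hτ : 0 < τ) (k : ℕ) (x : Eu n) :
    1 / τ * (‖x‖ ^ 2 + k * (n * ballVar n ρ)) - 1 / (4 * τ ^ 3) *
      (‖x‖ ^ 4 + 6 * (n * ballVar n ρ) * k * ‖x‖ ^ 2 + 6 * (n * ballVar n ρ) ^ 2 * k ^ 2) ≤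
      walk ρ (fun x : Eu n => ‖x‖) k x := by
  have hprob := ballLaw_prob (n := n) hρ
  have hS0 : 0 ≤ n * ballVar n ρ := mul_nonneg (by positivity) (ballLaw_isStep hn hρ).s_pos.le
  induction k generalizing x with
  | zero => simpa [walk] using norm_ge_quartic hτ (norm_nonneg x)
  | succ k ih =>
    have h2 := integral_norm_add_sq hn hρ x
    have h4 := integral_norm_add_four hn hρ x
    set S := n * ballVar n ρ
    simp only [walk]
    have hm := integral_mono (μ := ballLaw n ρ) (ballLaw_integrable hρ (by fun_prop))
      (walk_int hρ (lipschitzWith_one_norm) k x) (fun g => ih (x + g))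
    refine le_trans ?_ hm
    rw [integral_sub (ballLaw_integrable hρ (by fun_prop)) (ballLaw_integrable hρ (by fun_prop)),
      integral_const_mul, integral_const_mul,
      integral_add (ballLaw_integrable hρ (by fun_prop)) (ballLaw_integrable hρ (by fun_prop)),
      integral_add (ballLaw_integrable hρ (by fun_prop)) (ballLaw_integrable hρ (by fun_prop)),
      integral_add (ballLaw_integrable hρ (by fun_prop)) (ballLaw_integrable hρ (by fun_prop)),
      h2]
    simp only [integral_const, probReal_univ, one_smul]
    rw [integral_const_mul, h2]
    push_cast
    have h5 : (∫ g, ‖x + g‖ ^ 4 ∂ballLaw n ρ) + 6 * S * k * (‖x‖ ^ 2 + S) + 6 * S ^ 2 * k ^ 2 ≤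
        ‖x‖ ^ 4 + 6 * S * (k + 1) * ‖x‖ ^ 2 + 6 * S ^ 2 * (k + 1) ^ 2 := by
      nlinarith [mul_nonneg (sq_nonneg S) (Nat.cast_nonneg (α := ℝ) k)]
    have h6 := mul_le_mul_of_nonneg_left h5 (show 0 ≤ 1 / (4 * τ ^ 3) by positivity)
    linarith

/-- The walk started at the origin spreads out at the diffusive rate: `walk_norm_lower` with `τ` of the
order of the standard deviation `√(k n s)`. -/
lemma walk_norm_zero (hn : 2 ≤ n) {ρ : ℝ} (hρ : 0 < ρ) (k : ℕ) :
    1 / 5 * √(k * (n * ballVar n ρ)) ≤ walk ρ (fun x : Eu n => ‖x‖) k 0 := by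
  have hS0 : 0 ≤ n * ballVar n ρ := mul_nonneg (by positivity) (ballLaw_isStep hn hρ).s_pos.le
  set t := √(k * (n * ballVar n ρ)) with ht
  have ht0 : 0 ≤ t := Real.sqrt_nonneg _
  rcases ht0.eq_or_lt with h | h
  · rw [← h, mul_zero]; exact walk_nonneg (fun _ => norm_nonneg _) _ _
  · have h1 := walk_norm_lower hn hρ (τ := 3 * t) (by positivity) k (0 : Eu n)
    have h2 : t ^ 2 = k * (n * ballVar n ρ) := Real.sq_sqrt (by positivity)
    refine le_trans ?_ h1
    rw [← h2, show 6 * (n * ballVar n ρ) ^ 2 * (k:ℝ) ^ 2 = 6 * (t ^ 2) ^ 2 by rw [h2]; ring]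
    have h3 : 1 / (3 * t) * (‖(0 : Eu n)‖ ^ 2 + t ^ 2) - 1 / (4 * (3 * t) ^ 3) *
        (‖(0 : Eu n)‖ ^ 4 + 6 * (n * ballVar n ρ) * k * ‖(0 : Eu n)‖ ^ 2 + 6 * (t ^ 2) ^ 2) =
        5 / 18 * t := by
      simp only [norm_zero]
      field_simp
      ring
    rw [h3]; linarith

end Walk2

/-! ### Homogeneous functions along the walk and spherical means -/

section Walk3

variable {n : ℕ}

/-- Extended-valued version of `walk`. -/
def lwalk (ρ : ℝ) (φ : Eu n → ℝ≥0∞) : ℕ → Eu n → ℝ≥0∞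
  | 0 => φ
  | k + 1 => fun a => ∫⁻ g, lwalk ρ φ k (a + g) ∂ballLaw n ρ

/-- Density of the position of the walk started at the origin after `k + 1` steps. -/
def walkDens (n : ℕ) (ρ : ℝ) : ℕ → Eu n → ℝ≥0∞
  | 0 => (Metric.closedBall 0 ρ).indicator fun _ => (volume (Metric.closedBall (0 : Eu n) ρ))⁻¹
  | k + 1 => fun a => ∫⁻ g, walkDens n ρ k (a - g) ∂ballLaw n ρ

lemma lwalk_measurable {ρ : ℝ} (hρ : 0 < ρ) {φ : Eu n → ℝ≥0∞} (hφ : Measurable φ) (k : ℕ) :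
    Measurable (lwalk ρ φ k) := by
  have hprob := ballLaw_prob (n := n) hρ
  induction k with
  | zero => exact hφ
  | succ k ih =>
    exact Measurable.lintegral_prod_right
      (f := fun a g : Eu n => lwalk ρ φ k (a + g)) (by unfold Function.uncurry; fun_prop)

lemma walkDens_measurable {ρ : ℝ} (hρ : 0 < ρ) (k : ℕ) : Measurable (walkDens n ρ k) := by
  have hprob := ballLaw_prob (n := n) hρ
  induction k with
  | zero => exact measurable_const.indicator Metric.isClosed_closedBall.measurableSet
  | succ k ih =>
    exact Measurable.lintegral_prod_right
      (f := fun a g : Eu n => walkDens n ρ k (a - g)) (by unfold Function.uncurry; fun_prop)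

/-- The step law is rotation invariant, hence so is the density of the walk. -/
lemma walkDens_isom {ρ : ℝ} (k : ℕ) (e : Eu n ≃ₗᵢ[ℝ] Eu n) (x : Eu n) :
    walkDens n ρ k (e x) = walkDens n ρ k x := by
  induction k generalizing x with
  | zero => simp [walkDens, Set.indicator]
  | succ k ih =>
    simp only [walkDens]
    rw [← lintegral_ballLaw_isom ρ e]
    refine lintegral_congr fun g => ?_
    rw [← map_sub, ih]

lemma walkDens_radial {ρ : ℝ} (k : ℕ) {x y : Eu n} (h : ‖x‖ = ‖y‖) :
    walkDens n ρ k x = walkDens n ρ k y := by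
  rw [← Submodule.reflection_sub h, walkDens_isom]

lemma lwalk_succ' {ρ : ℝ} (φ : Eu n → ℝ≥0∞) (k : ℕ) (a : Eu n) :
    lwalk ρ φ (k + 1) a = lwalk ρ (lwalk ρ φ 1) k a := by
  induction k generalizing a with
  | zero => rfl
  | succ k ih =>
    rw [lwalk]
    simp_rw [ih]
    rfl

lemma lwalk_eq {ρ : ℝ} (hρ : 0 < ρ) (k : ℕ) {φ : Eu n → ℝ≥0∞} (hφ : Measurable φ) :
    lwalk ρ φ (k + 1) 0 = ∫⁻ x, walkDens n ρ k x * φ x := by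
  have hprob := ballLaw_prob (n := n) hρ
  induction k generalizing φ with
  | zero =>
    simp only [lwalk, zero_add, walkDens]
    rw [ballLaw, unifOn_withDensity Metric.isClosed_closedBall.measurableSet,
      lintegral_withDensity_eq_lintegral_mul _ (measurable_const.indicator
        Metric.isClosed_closedBall.measurableSet) hφ]
    rfl
  | succ k ih =>
    rw [lwalk_succ', ih (lwalk_measurable hρ hφ 1)]
    have hw := walkDens_measurable (n := n) hρ k
    simp only [lwalk, walkDens]
    calc _ = ∫⁻ x, ∫⁻ g, walkDens n ρ k x * φ (x + g) ∂ballLaw n ρ := by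
          refine lintegral_congr fun x => ?_
          rw [lintegral_const_mul _ (by fun_prop)]
      _ = ∫⁻ g, ∫⁻ x, walkDens n ρ k x * φ (x + g) ∂volume ∂ballLaw n ρ :=
          lintegral_lintegral_swap (by fun_prop)
      _ = ∫⁻ g, ∫⁻ x, walkDens n ρ k (x - g) * φ x ∂volume ∂ballLaw n ρ := by
          refine lintegral_congr fun g => ?_
          rw [← lintegral_add_right_eq_self (μ := volume) (fun x => walkDens n ρ k (x - g) * φ x) g]
          simp
      _ = ∫⁻ x, ∫⁻ g, walkDens n ρ k (x - g) * φ x ∂ballLaw n ρ :=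
          lintegral_lintegral_swap (by fun_prop)
      _ = _ := by
          refine lintegral_congr fun x => ?_
          rw [lintegral_mul_const _ (by fun_prop)]

lemma ofReal_walk {ρ : ℝ} (hρ : 0 < ρ) {f : Eu n → ℝ} {L : ℝ≥0} (hf : LipschitzWith L f)
    (h0 : ∀ x, 0 ≤ f x) (k : ℕ) (a : Eu n) :
    ENNReal.ofReal (walk ρ f k a) = lwalk ρ (fun x => ENNReal.ofReal (f x)) k a := by
  induction k generalizing a with
  | zero => rfl
  | succ k ih =>
    simp only [walk, lwalk]
    rw [ofReal_integral_eq_lintegral_ofReal (walk_int hρ hf k a) (ae_of_all _ fun g => walk_nonneg h0 _ _)]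
    exact lintegral_congr fun g => ih _

/-- Integration of a homogeneous function against a radial weight in polar coordinates. -/
lemma lintegral_polar (hn : 2 ≤ n) {w : Eu n → ℝ≥0∞} (hw : Measurable w)
    (hr : ∀ x y, ‖x‖ = ‖y‖ → w x = w y) {f : Eu n → ℝ} (hf : Measurable f)
    (hh : ∀ c : ℝ, 0 ≤ c → ∀ x, f (c • x) = c * f x) {e : Eu n} (he : ‖e‖ = 1) :
    ∫⁻ x, w x * ENNReal.ofReal (f x) =
      (∫⁻ u : Metric.sphere (0 : Eu n) 1, ENNReal.ofReal (f u) ∂(volume : Measure (Eu n)).toSphere) *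
      ∫⁻ r : Set.Ioi (0 : ℝ), w ((r : ℝ) • e) * ENNReal.ofReal (r : ℝ)
        ∂(Measure.volumeIoiPow (Module.finrank ℝ (Eu n) - 1)) := by
  have : Nonempty (Fin n) := ⟨⟨0, by omega⟩⟩
  have hmp := (volume : Measure (Eu n)).measurePreserving_homeomorphUnitSphereProd
  have h1 : ∫⁻ x, w x * ENNReal.ofReal (f x) =
      ∫⁻ x : ({0}ᶜ : Set (Eu n)), w x * ENNReal.ofReal (f x) ∂(volume.comap Subtype.val) := by
    rw [lintegral_subtype_comap (measurableSet_singleton (0 : Eu n)).compl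
      (fun x => w x * ENNReal.ofReal (f x)), restrict_compl_singleton]
  have h2 : ∫⁻ x : ({0}ᶜ : Set (Eu n)), w x * ENNReal.ofReal (f x) ∂(volume.comap Subtype.val) =
      ∫⁻ x : ({0}ᶜ : Set (Eu n)), (fun z : Metric.sphere (0 : Eu n) 1 × Set.Ioi (0 : ℝ) =>
        ENNReal.ofReal (f z.1) * (w ((z.2 : ℝ) • e) * ENNReal.ofReal (z.2 : ℝ)))
        (homeomorphUnitSphereProd (Eu n) x) ∂(volume.comap Subtype.val) := by
    refine lintegral_congr fun x => ?_
    have hx : (0:ℝ) < ‖(x : Eu n)‖ := norm_pos_iff.2 x.2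
    simp only [homeomorphUnitSphereProd_apply_fst_coe, homeomorphUnitSphereProd_apply_snd_coe]
    rw [hr (x : Eu n) (‖(x : Eu n)‖ • e) (by simp [norm_smul, he]), hh _ (by positivity),
      ENNReal.ofReal_mul (by positivity), ENNReal.ofReal_inv_of_pos hx]
    have hx1 : ENNReal.ofReal ‖(x : Eu n)‖ ≠ 0 := by simpa using hx
    calc _ = w (‖(x : Eu n)‖ • e) * ENNReal.ofReal (f x) *
        ((ENNReal.ofReal ‖(x : Eu n)‖)⁻¹ * ENNReal.ofReal ‖(x : Eu n)‖) := by
          rw [ENNReal.inv_mul_cancel hx1 ENNReal.ofReal_ne_top, mul_one]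
      _ = _ := by ring
  rw [h1, h2]
  have h3 := hmp.lintegral_comp_emb (homeomorphUnitSphereProd (Eu n)).measurableEmbedding
    (fun z : Metric.sphere (0 : Eu n) 1 × Set.Ioi (0 : ℝ) =>
        ENNReal.ofReal (f z.1) * (w ((z.2 : ℝ) • e) * ENNReal.ofReal (z.2 : ℝ)))
  refine h3.trans ?_
  rw [lintegral_prod_mul (f := fun u : Metric.sphere (0 : Eu n) 1 => ENNReal.ofReal (f u))
      (g := fun r : Set.Ioi (0 : ℝ) => w ((r : ℝ) • e) * ENNReal.ofReal (r : ℝ))]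
  · fun_prop
  · have : Measurable fun r : Set.Ioi (0:ℝ) => w ((r : ℝ) • e) :=
      hw.comp (measurable_subtype_coe.smul_const e)
    fun_prop

/-- The position of the walk started at the origin is rotation invariant, so its direction is uniform on
the sphere and independent of its norm; a homogeneous function therefore factorises. -/
lemma walk_eq_sphere_mean (hn : 2 ≤ n) {ρ : ℝ} (hρ : 0 < ρ) {f : Eu n → ℝ} {L : ℝ≥0}
    (hf : LipschitzWith L f) (h0 : ∀ x, 0 ≤ f x)
    (hh : ∀ c : ℝ, 0 ≤ c → ∀ x, f (c • x) = c * f x) (k : ℕ) :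
    walk ρ f k 0 = (∫ u : Metric.sphere (0 : Eu n) 1, f u
      ∂(((volume : Measure (Eu n)).toSphere Set.univ)⁻¹ • (volume : Measure (Eu n)).toSphere)) *
      walk ρ (fun x : Eu n => ‖x‖) k 0 := by
  have : Nonempty (Fin n) := ⟨⟨0, by omega⟩⟩
  cases k with
  | zero =>
    have : f 0 = 0 := by simpa using hh 0 le_rfl 0
    simp [walk, this]
  | succ k =>
    have he : ‖(EuclideanSpace.single ⟨0, by omega⟩ (1 : ℝ) : Eu n)‖ = 1 := by simp
    have e1 := ofReal_walk hρ hf h0 (k + 1) 0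
    have e2 := ofReal_walk hρ (lipschitzWith_one_norm (E := Eu n)) (fun x => norm_nonneg x) (k + 1) 0
    have hfm : Measurable f := hf.continuous.measurable
    have hr : ∀ x y : Eu n, ‖x‖ = ‖y‖ → walkDens n ρ k x = walkDens n ρ k y :=
      fun x y h => walkDens_radial k h
    rw [lwalk_eq hρ k (by fun_prop), lintegral_polar hn (walkDens_measurable hρ k) hr hfm hh he] at e1
    rw [lwalk_eq hρ k (by fun_prop), lintegral_polar hn (walkDens_measurable hρ k) hr
      (by fun_prop)
      (fun c hc x => by rw [norm_smul, Real.norm_of_nonneg hc]) he] at e2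
    set I := ∫⁻ r : Set.Ioi (0 : ℝ), walkDens n ρ k ((r : ℝ) • EuclideanSpace.single ⟨0, by omega⟩ (1 : ℝ)) *
      ENNReal.ofReal (r : ℝ) ∂(Measure.volumeIoiPow (Module.finrank ℝ (Eu n) - 1))
    have e3 : (∫⁻ u : Metric.sphere (0 : Eu n) 1, ENNReal.ofReal ‖(u : Eu n)‖
        ∂(volume : Measure (Eu n)).toSphere) = (volume : Measure (Eu n)).toSphere Set.univ := by simp
    rw [e3] at e2
    have hσ0 : (volume : Measure (Eu n)).toSphere Set.univ ≠ 0 := by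
      rw [Measure.toSphere_apply_univ]
      refine mul_ne_zero ?_ (Metric.measure_ball_pos volume 0 one_pos).ne'
      rw [finrank_euclideanSpace_fin]; exact_mod_cast (by omega : n ≠ 0)
    have hσ1 : (volume : Measure (Eu n)).toSphere Set.univ ≠ ⊤ := measure_ne_top _ _
    rw [integral_smul_measure, integral_eq_lintegral_of_nonneg_ae
      (f := fun u : Metric.sphere (0 : Eu n) 1 => f u) (ae_of_all _ fun u => h0 u)
      (hf.continuous.comp continuous_subtype_val).aestronglyMeasurable]
    have f1 := congrArg ENNReal.toReal e1
    have f2 := congrArg ENNReal.toReal e2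
    rw [ENNReal.toReal_ofReal (walk_nonneg h0 _ _), ENNReal.toReal_mul] at f1
    rw [ENNReal.toReal_ofReal (walk_nonneg (fun x => norm_nonneg x) _ _), ENNReal.toReal_mul] at f2
    have hσ : ((volume : Measure (Eu n)).toSphere Set.univ).toReal ≠ 0 := ENNReal.toReal_ne_zero.2 ⟨hσ0, hσ1⟩
    rw [f1, f2, ENNReal.toReal_inv, smul_eq_mul]
    field_simp

end Walk3

/-! ### Moments of log-concave measures -/

section Moments
open Matrix

variable {n : ℕ}

/-- A log-concave probability measure supported on `K`: the states visited by the localization. -/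
structure IsState (K : Set (Eu n)) (μ : Measure (Eu n)) : Prop where
  prob : IsProbabilityMeasure μ
  lc : IsLogConcaveMeasure μ
  supp : μ Kᶜ = 0

/-- The barycentre. -/
def bary (μ : Measure (Eu n)) : Eu n := WithLp.toLp 2 fun i => ∫ x, x i ∂μ

/-- The covariance matrix. -/
def covMat (μ : Measure (Eu n)) : Matrix (Fin n) (Fin n) ℝ := fun i j =>
  ∫ x, (x i - bary μ i) * (x j - bary μ j) ∂μ

/-- The tensor of third central moments. -/
def thirdMom (μ : Measure (Eu n)) (i j k : Fin n) : ℝ :=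
  ∫ x, (x i - bary μ i) * (x j - bary μ j) * (x k - bary μ k) ∂μ

lemma IsState.integrable {K : Set (Eu n)} {μ : Measure (Eu n)} (h : IsState K μ) (hK : IsCompact K)
    {f : Eu n → ℝ} (hf : Continuous f) : Integrable f μ := by
  have := h.prob
  exact integrable_of_compact hK h.supp hf

lemma IsState.center {K : Set (Eu n)} {μ : Measure (Eu n)} (h : IsState K μ) (hK : IsCompact K) (i : Fin n) :
    ∫ x, (x i - bary μ i) ∂μ = 0 := by
  have := h.prob
  rw [integral_sub (h.integrable hK (by fun_prop)) (integrable_const _)]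
  simp [bary]

/-- Integral of a centred quadratic form. -/
lemma IsState.integral_bilin {K : Set (Eu n)} {μ : Measure (Eu n)} (h : IsState K μ) (hK : IsCompact K)
    (v w : Fin n → ℝ) : ∫ x, (∑ i, v i * (x i - bary μ i)) * (∑ i, w i * (x i - bary μ i)) ∂μ =
      v ⬝ᵥ (covMat μ *ᵥ w) := by
  have e : ∀ x : Eu n, (∑ i, v i * (x i - bary μ i)) * (∑ i, w i * (x i - bary μ i)) =
      ∑ i, ∑ j, v i * w j * ((x i - bary μ i) * (x j - bary μ j)) := fun x => by
    rw [Finset.sum_mul_sum]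
    exact Finset.sum_congr rfl fun i _ => Finset.sum_congr rfl fun j _ => by ring
  simp_rw [e]
  rw [integral_finsetSum _ fun i _ => h.integrable hK (by fun_prop)]
  simp only [dotProduct, mulVec]
  refine Finset.sum_congr rfl fun i _ => ?_
  rw [integral_finsetSum _ fun i _ => h.integrable hK (by fun_prop), Finset.mul_sum]
  refine Finset.sum_congr rfl fun j _ => ?_
  rw [integral_const_mul, covMat]; ring

lemma covMat_symm (μ : Measure (Eu n)) : (covMat μ)ᵀ = covMat μ := by
  ext i j; simp only [transpose_apply, covMat, mul_comm]

lemma integral_map_continuous {μ : Measure (Eu n)} {φ : Eu n → Eu n} (hφ : Continuous φ)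
    {f : Eu n → ℝ} (hf : Continuous f) : ∫ u, f u ∂(μ.map φ) = ∫ x, f (φ x) ∂μ :=
  integral_map hφ.aemeasurable hf.aestronglyMeasurable

/-- Affine images of log-concave measures are log-concave. -/
lemma IsLogConcaveMeasure.map_affine {μ : Measure (Eu n)} (h : IsLogConcaveMeasure μ)
    (L L' : Eu n →L[ℝ] Eu n) (h1 : ∀ x, L (L' x) = x) (h2 : ∀ x, L' (L x) = x) (a : Eu n) :
    IsLogConcaveMeasure (μ.map fun x => L' (x - a)) := by
  obtain ⟨p, hpm, ⟨hp0, hp⟩, rfl⟩ := h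
  have hc : Continuous fun x => L' (x - a) := by fun_prop
  refine ⟨fun u => |L.det| * p (a + L u), ?_, ⟨fun u => mul_nonneg (abs_nonneg _) (hp0 _), ?_⟩, ?_⟩
  · exact measurable_const.mul (hpm.comp (by fun_prop))
  · intro x y t ht0 ht1
    have e : a + L (t • x + (1 - t) • y) = t • (a + L x) + (1 - t) • (a + L y) := by
      rw [map_add, map_smul, map_smul]; module
    beta_reduce
    rw [e, Real.mul_rpow (abs_nonneg _) (hp0 _), Real.mul_rpow (abs_nonneg _) (hp0 _)]
    rcases (abs_nonneg L.det).eq_or_lt with h0 | h0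
    · rw [← h0]
      rcases eq_or_ne t 0 with rfl | ht
      · simp
      · simp [Real.zero_rpow ht]
    · calc _ = (|L.det| ^ t * |L.det| ^ (1 - t)) * (p (a + L x) ^ t * p (a + L y) ^ (1 - t)) := by ring
        _ = |L.det| * (p (a + L x) ^ t * p (a + L y) ^ (1 - t)) := by
            rw [← Real.rpow_add h0]; simp
        _ ≤ _ := by gcongr; exact hp _ _ t ht0 ht1
  · ext s hs
    rw [Measure.map_apply hc.measurable hs, withDensity_apply _ (hc.measurable hs), withDensity_apply _ hs]
    have him : (fun x => L' (x - a)) ⁻¹' s = (fun u => a + L u) '' s := by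
      ext x; constructor
      · intro hx; exact ⟨_, hx, by simp [h1]⟩
      · rintro ⟨u, hu, rfl⟩; simpa [h2] using hu
    rw [him, lintegral_image_eq_lintegral_abs_det_fderiv_mul volume hs
      (f := fun u => a + L u) (f' := fun _ => L) (fun u _ => ((L.hasFDerivAt).const_add a).hasFDerivWithinAt)]
    · refine lintegral_congr fun u => ?_
      rw [ENNReal.ofReal_mul (abs_nonneg _)]
    · intro x _ y _ hxy
      have := add_left_cancel hxy
      rw [← h2 x, this, h2]

end Moments

/-! ### The third-moment bound -/

section Third
open Matrix

variable {n : ℕ}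

lemma quad_form_le {U : Matrix (Fin n) (Fin n) ℝ} {d : Fin n → ℝ} (hU' : U * Uᵀ = 1)
    (hd : ∀ i, d i ≤ 3 / 2) (v : Fin n → ℝ) :
    v ⬝ᵥ ((U * diagonal d * Uᵀ) *ᵥ v) ≤ 3 / 2 * ∑ i, v i ^ 2 := by
  have e : v ⬝ᵥ ((U * diagonal d * Uᵀ) *ᵥ v) = ∑ i, d i * (Uᵀ *ᵥ v) i ^ 2 := by
    rw [← mulVec_mulVec, ← mulVec_mulVec, dotProduct_mulVec, ← mulVec_transpose]
    simp only [dotProduct, mulVec_diagonal]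
    exact Finset.sum_congr rfl fun i _ => by ring
  rw [e, ← sum_sq_mulVec (U := Uᵀ) (by rwa [transpose_transpose]) v, Finset.mul_sum]
  exact Finset.sum_le_sum fun i _ => mul_le_mul_of_nonneg_right (hd i) (sq_nonneg _)

lemma norm_gradient_quad_le {L H : Eu n →L[ℝ] Eu n} (hL : ∀ w, ‖L w‖ ^ 2 ≤ 3 / 2 * ‖w‖ ^ 2)
    (hH : ∀ x y, ⟪x, H y⟫ = ⟪H x, y⟫) (u : Eu n) :
    ‖gradient (fun u => ⟪L u, H (L u)⟫) u‖ ^ 2 ≤ 6 * ‖H (L u)‖ ^ 2 := by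
  rw [norm_gradient_eq]
  have hd : HasFDerivAt (fun u => ⟪L u, H (L u)⟫)
      ((fderivInnerCLM ℝ (L u, H (L u))).comp (L.prod (H.comp L))) u :=
    L.hasFDerivAt.inner ℝ (H.comp L).hasFDerivAt
  rw [hd.fderiv]
  have hb : ‖(fderivInnerCLM ℝ (L u, H (L u))).comp (L.prod (H.comp L))‖ ≤
      √(6 * ‖H (L u)‖ ^ 2) := by
    refine ContinuousLinearMap.opNorm_le_bound _ (sqrt_nonneg _) fun w => ?_
    have e : ((fderivInnerCLM ℝ (L u, H (L u))).comp (L.prod (H.comp L))) w =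
        2 * ⟪L w, H (L u)⟫ := by
      simp only [ContinuousLinearMap.comp_apply, fderivInnerCLM_apply, ContinuousLinearMap.prod_apply]
      rw [hH (L u) (L w), real_inner_comm]; ring
    rw [e, norm_mul, Real.norm_eq_abs, Real.norm_eq_abs]
    refine abs_le_of_sq_le_sq' ?_ (by positivity) |>.2
    rw [mul_pow, mul_pow, Real.sq_sqrt (by positivity), sq_abs, sq_abs]
    have h1 := abs_real_inner_le_norm (L w) (H (L u))
    have h2 : ⟪L w, H (L u)⟫ ^ 2 ≤ ‖L w‖ ^ 2 * ‖H (L u)‖ ^ 2 := by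
      rw [← mul_pow, ← sq_abs]; gcongr
    have h3 := mul_le_mul_of_nonneg_right (hL w) (sq_nonneg ‖H (L u)‖)
    nlinarith
  calc _ ≤ √(6 * ‖H (L u)‖ ^ 2) ^ 2 := by gcongr
    _ = _ := Real.sq_sqrt (by positivity)

/-- The Poincaré inequality for a quadratic form: the variance of a centred quadratic form under a
log-concave measure with covariance at most `3/2` is at most `9 ψ²` times the squared
Hilbert–Schmidt norm. -/
lemma IsState.variance_quad {K : Set (Eu n)} {μ : Measure (Eu n)} (h : IsState K μ) (hK : IsCompact K)
    {U : Matrix (Fin n) (Fin n) ℝ} {d : Fin n → ℝ} (hU : Uᵀ * U = 1) (hU' : U * Uᵀ = 1)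
    (hA : covMat μ = U * diagonal d * Uᵀ) (hd : ∀ i, 1 / 2 ≤ d i ∧ d i ≤ 3 / 2)
    {H : Matrix (Fin n) (Fin n) ℝ} (hH : Hᵀ = H) {q : Eu n → ℝ}
    (hq : ∀ x, q x = ∑ j, ∑ k, H j k * ((x j - bary μ j) * (x k - bary μ k))) :
    ∫ x, (q x - ∫ y, q y ∂μ) ^ 2 ∂μ ≤ KLSConst n ^ 2 * (9 * ∑ j, ∑ k, H j k ^ 2) := by
  have := h.prob
  set a := bary μ with ha
  set P : Matrix (Fin n) (Fin n) ℝ := U * diagonal (fun i => √(d i)) with hP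
  set Q : Matrix (Fin n) (Fin n) ℝ := diagonal (fun i => (√(d i))⁻¹) * Uᵀ with hQ
  have hs : ∀ i, 0 < √(d i) := fun i => Real.sqrt_pos.2 (by linarith [(hd i).1])
  have hPQ : P * Q = 1 := by
    rw [hP, hQ, Matrix.mul_assoc, ← Matrix.mul_assoc (diagonal _), diagonal_mul_diagonal]
    simp [mul_inv_cancel₀ (hs _).ne', hU']
  have hQP : Q * P = 1 := by
    rw [hP, hQ, Matrix.mul_assoc, ← Matrix.mul_assoc Uᵀ, hU, Matrix.one_mul, diagonal_mul_diagonal]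
    simp [inv_mul_cancel₀ (hs _).ne']
  have hQA : Q * covMat μ * Qᵀ = 1 := by
    rw [hA, hQ, transpose_mul, transpose_transpose, diagonal_transpose]
    calc _ = diagonal (fun i => (√(d i))⁻¹) * ((Uᵀ * U) * diagonal d * (Uᵀ * U)) *
        diagonal (fun i => (√(d i))⁻¹) := by simp only [Matrix.mul_assoc]
      _ = 1 := by
        rw [hU, Matrix.one_mul, Matrix.mul_one, diagonal_mul_diagonal, diagonal_mul_diagonal,
          ← diagonal_one]
        congr 1; ext i
        have := hs i
        have h2 : d i = √(d i) * √(d i) := (Real.mul_self_sqrt (by linarith [(hd i).1])).symm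
        field_simp
        rw [sq]; exact h2
  set L := Matrix.toEuclideanCLM (𝕜 := ℝ) P with hLdef
  set L' := Matrix.toEuclideanCLM (𝕜 := ℝ) Q with hLdef'
  set G := Matrix.toEuclideanCLM (𝕜 := ℝ) H with hG
  have hLL : ∀ x, L (L' x) = x := fun x => by
    have : (L * L') x = x := by rw [hLdef, hLdef', ← map_mul, hPQ, map_one]; rfl
    exact this
  have hLL' : ∀ x, L' (L x) = x := fun x => by
    have : (L' * L) x = x := by rw [hLdef, hLdef', ← map_mul, hQP, map_one]; rfl
    exact this
  have hLn : ∀ w, ‖L w‖ ^ 2 ≤ 3 / 2 * ‖w‖ ^ 2 := fun w => by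
    rw [← coord_sq_le, ← coord_sq_le]
    have e : ∀ i, L w i = (U *ᵥ (diagonal (fun i => √(d i)) *ᵥ w.ofLp)) i := fun i => by
      rw [mulVec_mulVec]; rfl
    simp_rw [e]
    rw [sum_sq_mulVec hU, Finset.mul_sum]
    refine Finset.sum_le_sum fun i _ => ?_
    rw [mulVec_diagonal, mul_pow, Real.sq_sqrt (by linarith [(hd i).1])]
    exact mul_le_mul_of_nonneg_right (hd i).2 (sq_nonneg _)
  have hGs : ∀ x y, ⟪x, G y⟫ = ⟪G x, y⟫ := fun x y => by
    rw [real_inner_comm y (G x), hG, inner_toEuclideanCLM, inner_toEuclideanCLM,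
      dotProduct_mulVec, ← mulVec_transpose, hH, dotProduct_comm]
  have hφ : Continuous fun x => L' (x - a) := by fun_prop
  set ν := μ.map (fun x => L' (x - a)) with hν
  have hiso : IsIsotropicMeasure ν := by
    have e : ∀ x i, L' (x - a) i = ∑ k, Q i k * (x k - a k) := fun x i => rfl
    constructor
    · intro i
      rw [hν, integral_map_continuous hφ (by fun_prop)]
      simp_rw [e]
      rw [integral_finsetSum _ fun i _ => h.integrable hK (by fun_prop)]
      simp_rw [integral_const_mul, ha, h.center hK]; simp
    · intro i j
      rw [hν, integral_map_continuous hφ (by fun_prop)]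
      simp_rw [e]
      rw [ha, h.integral_bilin hK, ← Matrix.one_apply, ← hQA, Matrix.mul_apply]
      simp only [dotProduct, mulVec, transpose_apply, Matrix.mul_apply]
      simp_rw [Finset.mul_sum, Finset.sum_mul]
      rw [Finset.sum_comm]
      exact Finset.sum_congr rfl fun _ _ => Finset.sum_congr rfl fun _ _ => by ring
  have hB : IsCompact ((fun x => L' (x - a)) '' K) := hK.image hφ
  have hνB : ν ((fun x => L' (x - a)) '' K)ᶜ = 0 := by
    rw [hν, Measure.map_apply hφ.measurable hB.measurableSet.compl]
    refine measure_mono_null ?_ h.supp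
    intro x hx hxK; exact hx ⟨x, hxK, rfl⟩
  have hνp : IsProbabilityMeasure ν := Measure.isProbabilityMeasure_map hφ.aemeasurable
  have hfc : Continuous fun u => ⟪L u, G (L u)⟫ := by fun_prop
  have hfl : LocallyLipschitz fun u => ⟪L u, G (L u)⟫ :=
    ContDiff.locallyLipschitz (𝕂 := ℝ) (L.contDiff.inner ℝ (G.comp L).contDiff)
  have key := poincare_KLS ν hνp (h.lc.map_affine L L' hLL hLL' a) hiso hB hνB hfl
  have hqe : ∀ x, ⟪L (L' (x - a)), G (L (L' (x - a)))⟫ = q x := fun x => by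
    rw [hLL, hG, inner_toEuclideanCLM, hq]
    simp only [dotProduct, mulVec, Finset.mul_sum]
    exact Finset.sum_congr rfl fun _ _ => Finset.sum_congr rfl fun _ _ => by
      simp only [WithLp.ofLp_sub, Pi.sub_apply]; ring
  rw [hν, integral_map_continuous hφ hfc, integral_map_continuous hφ (by fun_prop)] at key
  simp_rw [hqe] at key
  refine key.trans (mul_le_mul_of_nonneg_left ?_ (sq_nonneg _))
  rw [← hν]
  have hint : Integrable (fun u => 6 * ‖G (L u)‖ ^ 2) ν :=
    integrable_of_compact hB hνB (by fun_prop)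
  calc ∫ u, ‖gradient (fun u => ⟪L u, G (L u)⟫) u‖ ^ 2 ∂ν ≤ ∫ u, 6 * ‖G (L u)‖ ^ 2 ∂ν :=
        integral_mono_of_nonneg (.of_forall fun _ => by positivity) hint
          (.of_forall fun u => norm_gradient_quad_le hLn hGs u)
    _ = ∫ x, 6 * ‖G (x - a)‖ ^ 2 ∂μ := by
        rw [hν, integral_map_continuous hφ (by fun_prop)]; simp_rw [hLL]
    _ = 6 * ∑ j, H j ⬝ᵥ (covMat μ *ᵥ H j) := by
        rw [integral_const_mul]
        congr 1
        simp_rw [← h.integral_bilin hK]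
        rw [← integral_finsetSum _ fun i _ => h.integrable hK (by fun_prop)]
        refine integral_congr_ae (.of_forall fun x => ?_)
        beta_reduce
        rw [← coord_sq_le]
        exact Finset.sum_congr rfl fun j _ => by rw [sq]; rfl
    _ ≤ 6 * ∑ j, 3 / 2 * ∑ k, H j k ^ 2 := by
        gcongr with j
        rw [hA]; exact quad_form_le hU' (fun i => (hd i).2) _
    _ = _ := by rw [← Finset.mul_sum]; ring

/-- The Hilbert–Schmidt bound on contractions of the third-moment tensor, by duality with
`variance_quad`. -/
lemma IsState.thirdMom_bound {K : Set (Eu n)} {μ : Measure (Eu n)} (h : IsState K μ) (hK : IsCompact K)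
    (hψ : 0 < KLSConst n)
    {U : Matrix (Fin n) (Fin n) ℝ} {d : Fin n → ℝ} (hU : Uᵀ * U = 1) (hU' : U * Uᵀ = 1)
    (hA : covMat μ = U * diagonal d * Uᵀ) (hd : ∀ i, 1 / 2 ≤ d i ∧ d i ≤ 3 / 2) (v : Fin n → ℝ) :
    ∑ j, ∑ k, (∑ i, v i * thirdMom μ i j k) ^ 2 ≤ 27 / 2 * KLSConst n ^ 2 * ∑ i, v i ^ 2 := by
  have := h.prob
  set H : Matrix (Fin n) (Fin n) ℝ := fun j k => ∑ i, v i * thirdMom μ i j k with hHdef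
  have hH : Hᵀ = H := by
    ext j k
    change ∑ i, v i * thirdMom μ i k j = ∑ i, v i * thirdMom μ i j k
    refine Finset.sum_congr rfl fun i _ => congrArg (v i * ·) ?_
    exact integral_congr_ae (.of_forall fun x => by ring)
  set q : Eu n → ℝ := fun x => ∑ j, ∑ k, H j k * ((x j - bary μ j) * (x k - bary μ k)) with hq
  have hqc : Continuous q := by rw [hq]; fun_prop
  have hvar := h.variance_quad hK hU hU' hA hd hH (fun x => rfl : ∀ x, q x = _)
  set S := ∑ j, ∑ k, H j k ^ 2 with hS
  set m := ∫ y, q y ∂μ with hm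
  set ℓ : Eu n → ℝ := fun x => ∑ i, v i * (x i - bary μ i) with hℓ
  have hℓc : Continuous ℓ := by rw [hℓ]; fun_prop
  have hℓ2 : ∫ x, ℓ x ^ 2 ∂μ ≤ 3 / 2 * ∑ i, v i ^ 2 := by
    simp_rw [sq (ℓ _)]
    rw [h.integral_bilin hK, hA]
    exact quad_form_le hU' (fun i => (hd i).2) _
  have hℓ0 : ∫ x, ℓ x ∂μ = 0 := by
    rw [hℓ, integral_finsetSum _ fun i _ => h.integrable hK (by fun_prop)]
    simp_rw [integral_const_mul, h.center hK]; simp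
  have hSe : S = ∫ x, ℓ x * (q x - m) ∂μ := by
    have e1 : ∫ x, ℓ x * (q x - m) ∂μ = ∫ x, ℓ x * q x ∂μ := by
      simp_rw [mul_sub]
      rw [integral_sub (h.integrable hK (by fun_prop)) (h.integrable hK (by fun_prop)),
        integral_mul_const, hℓ0]; simp
    rw [e1]
    have e2 : ∀ x, ℓ x * q x = ∑ j, ∑ k, ∑ i, H j k * (v i *
        ((x i - bary μ i) * (x j - bary μ j) * (x k - bary μ k))) := fun x => by
      rw [hℓ, hq]; beta_reduce
      rw [Finset.mul_sum]
      refine Finset.sum_congr rfl fun j _ => ?_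
      rw [Finset.mul_sum]
      refine Finset.sum_congr rfl fun k _ => ?_
      rw [Finset.sum_mul]
      exact Finset.sum_congr rfl fun i _ => by ring
    simp_rw [e2]
    rw [integral_finsetSum _ fun i _ => h.integrable hK (by fun_prop)]
    refine Finset.sum_congr rfl fun j _ => ?_
    rw [integral_finsetSum _ fun i _ => h.integrable hK (by fun_prop)]
    refine Finset.sum_congr rfl fun k _ => ?_
    rw [integral_finsetSum _ fun i _ => h.integrable hK (by fun_prop)]
    simp_rw [integral_const_mul]
    rw [← Finset.mul_sum, sq]; rfl
  set c := 9 * KLSConst n ^ 2 with hc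
  have hc0 : 0 < c := by positivity
  have hub : S ≤ ∫ x, (c / 2 * ℓ x ^ 2 + 1 / (2 * c) * (q x - m) ^ 2) ∂μ := by
    rw [hSe]
    refine integral_mono (h.integrable hK (by fun_prop)) (h.integrable hK (by fun_prop)) fun x => ?_
    beta_reduce
    have : 0 ≤ (c * ℓ x - (q x - m)) ^ 2 / (2 * c) := by positivity
    have e : (c * ℓ x - (q x - m)) ^ 2 / (2 * c) =
      c / 2 * ℓ x ^ 2 + 1 / (2 * c) * (q x - m) ^ 2 - ℓ x * (q x - m) := by field_simp; ring
    linarith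
  rw [integral_add (h.integrable hK (by fun_prop)) (h.integrable hK (by fun_prop)),
    integral_const_mul, integral_const_mul] at hub
  have h3 : 1 / (2 * c) * ∫ x, (q x - m) ^ 2 ∂μ ≤ S / 2 := by
    calc _ ≤ 1 / (2 * c) * (c * S) := by
          gcongr; rw [hc]; linarith
      _ = S / 2 := by field_simp
  have h4 : c / 2 * ∫ x, ℓ x ^ 2 ∂μ ≤ c / 2 * (3 / 2 * ∑ i, v i ^ 2) := by gcongr
  have : S ≤ c * (3 / 2 * ∑ i, v i ^ 2) := by linarith
  calc S ≤ _ := this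
    _ = _ := by rw [hc]; ring

end Third

/-! ### Affine tilts -/

section Tilt
open Matrix

variable {n : ℕ}

lemma rpow_mul_rpow_of_zero {t a b c : ℝ} (ha : a = 0) (hc : 0 ≤ c) (h : t = 0 → b ≤ c) :
    a ^ t * b ^ (1 - t) ≤ c := by
  rcases eq_or_ne t 0 with rfl | ht
  · simpa using h rfl
  · rw [ha, Real.zero_rpow ht, zero_mul]; exact hc

lemma IsLogConcaveDensity.const_indicator {K : Set (Eu n)} (hK : Convex ℝ K) {c : ℝ} (hc : 0 < c) :
    IsLogConcaveDensity (K.indicator fun _ => c) := by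
  have h0 : ∀ x, 0 ≤ K.indicator (fun _ => c) x := fun x => Set.indicator_nonneg (fun _ _ => hc.le) x
  refine ⟨h0, fun x y t ht0 ht1 => ?_⟩
  by_cases hx : x ∈ K
  · by_cases hy : y ∈ K
    · rw [Set.indicator_of_mem hx, Set.indicator_of_mem hy,
        Set.indicator_of_mem (hK hx hy ht0 (by linarith) (by ring)), ← Real.rpow_add hc]
      simp
    · have := rpow_mul_rpow_of_zero (t := 1 - t) (a := K.indicator (fun _ => c) y)
        (b := K.indicator (fun _ => c) x) (c := K.indicator (fun _ => c) (t • x + (1 - t) • y))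
        (Set.indicator_of_notMem hy _) (h0 _) (fun h => by
          have : t = 1 := by linarith
          subst this; simp)
      rwa [sub_sub_cancel, mul_comm] at this
  · exact rpow_mul_rpow_of_zero (Set.indicator_of_notMem hx _) (h0 _) (fun h => by subst h; simp)

lemma IsLogConcaveDensity.posPart {l : Eu n → ℝ}
    (hl : ∀ x y t, l (t • x + (1 - t) • y) = t * l x + (1 - t) * l y) :
    IsLogConcaveDensity fun x => max (l x) 0 := by
  refine ⟨fun x => le_max_right _ _, fun x y t ht0 ht1 => ?_⟩
  beta_reduce
  rcases le_or_gt (l x) 0 with hx | hx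
  · exact rpow_mul_rpow_of_zero (max_eq_right hx) (le_max_right _ _) (fun h => by subst h; simp)
  rcases le_or_gt (l y) 0 with hy | hy
  · have := rpow_mul_rpow_of_zero (t := 1 - t) (a := max (l y) 0)
        (b := max (l x) 0) (c := max (l (t • x + (1 - t) • y)) 0)
        (max_eq_right hy) (le_max_right _ _) (fun h => by
          have : t = 1 := by linarith
          subst this; simp)
    rwa [sub_sub_cancel, mul_comm] at this
  · rw [max_eq_left hx.le, max_eq_left hy.le, hl]
    exact (Real.geom_mean_le_arith_mean2_weighted ht0 (by linarith) hx.le hy.le (by ring)).trans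
      (le_max_left _ _)

lemma IsLogConcaveDensity.mul {p r : Eu n → ℝ} (hp : IsLogConcaveDensity p)
    (hr : IsLogConcaveDensity r) : IsLogConcaveDensity fun x => p x * r x := by
  refine ⟨fun x => mul_nonneg (hp.1 x) (hr.1 x), fun x y t ht0 ht1 => ?_⟩
  beta_reduce
  rw [Real.mul_rpow (hp.1 _) (hr.1 _), Real.mul_rpow (hp.1 _) (hr.1 _)]
  have h1 := hp.2 x y t ht0 ht1
  have h2 := hr.2 x y t ht0 ht1
  have := mul_le_mul h1 h2 (mul_nonneg (Real.rpow_nonneg (hr.1 _) _) (Real.rpow_nonneg (hr.1 _) _))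
    (hp.1 _)
  linarith

/-- The affine density `1 + ⟨w, x - bary μ⟩` of the tilted measure relative to `μ`. -/
def tiltDens (μ : Measure (Eu n)) (w : Fin n → ℝ) (x : Eu n) : ℝ :=
  1 + ∑ i, w i * (x i - bary μ i)

/-- The affine tilt of a measure. It is a probability measure when `tiltDens` is nonnegative on the
support; elsewhere `ENNReal.ofReal` truncates the density at `0`. -/
def tilt (μ : Measure (Eu n)) (w : Fin n → ℝ) : Measure (Eu n) :=
  μ.withDensity fun x => ENNReal.ofReal (tiltDens μ w x)

lemma continuous_tiltDens (μ : Measure (Eu n)) (w : Fin n → ℝ) : Continuous (tiltDens μ w) := by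
  unfold tiltDens; fun_prop

lemma IsState.integral_tilt {K : Set (Eu n)} {μ : Measure (Eu n)} (h : IsState K μ)
    {w : Fin n → ℝ} (hw : ∀ x ∈ K, 0 ≤ tiltDens μ w x) (f : Eu n → ℝ) :
    ∫ x, f x ∂(tilt μ w) = ∫ x, tiltDens μ w x * f x ∂μ := by
  have hm := (continuous_tiltDens μ w).measurable
  rw [tilt, integral_withDensity_eq_integral_toReal_smul (by fun_prop) (by simp)]
  have hae : ∀ᵐ x ∂μ, x ∈ K := h.supp
  refine integral_congr_ae ?_
  filter_upwards [hae] with x hx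
  rw [ENNReal.toReal_ofReal (hw x hx), smul_eq_mul]

lemma IsState.integral_tiltDens {K : Set (Eu n)} {μ : Measure (Eu n)} (h : IsState K μ)
    (hK : IsCompact K) (w : Fin n → ℝ) : ∫ x, tiltDens μ w x ∂μ = 1 := by
  have := h.prob
  unfold tiltDens
  rw [integral_add (integrable_const _) (h.integrable hK (by fun_prop)),
    integral_finsetSum _ fun i _ => h.integrable hK (by fun_prop)]
  simp_rw [integral_const_mul, h.center hK]; simp

lemma IsState.tilt {K : Set (Eu n)} {μ : Measure (Eu n)} (h : IsState K μ) (hK : IsCompact K)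
    {w : Fin n → ℝ} (hw : ∀ x ∈ K, 0 ≤ tiltDens μ w x) : IsState K (tilt μ w) := by
  have := h.prob
  have hm := (continuous_tiltDens μ w).measurable
  have hae : ∀ᵐ x ∂μ, x ∈ K := h.supp
  refine ⟨⟨?_⟩, ?_, ?_⟩
  · rw [_root_.tilt, withDensity_apply _ MeasurableSet.univ, Measure.restrict_univ,
      ← ofReal_integral_eq_lintegral_ofReal (h.integrable hK (continuous_tiltDens μ w))
        (by filter_upwards [hae] with x hx using hw x hx), h.integral_tiltDens hK, ENNReal.ofReal_one]
  · obtain ⟨p, hpm, hp, hμ⟩ := h.lc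
    refine ⟨fun x => p x * max (tiltDens μ w x) 0, ?_, hp.mul (IsLogConcaveDensity.posPart ?_), ?_⟩
    · exact hpm.mul (hm.max measurable_const)
    · intro x y t
      unfold tiltDens
      have e : ∀ i, w i * ((t • x + (1 - t) • y) i - bary μ i) =
          t * (w i * (x i - bary μ i)) + (1 - t) * (w i * (y i - bary μ i)) := fun i => by
        simp only [PiLp.add_apply, PiLp.smul_apply, smul_eq_mul]; ring
      simp_rw [e]
      rw [Finset.sum_add_distrib, ← Finset.mul_sum, ← Finset.mul_sum]; ring
    · unfold _root_.tilt
      conv_lhs => rw [hμ]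
      rw [← withDensity_mul _ (by fun_prop) (by rw [← hμ]; fun_prop)]
      congr 1
      ext x
      rw [Pi.mul_apply, ENNReal.ofReal_mul (hp.1 x), ENNReal.ofReal_max, ENNReal.ofReal_zero,
        max_eq_left (zero_le), ← hμ]
  · exact withDensity_absolutelyContinuous _ _ h.supp

lemma IsState.bary_tilt {K : Set (Eu n)} {μ : Measure (Eu n)} (h : IsState K μ) (hK : IsCompact K)
    {w : Fin n → ℝ} (hw : ∀ x ∈ K, 0 ≤ tiltDens μ w x) (i : Fin n) :
    bary (_root_.tilt μ w) i = bary μ i + (covMat μ *ᵥ w) i := by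
  have := h.prob
  change ∫ x, x i ∂(_root_.tilt μ w) = _
  rw [h.integral_tilt hw]
  have e : ∀ x : Eu n, tiltDens μ w x * x i = bary μ i * tiltDens μ w x + (x i - bary μ i) +
      (∑ k, (Pi.single i 1 : Fin n → ℝ) k * (x k - bary μ k)) * (∑ k, w k * (x k - bary μ k)) := by
    intro x
    have : ∑ k, (Pi.single i 1 : Fin n → ℝ) k * (x k - bary μ k) = x i - bary μ i := by
      simp [Pi.single_apply]
    rw [this, tiltDens]; ring
  have hc := continuous_tiltDens μ w
  simp_rw [e]
  rw [integral_add (h.integrable hK (by fun_prop)) (h.integrable hK (by fun_prop)),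
    integral_add (h.integrable hK (by fun_prop)) (h.integrable hK (by fun_prop)),
    integral_const_mul, h.integral_tiltDens hK, h.center hK, h.integral_bilin hK]
  simp

lemma IsState.covMat_tilt {K : Set (Eu n)} {μ : Measure (Eu n)} (h : IsState K μ) (hK : IsCompact K)
    {W : Matrix (Fin n) (Fin n) ℝ} (hAW : covMat μ * W = 1) {g : Fin n → ℝ}
    (hw : ∀ x ∈ K, 0 ≤ tiltDens μ (W *ᵥ g) x) :
    covMat (_root_.tilt μ (W *ᵥ g)) = covMat μ + covInc W (thirdMom μ) g := by
  have := h.prob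
  have hAw : covMat μ *ᵥ (W *ᵥ g) = g := by rw [mulVec_mulVec, hAW, one_mulVec]
  have hb : ∀ i, bary (_root_.tilt μ (W *ᵥ g)) i = bary μ i + g i := fun i => by
    rw [h.bary_tilt hK hw, hAw]
  ext j k
  set w := W *ᵥ g with hwdef
  have hc := continuous_tiltDens μ w
  change ∫ x, (x j - bary (_root_.tilt μ w) j) * (x k - bary (_root_.tilt μ w) k)
    ∂(_root_.tilt μ w) = _
  rw [h.integral_tilt hw, hb, hb]
  have hs : ∀ i (x : Eu n), ∑ k, (Pi.single i 1 : Fin n → ℝ) k * (x k - bary μ k) = x i - bary μ i :=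
    fun i x => by simp [Pi.single_apply]
  have e : ∀ x : Eu n, tiltDens μ w x * ((x j - (bary μ j + g j)) * (x k - (bary μ k + g k))) =
      (x j - bary μ j) * (x k - bary μ k) + (∑ i, w i * ((x i - bary μ i) * (x j - bary μ j) *
      (x k - bary μ k))) + g j * g k * tiltDens μ w x - g j * (x k - bary μ k) -
      g k * (x j - bary μ j) -
      g j * ((∑ i, (Pi.single k 1 : Fin n → ℝ) i * (x i - bary μ i)) * (∑ i, w i * (x i - bary μ i)))
      - g k * ((∑ i, (Pi.single j 1 : Fin n → ℝ) i * (x i - bary μ i)) *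
        (∑ i, w i * (x i - bary μ i))) := by
    intro x
    have e1 : ∑ i, w i * ((x i - bary μ i) * (x j - bary μ j) * (x k - bary μ k)) =
        (∑ i, w i * (x i - bary μ i)) * ((x j - bary μ j) * (x k - bary μ k)) := by
      rw [Finset.sum_mul]; exact Finset.sum_congr rfl fun i _ => by ring
    rw [hs, hs, e1, tiltDens]; ring
  simp_rw [e]
  rw [integral_sub (h.integrable hK (by fun_prop)) (h.integrable hK (by fun_prop))]
  rw [integral_sub (h.integrable hK (by fun_prop)) (h.integrable hK (by fun_prop))]
  rw [integral_sub (h.integrable hK (by fun_prop)) (h.integrable hK (by fun_prop))]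
  rw [integral_sub (h.integrable hK (by fun_prop)) (h.integrable hK (by fun_prop))]
  rw [integral_add (h.integrable hK (by fun_prop)) (h.integrable hK (by fun_prop))]
  rw [integral_add (h.integrable hK (by fun_prop)) (h.integrable hK (by fun_prop))]
  rw [integral_finsetSum _ fun i _ => h.integrable hK (by fun_prop)]
  simp_rw [integral_const_mul]
  rw [h.integral_tiltDens hK, h.center hK, h.center hK, h.integral_bilin hK, h.integral_bilin hK, hAw]
  simp only [single_dotProduct, Matrix.add_apply, covInc, thirdMom, covMat]
  ring

/-- The tilting density is nonnegative on `K` for small directions. -/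
lemma tiltDens_nonneg {K : Set (Eu n)} {R : ℝ} (hR : ∀ x ∈ K, ‖x‖ ≤ R) {μ : Measure (Eu n)}
    (hb : ‖bary μ‖ ≤ R) {W : Matrix (Fin n) (Fin n) ℝ} (hW : ∀ z, ∑ i, (W *ᵥ z) i ^ 2 ≤ 4 * ∑ i, z i ^ 2)
    {ρ : ℝ} (hρ : ρ * (4 * R) ≤ 1) {g : Eu n} (hg : ‖g‖ ≤ ρ) :
    ∀ x ∈ K, 0 ≤ tiltDens μ (W *ᵥ g.ofLp) x := by
  intro x hx
  have hR0 : 0 ≤ R := (norm_nonneg _).trans hb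
  have e : ∑ i, (W *ᵥ g.ofLp) i * (x i - bary μ i) =
      ⟪WithLp.toLp 2 (W *ᵥ g.ofLp), x - bary μ⟫ := by
    simp [PiLp.inner_apply, mul_comm]
  have h1 : ‖WithLp.toLp 2 (W *ᵥ g.ofLp)‖ ≤ 2 * ρ := by
    have := hW g.ofLp
    rw [coord_sq_le] at this
    have h2 := coord_sq_le (WithLp.toLp 2 (W *ᵥ g.ofLp))
    have h3 : ‖WithLp.toLp 2 (W *ᵥ g.ofLp)‖ ^ 2 ≤ (2 * ‖g‖) ^ 2 := by rw [← h2]; simpa [mul_pow] using by linarith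
    have := abs_le_of_sq_le_sq' h3 (by positivity)
    linarith [this.2]
  have h2 : ‖x - bary μ‖ ≤ 2 * R := (norm_sub_le _ _).trans (by linarith [hR x hx])
  have h3 := abs_real_inner_le_norm (WithLp.toLp 2 (W *ᵥ g.ofLp)) (x - bary μ)
  have h4 := mul_le_mul h1 h2 (norm_nonneg _) ((norm_nonneg _).trans h1)
  have h5 := (abs_le.1 h3).1
  rw [tiltDens, e]
  nlinarith

end Tilt

/-! ### Convex bodies in isotropic position -/

section Body
open Matrix

variable {n : ℕ}

lemma IsState.integrable_id {K : Set (Eu n)} {μ : Measure (Eu n)} (h : IsState K μ) (hK : IsCompact K) :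
    Integrable (fun x => x) μ := by
  have := h.prob
  obtain ⟨R, hR⟩ := hK.isBounded.exists_norm_le
  have hae : ∀ᵐ x ∂μ, x ∈ K := h.supp
  exact Integrable.of_bound (by fun_prop) R (by filter_upwards [hae] with x hx using hR x hx)

lemma IsState.bary_eq {K : Set (Eu n)} {μ : Measure (Eu n)} (h : IsState K μ) (hK : IsCompact K) :
    bary μ = ∫ x, x ∂μ := by
  ext i
  have := ContinuousLinearMap.integral_comp_comm (EuclideanSpace.proj i : Eu n →L[ℝ] ℝ)
    (h.integrable_id hK)
  simpa [bary] using this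

lemma IsState.bary_norm {K : Set (Eu n)} {μ : Measure (Eu n)} (h : IsState K μ) (hK : IsCompact K)
    {R : ℝ} (hR : ∀ x ∈ K, ‖x‖ ≤ R) : ‖bary μ‖ ≤ R := by
  have := h.prob
  rw [h.bary_eq hK]
  have hae : ∀ᵐ x ∂μ, x ∈ K := h.supp
  simpa using norm_integral_le_of_norm_le_const (μ := μ) (f := fun x => x) (C := R)
    (by filter_upwards [hae] with x hx using hR x hx)

lemma IsState.jensen {K : Set (Eu n)} {μ : Measure (Eu n)} (h : IsState K μ) (hK : IsCompact K)
    {f : Eu n → ℝ} (hf : ConvexOn ℝ Set.univ f) (hc : Continuous f) : f (bary μ) ≤ ∫ x, f x ∂μ := by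
  have := h.prob
  rw [h.bary_eq hK]
  exact hf.map_integral_le hc.continuousOn isClosed_univ (by simp) (h.integrable_id hK)
    (h.integrable hK hc)

lemma IsState.abs_integral_le {K : Set (Eu n)} {μ : Measure (Eu n)} (h : IsState K μ)
    {f : Eu n → ℝ} {C : ℝ} (hf : ∀ x ∈ K, |f x| ≤ C) : |∫ x, f x ∂μ| ≤ C := by
  have := h.prob
  have hae : ∀ᵐ x ∂μ, x ∈ K := h.supp
  simpa using norm_integral_le_of_norm_le_const (μ := μ) (f := f) (C := C)
    (by filter_upwards [hae] with x hx using hf x hx)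

lemma IsState.moment_bounds {K : Set (Eu n)} {μ : Measure (Eu n)} (h : IsState K μ) (hK : IsCompact K)
    {R : ℝ} (hR0 : 0 ≤ R) (hR : ∀ x ∈ K, ‖x‖ ≤ R) :
    (∀ i j, |(covMat μ - 1) i j| ≤ (2 * R) ^ 2 + 1 + (2 * R) ^ 3) ∧
    (∀ i j k, |thirdMom μ i j k| ≤ (2 * R) ^ 2 + 1 + (2 * R) ^ 3) := by
  have hY : ∀ x ∈ K, ∀ i, |x i - bary μ i| ≤ 2 * R := fun x hx i => by
    have h1 := PiLp.norm_apply_le (x - bary μ) i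
    have h2 := norm_sub_le x (bary μ)
    have h3 := h.bary_norm hK hR
    have h4 := hR x hx
    rw [Real.norm_eq_abs] at h1
    exact h1.trans (by linarith)
  constructor
  · intro i j
    have h1 : |covMat μ i j| ≤ (2 * R) ^ 2 := h.abs_integral_le fun x hx => by
      rw [abs_mul, sq]; gcongr <;> exact hY x hx _
    have h2 : |(1 : Matrix (Fin n) (Fin n) ℝ) i j| ≤ 1 := by
      rw [Matrix.one_apply]; split_ifs <;> simp
    have := abs_sub (covMat μ i j) ((1 : Matrix (Fin n) (Fin n) ℝ) i j)
    rw [Matrix.sub_apply]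
    have : 0 ≤ (2 * R) ^ 3 := by positivity
    linarith
  · intro i j k
    have h1 : |thirdMom μ i j k| ≤ (2 * R) ^ 3 := h.abs_integral_le fun x hx => by
      rw [abs_mul, abs_mul, show (2 * R) ^ 3 = 2 * R * (2 * R) * (2 * R) by ring]
      gcongr <;> exact hY x hx _
    have : 0 ≤ (2 * R) ^ 2 := by positivity
    linarith

lemma volume_body {K : Set (Eu n)} (hK : IsConvexBody K) : volume K ≠ 0 ∧ volume K ≠ ⊤ :=
  ⟨fun h => (isOpen_interior.measure_pos volume hK.2.2).ne' (measure_mono_null interior_subset h),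
    hK.1.measure_lt_top.ne⟩

/-- The uniform measure on a convex body is a log-concave probability measure. -/
lemma unifOn_state {K : Set (Eu n)} (hK : IsConvexBody K) : IsState K (unifOn K) := by
  obtain ⟨h0, h1⟩ := volume_body hK
  refine ⟨unifOn_prob h0 h1, ⟨K.indicator fun _ => (volume K).toReal⁻¹, ?_,
    IsLogConcaveDensity.const_indicator hK.2.1 (inv_pos.2 (ENNReal.toReal_pos h0 h1)), ?_⟩,
    unifOn_compl hK.1.measurableSet⟩
  · exact measurable_const.indicator hK.1.measurableSet
  · rw [unifOn_withDensity hK.1.measurableSet]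
    congr 1; ext x
    by_cases hx : x ∈ K
    · rw [Set.indicator_of_mem hx, Set.indicator_of_mem hx, ← ENNReal.toReal_inv,
        ENNReal.ofReal_toReal (ENNReal.inv_ne_top.2 h0)]
    · rw [Set.indicator_of_notMem hx, Set.indicator_of_notMem hx, ENNReal.ofReal_zero]

lemma unifOn_moments {K : Set (Eu n)} (hi : IsIsotropicBody K) :
    bary (unifOn K) = 0 ∧ covMat (unifOn K) = 1 := by
  have hb : bary (unifOn K) = 0 := by ext i; exact hi.1 i
  refine ⟨hb, ?_⟩
  ext i j
  rw [covMat, hb, Matrix.one_apply, ← hi.2 i j]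
  simp

/-- The centroid of a convex body is an interior point: otherwise a separating linear functional would be
negative on the interior of the body while having mean zero. -/
lemma zero_mem_interior {K : Set (Eu n)} (hK : IsConvexBody K) (hi : IsIsotropicBody K) :
    (0 : Eu n) ∈ interior K := by
  by_contra h0
  obtain ⟨f, hf⟩ := geometric_hahn_banach_open_point hK.2.1.interior isOpen_interior h0
  rw [map_zero] at hf
  have hst := unifOn_state hK
  have := hst.prob
  have hmean : ∫ x, f x ∂(unifOn K) = 0 := by
    have := ContinuousLinearMap.integral_comp_comm f (hst.integrable_id hK.1)
    rw [this, ← hst.bary_eq hK.1, (unifOn_moments hi).1, map_zero]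
  have hle : ∀ x ∈ K, f x ≤ 0 := by
    have hcl : K ⊆ closure (interior K) := by
      rw [hK.2.1.closure_interior_eq_closure_of_nonempty_interior hK.2.2]; exact subset_closure
    intro x hx
    exact closure_minimal (fun y hy => (hf y hy).le) (isClosed_le f.continuous continuous_const) (hcl hx)
  have hae : ∀ᵐ x ∂(unifOn K), x ∈ K := hst.supp
  have hz : (fun x => -f x) =ᵐ[unifOn K] 0 := by
    refine (integral_eq_zero_iff_of_nonneg_ae ?_ (hst.integrable hK.1 f.continuous.neg)).1 ?_
    rotate_left
    · change ∫ x, -f x ∂(unifOn K) = 0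
      rw [integral_neg, hmean, neg_zero]
    · filter_upwards [hae] with x hx
      simpa using hle x hx
  have hnull : unifOn K (interior K) = 0 := by
    refine measure_mono_null ?_ hz
    intro x hx h
    have := hf x hx
    simp at h
    linarith
  obtain ⟨v0, v1⟩ := volume_body hK
  rw [unifOn, Measure.smul_apply, Measure.restrict_apply isOpen_interior.measurableSet,
    Set.inter_eq_left.2 interior_subset, smul_eq_mul, mul_eq_zero] at hnull
  rcases hnull with h | h
  · exact v1 (ENNReal.inv_eq_zero.1 h)
  · exact (isOpen_interior.measure_pos volume hK.2.2).ne' h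

/-- Linear functions show `ψₙ ≥ 1`. -/
lemma one_le_KLS (hn : 0 < n) {K : Set (Eu n)} (hK : IsConvexBody K) (hi : IsIsotropicBody K) :
    1 ≤ KLSConst n := by
  have hst := unifOn_state hK
  have := hst.prob
  have hψ : 0 ≤ KLSConst n := by
    refine Real.sSup_nonneg ?_
    rintro s ⟨μ, -, -, -, rfl⟩
    exact Real.sqrt_nonneg _
  set i : Fin n := ⟨0, hn⟩
  set p : Eu n →L[ℝ] ℝ := EuclideanSpace.proj i with hp
  have key := poincare_KLS (unifOn K) hst.prob hst.lc hi hK.1 hst.supp p.lipschitz.locallyLipschitz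
  have e1 : ∫ y, p y ∂(unifOn K) = 0 := hi.1 i
  have e2 : ∫ x, p x ^ 2 ∂(unifOn K) = 1 := by
    have := hi.2 i i
    simp only [if_true] at this
    rw [← this]
    exact integral_congr_ae (.of_forall fun x => sq _)
  rw [e1] at key
  simp only [sub_zero] at key
  rw [e2] at key
  have hpn : ‖p‖ ≤ 1 := ContinuousLinearMap.opNorm_le_bound _ zero_le_one fun x => by
    rw [one_mul]; exact PiLp.norm_apply_le x i
  have e3 : ∀ x, ‖gradient (fun y => p y) x‖ ^ 2 = ‖p‖ ^ 2 := fun x => by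
    rw [norm_gradient_eq, p.fderiv]
  have e4 : ∫ x, ‖gradient (fun y => p y) x‖ ^ 2 ∂(unifOn K) ≤ 1 := by
    simp_rw [e3]
    simp only [integral_const, probReal_univ, smul_eq_mul, one_mul]
    exact pow_le_one₀ (norm_nonneg _) hpn
  have : (1 : ℝ) ≤ KLSConst n ^ 2 := key.trans
    (mul_le_of_le_one_right (sq_nonneg _) e4)
  nlinarith

/-- The properties of a Minkowski functional used in the argument. -/
structure IsGoodGauge (K : Set (Eu n)) (f : Eu n → ℝ) : Prop where
  lip : ∃ L, LipschitzWith L f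
  nonneg : ∀ x, 0 ≤ f x
  le_one : ∀ x ∈ K, f x ≤ 1
  homog : ∀ c, 0 ≤ c → ∀ x, f (c • x) = c * f x
  subadd : ∀ x y, f (x + y) ≤ f x + f y
  mid : ∀ x y, 2 * f x ≤ f (x + y) + f (x - y)
  conv : ConvexOn ℝ Set.univ f

lemma gauge_isGood {K : Set (Eu n)} (hK : IsConvexBody K) (h0 : (0 : Eu n) ∈ interior K) :
    IsGoodGauge K (gauge K) := by
  have hnh : K ∈ nhds (0 : Eu n) := mem_interior_iff_mem_nhds.1 h0
  have habs : Absorbent ℝ K := absorbent_nhds_zero hnh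
  have hh : ∀ c : ℝ, 0 ≤ c → ∀ x, gauge K (c • x) = c * gauge K x := fun c hc x => by
    rw [gauge_smul_of_nonneg hc, smul_eq_mul]
  have hs : ∀ x y, gauge K (x + y) ≤ gauge K x + gauge K y := gauge_add_le hK.2.1 habs
  refine ⟨hK.2.1.lipschitz_gauge hnh, gauge_nonneg, fun x hx => gauge_le_one_of_mem hx, hh, hs,
    fun x y => ?_, convex_univ, fun x _ y _ a b ha hb _ => ?_⟩
  · have := hs (x + y) (x - y)
    rwa [show x + y + (x - y) = (2 : ℝ) • x by rw [two_smul]; abel, hh 2 (by norm_num)] at this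
  · have := hs (a • x) (b • y)
    rwa [hh a ha, hh b hb] at this

end Body

/-! ### Induction along the tilts -/

section Induct
open Matrix

variable {n : ℕ}

/-- The growth factor of the potential in one step of the walk. -/
def growth (n q : ℕ) (ρ : ℝ) : ℝ :=
  1 + 165 * (q + 2 : ℝ) ^ 2 * (27 / 2 * KLSConst n ^ 2) * ballVar n ρ

/-- A lower bound on `∫ f` valid for all states at time `k` is averaged over the tilts of `μ` by
`W g`, where `g` is a step of the walk: the barycentre moves by `g`, and the integral of `f` is unchanged
on average because the density is affine in the centred variable `g`. -/
lemma tilt_average (hn : 2 ≤ n) {K : Set (Eu n)} (hK : IsCompact K) {f : Eu n → ℝ} {L : ℝ≥0}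
    (hf : LipschitzWith L f) {p : ℕ} {ρ : ℝ} (hρ : 0 < ρ) {k : ℕ} {c : ℝ}
    {μ : Measure (Eu n)} (h : IsState K μ) {W : Matrix (Fin n) (Fin n) ℝ} (hAW : covMat μ * W = 1)
    (hpos : ∀ g : Eu n, ‖g‖ ≤ ρ → ∀ x ∈ K, 0 ≤ tiltDens μ (W *ᵥ g.ofLp) x)
    (ih : ∀ ν : Measure (Eu n), IsState K ν →
      walk ρ f k (bary ν) ≤ ∫ x, f x ∂ν + c * pot p (covMat ν)) :
    walk ρ f (k + 1) (bary μ) ≤ ∫ x, f x ∂μ +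
      c * ∫ g : Eu n, pot p (covMat μ + covInc W (thirdMom μ) g) ∂ballLaw n ρ := by
  have hst := ballLaw_isStep hn hρ
  have := hst.prob
  have hfc := hf.continuous
  set b : Fin n → ℝ := fun i => ∫ x, (x i - bary μ i) * f x ∂μ with hb
  have hpt : ∀ g : Eu n, ‖g‖ ≤ ρ → walk ρ f k (bary μ + g) ≤
      (∫ x, f x ∂μ + ∑ i, (Wᵀ *ᵥ b) i * g i) +
        c * pot p (covMat μ + covInc W (thirdMom μ) g) := by
    intro g hg
    have hp := hpos g hg
    have h1 := ih _ (h.tilt hK hp)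
    rw [h.covMat_tilt hK hAW hp, h.integral_tilt hp] at h1
    have e1 : bary (tilt μ (W *ᵥ g.ofLp)) = bary μ + g := by
      ext i
      rw [h.bary_tilt hK hp, mulVec_mulVec, hAW, one_mulVec]; rfl
    have e2 : ∫ x, tiltDens μ (W *ᵥ g.ofLp) x * f x ∂μ =
        ∫ x, f x ∂μ + ∑ i, (Wᵀ *ᵥ b) i * g i := by
      have e : ∀ x, tiltDens μ (W *ᵥ g.ofLp) x * f x =
          f x + ∑ i, (W *ᵥ g.ofLp) i * ((x i - bary μ i) * f x) := fun x => by
        rw [tiltDens, add_mul, one_mul, Finset.sum_mul]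
        congr 1
        exact Finset.sum_congr rfl fun i _ => by ring
      simp_rw [e]
      rw [integral_add (h.integrable hK hfc) (h.integrable hK (by fun_prop)),
        integral_finsetSum _ fun i _ => h.integrable hK (by fun_prop)]
      simp_rw [integral_const_mul]
      congr 1
      change (W *ᵥ g.ofLp) ⬝ᵥ b = (Wᵀ *ᵥ b) ⬝ᵥ g.ofLp
      rw [mulVec_transpose, ← dotProduct_mulVec, dotProduct_comm]
    rwa [e1, e2] at h1
  have c1 : Continuous fun g : Eu n => pot p (covMat μ + covInc W (thirdMom μ) g) := by
    have := continuous_covInc W (thirdMom μ)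
    unfold pot
    fun_prop
  have hmono := integral_mono_ae (walk_int hρ hf k (bary μ))
    (hst.integrable (f := fun g : Eu n => (∫ x, f x ∂μ + ∑ i, (Wᵀ *ᵥ b) i * g i) +
        c * pot p (covMat μ + covInc W (thirdMom μ) g)) (by fun_prop))
    (by filter_upwards [hst.ae_norm] with g hg using hpt g hg)
  rw [integral_add (hst.integrable (by fun_prop)) (hst.integrable (by fun_prop))] at hmono
  rw [integral_add (integrable_const _) (hst.integrable (by fun_prop)), hst.lin,
    integral_const_mul] at hmono
  simp only [integral_const, probReal_univ, one_smul, add_zero] at hmono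
  exact hmono

/-- The main induction: the integral of the gauge is controlled from below by the walk, with an
error governed by the potential of the covariance matrix. Once the potential exceeds `(1/2) ^ p` the
error term is at least `walk ρ f N 0`, and subadditivity of `f` with Jensen's inequality suffices; below
that threshold the spectrum is pinched by `pot_pinch` and one tilt reduces `k` by `1`. -/
lemma walk_le_integral (hn : 2 ≤ n) (hψ : 1 ≤ KLSConst n) {K : Set (Eu n)} (hK : IsCompact K)
    {f : Eu n → ℝ} (hf : IsGoodGauge K f) {q : ℕ} (he : Even q) :
    ∃ ρ0 : ℝ, 0 < ρ0 ∧ ∀ ρ, 0 < ρ → ρ ≤ ρ0 → ∀ N k, k ≤ N → ∀ μ, IsState K μ →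
      walk ρ f k (bary μ) ≤ ∫ x, f x ∂μ +
        (walk ρ f N 0 * growth n q ρ ^ k / (1 / 2) ^ (q + 2)) * pot (q + 2) (covMat μ) := by
  obtain ⟨L, hL⟩ := hf.lip
  obtain ⟨R, hR1, hR⟩ := hK.isBounded.exists_pos_norm_le
  obtain ⟨ρ1, hρ1, -, hstep⟩ := exists_pot_step n (by omega) ((2 * R) ^ 2 + 1 + (2 * R) ^ 3)
    (by positivity) q he
  have hep : Even (q + 2) := he.add (by decide : Even 2)
  refine ⟨min ρ1 (1 / (4 * R)), by positivity, fun ρ hρ hρle N k => ?_⟩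
  have hρR : ρ * (4 * R) ≤ 1 := by
    have := hρle.trans (min_le_right _ _)
    rwa [le_div_iff₀ (by positivity)] at this
  have hst := ballLaw_isStep hn hρ
  have hs := hst.s_pos
  have hgr : 1 ≤ growth n q ρ := by
    unfold growth
    have : 0 ≤ 165 * (q + 2 : ℝ) ^ 2 * (27 / 2 * KLSConst n ^ 2) * ballVar n ρ := by positivity
    linarith
  set R' := walk ρ f N 0 with hR'
  have hR0 : 0 ≤ R' := walk_nonneg hf.nonneg N 0
  have hpot0 : ∀ μ : Measure (Eu n), 0 ≤ pot (q + 2) (covMat μ) := fun μ =>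
    le_trans (by positivity) (pot_ge hep (covMat_symm μ))
  induction k with
  | zero =>
    intro _ μ h
    have := h.jensen hK hf.conv hL.continuous
    have h2 : 0 ≤ (R' * growth n q ρ ^ 0 / (1 / 2) ^ (q + 2)) * pot (q + 2) (covMat μ) :=
      mul_nonneg (by positivity) (hpot0 μ)
    change f (bary μ) ≤ _
    linarith
  | succ k ih =>
    intro hk μ h
    specialize ih (by omega)
    have hc0 : ∀ k : ℕ, 0 ≤ R' * growth n q ρ ^ k / (1 / 2) ^ (q + 2) := fun k => by positivity
    by_cases hp : pot (q + 2) (covMat μ) < (1 / 2) ^ (q + 2)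
    · obtain ⟨U, d, hU, hU', hA, hd⟩ := pot_pinch hep (covMat_symm μ) hp
      obtain ⟨W, hWs, hAW, hW⟩ := diag_inv_facts hU hU' fun i => (hd i).1
      rw [← hA] at hAW
      have hpos : ∀ g : Eu n, ‖g‖ ≤ ρ → ∀ x ∈ K, 0 ≤ tiltDens μ (W *ᵥ g.ofLp) x := fun g hg =>
        tiltDens_nonneg hR (h.bary_norm hK hR) hW hρR hg
      have h1 := tilt_average hn hK hL hρ h hAW hpos ih
      have hmb := h.moment_bounds hK hR1.le hR
      have h2 := hstep _ ρ _ hst (hρle.trans (min_le_left _ _)) (covMat μ) W (thirdMom μ)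
        (27 / 2 * KLSConst n ^ 2) (covMat_symm μ) hWs hW
        (fun i j k => integral_congr_ae (.of_forall fun x => by ring))
        (fun i j k => integral_congr_ae (.of_forall fun x => by ring)) hmb.1 hmb.2
        (by nlinarith) (h.thirdMom_bound hK (by linarith) hU hU' hA hd)
      refine h1.trans (add_le_add le_rfl ?_)
      calc _ ≤ (R' * growth n q ρ ^ k / (1 / 2) ^ (q + 2)) *
            (growth n q ρ * pot (q + 2) (covMat μ)) := mul_le_mul_of_nonneg_left h2 (hc0 k)
        _ = _ := by rw [pow_succ]; ring
    · push Not at hp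
      have h1 := walk_add_le hρ hL hf.subadd (k + 1) (bary μ) 0
      rw [add_zero] at h1
      have h2 : walk ρ f (k + 1) 0 ≤ R' := walk_zero_mono hρ hL hf.mid hk
      have h3 := h.jensen hK hf.conv hL.continuous
      have h4 : R' ≤ (R' * growth n q ρ ^ (k + 1) / (1 / 2) ^ (q + 2)) * pot (q + 2) (covMat μ) := by
        calc R' ≤ R' * growth n q ρ ^ (k + 1) :=
              le_mul_of_one_le_right hR0 (one_le_pow₀ hgr)
          _ = (R' * growth n q ρ ^ (k + 1) / (1 / 2) ^ (q + 2)) * (1 / 2) ^ (q + 2) := by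
              field_simp
          _ ≤ _ := mul_le_mul_of_nonneg_left hp (hc0 _)
      linarith

end Induct

/-! ### Choice of parameters -/

section Final
open Matrix

variable {n : ℕ}

lemma ballVar_le (hn : 2 ≤ n) {ρ : ℝ} (hρ : 0 < ρ) : ballVar n ρ ≤ ρ ^ 2 := by
  have hst := ballLaw_isStep hn hρ
  have := hst.prob
  have h1 : ∫ g, ‖g‖ ^ 2 ∂ballLaw n ρ ≤ ∫ _g : Eu n, ρ ^ 2 ∂ballLaw n ρ := by
    refine integral_mono_ae (hst.integrable (by fun_prop)) (integrable_const _) ?_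
    filter_upwards [hst.ae_norm] with g hg
    gcongr
  simp only [integral_const, probReal_univ, one_smul] at h1
  have hn1 : (1 : ℝ) ≤ n := by exact_mod_cast (by omega : 1 ≤ n)
  rw [ballVar, div_le_iff₀ (by linarith)]
  nlinarith [sq_nonneg ρ]

lemma one_le_log {n : ℕ} (hn : 2 ≤ n) : 1 ≤ Real.log (n + 1) := by
  rw [Real.le_log_iff_exp_le (by positivity)]
  have : (2 : ℝ) ≤ n := by exact_mod_cast hn
  linarith [Real.exp_one_lt_d9]

/-- With `p ≥ 8 log (n+1)`, a growth of the potential by `exp (p/4)` keeps it below half its threshold. -/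
lemma growth_budget {n p : ℕ} (hn : 2 ≤ n) (hp : 8 * Real.log (n + 1) ≤ p) {G : ℝ}
    (hG : G ≤ Real.exp (p / 4)) : G / (1 / 2) ^ p * (n * (1 / 4) ^ p) ≤ 1 / 2 := by
  have hℓ := one_le_log hn
  have e : G / (1 / 2) ^ p * (n * (1 / 4) ^ p) = G * n * (1 / 2) ^ p := by
    rw [show (1 / 4 : ℝ) ^ p = (1 / 2) ^ p * (1 / 2) ^ p by rw [← mul_pow]; norm_num]
    field_simp
  have h2 : (1 / 2 : ℝ) ^ p = Real.exp (-(Real.log 2 * p)) := by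
    rw [Real.exp_neg, mul_comm, Real.exp_nat_mul, Real.exp_log (by norm_num)]
    simp
  have h3 : (n : ℝ) ≤ Real.exp (Real.log (n + 1)) := by
    rw [Real.exp_log (by positivity)]; linarith
  rw [e, h2]
  calc G * n * Real.exp (-(Real.log 2 * p)) ≤
        Real.exp (p / 4) * Real.exp (Real.log (n + 1)) * Real.exp (-(Real.log 2 * p)) := by gcongr
    _ = Real.exp (p / 4 + Real.log (n + 1) + -(Real.log 2 * p)) := by rw [Real.exp_add, Real.exp_add]
    _ ≤ Real.exp (-1) := by
        gcongr
        have := Real.log_two_gt_d9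
        nlinarith
    _ ≤ 1 / 2 := by
        rw [Real.exp_neg, inv_eq_one_div]
        exact one_div_le_one_div_of_le (by norm_num) (by linarith [Real.exp_one_gt_d9])

end Final

end Proof

/-- For a convex body in isotropic position, `M(K) ≤ C ψₙ √(log(n+1)) / √n`. -/
theorem M_bound_isotropic_psi :
    ∃ C : ℝ, 0 < C ∧
      ∀ n : ℕ, 2 ≤ n → ∀ K : Set (EuclideanSpace ℝ (Fin n)),
        IsConvexBody K → IsIsotropicBody K →
        Mparam n K ≤ C * KLSConst n * Real.sqrt (Real.log (n + 1)) / Real.sqrt n := by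
  refine ⟨5000, by norm_num, fun n hn K hK hi => ?_⟩
  have hn0 : (0 : ℝ) < n := by exact_mod_cast (by omega : 0 < n)
  have hψ := one_le_KLS (by omega) hK hi
  have hf := gauge_isGood hK (zero_mem_interior hK hi)
  obtain ⟨L, hL⟩ := hf.lip
  have hℓ := one_le_log hn
  set ℓ := Real.log ((n : ℝ) + 1) with hℓdef
  set ψ := KLSConst n with hψdef
  -- the exponent of the potential is `p = q + 2 = 2 ⌈4 ℓ⌉`, so that `8 ℓ ≤ p ≤ 10 ℓ`
  obtain ⟨m, hm1, hm2⟩ : ∃ m : ℕ, 4 * ℓ ≤ (m : ℝ) + 1 ∧ (m : ℝ) + 1 ≤ 4 * ℓ + 1 := by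
    have hc := Nat.ceil_lt_add_one (by positivity : 0 ≤ 4 * ℓ)
    have hc' := Nat.le_ceil (4 * ℓ)
    have hpos : 0 < ⌈4 * ℓ⌉₊ := Nat.ceil_pos.2 (by linarith)
    refine ⟨⌈4 * ℓ⌉₊ - 1, ?_, ?_⟩ <;> rw [Nat.cast_sub (by omega)] <;> push_cast <;> linarith
  set q := 2 * m with hq
  have hqe : Even q := ⟨m, by omega⟩
  have hp1 : 8 * ℓ ≤ ((q + 2 : ℕ) : ℝ) := by rw [hq]; push_cast; linarith
  have hp2 : (q : ℝ) + 2 ≤ 10 * ℓ := by rw [hq]; push_cast; linarith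
  obtain ⟨ρ0, hρ0, hwalk⟩ := walk_le_integral hn hψ hK.1 hf hqe
  -- the total variance allowed for the walk: the potential then grows by at most
  -- `exp (165 · (27/2) p² ψ² β) = exp (p / 4)`, where `p = q + 2`
  set β : ℝ := 1 / (8910 * (q + 2) * ψ ^ 2) with hβ
  have hβ0 : 0 < β := by positivity
  set ρ := min ρ0 (√β) with hρdef
  have hρ : 0 < ρ := lt_min hρ0 (Real.sqrt_pos.2 hβ0)
  have hst := ballLaw_isStep hn hρ
  have hs := hst.s_pos
  set s := ballVar n ρ with hsdef
  have hsβ : s ≤ β := by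
    calc s ≤ ρ ^ 2 := ballVar_le hn hρ
      _ ≤ (√β) ^ 2 := by gcongr; exact min_le_right _ _
      _ = β := Real.sq_sqrt hβ0.le
  set N := ⌊β / s⌋₊ with hN
  have hN1 : (N : ℝ) * s ≤ β := by
    have := Nat.floor_le (div_nonneg hβ0.le hs.le)
    rwa [← hN, le_div_iff₀ hs] at this
  have hN2 : β / 2 ≤ N * s := by
    have h1 : 1 ≤ β / s := by rwa [le_div_iff₀ hs, one_mul]
    have h2 : 1 ≤ N := Nat.le_floor (by simpa using h1)
    have h3 := Nat.lt_floor_add_one (β / s)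
    rw [← hN, div_lt_iff₀ hs] at h3
    have h4 : (1 : ℝ) ≤ N := by exact_mod_cast h2
    nlinarith
  have hgrow : growth n q ρ ^ N ≤ Real.exp (((q + 2 : ℕ) : ℝ) / 4) := by
    have h1 : growth n q ρ ≤ Real.exp (165 * (q + 2 : ℝ) ^ 2 * (27 / 2 * ψ ^ 2) * s) := by
      have := Real.add_one_le_exp (165 * (q + 2 : ℝ) ^ 2 * (27 / 2 * ψ ^ 2) * s)
      rw [growth]; linarith
    have h0 : 0 ≤ growth n q ρ := by unfold growth; positivity
    calc growth n q ρ ^ N ≤ Real.exp (165 * (q + 2 : ℝ) ^ 2 * (27 / 2 * ψ ^ 2) * s) ^ N := by gcongr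
      _ = Real.exp (165 * (q + 2 : ℝ) ^ 2 * (27 / 2 * ψ ^ 2) * (N * s)) := by
          rw [← Real.exp_nat_mul]; congr 1; ring
      _ ≤ Real.exp (165 * (q + 2 : ℝ) ^ 2 * (27 / 2 * ψ ^ 2) * β) := by gcongr
      _ = _ := by
          congr 1
          rw [hβ]; push_cast; field_simp; norm_num
  have hmain := hwalk ρ hρ (min_le_left _ _) N N le_rfl (unifOn K) (unifOn_state hK)
  obtain ⟨hb, hcov⟩ := unifOn_moments hi
  rw [hb, hcov] at hmain
  have hpot : pot (q + 2) (1 : Matrix (Fin n) (Fin n) ℝ) = n * (1 / 4) ^ (q + 2) := by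
    rw [pot, sub_self, zero_pow (by omega), Matrix.trace_zero, zero_add]
  have hint : ∫ x, gauge K x ∂(unifOn K) ≤ 1 := by
    have hst' := unifOn_state hK
    refine (le_abs_self _).trans (hst'.abs_integral_le fun x hx => ?_)
    rw [abs_of_nonneg (gauge_nonneg x)]; exact hf.le_one x hx
  set w := walk ρ (gauge K) N 0 with hw
  have hw0 : 0 ≤ w := walk_nonneg hf.nonneg N 0
  have hw2 : w ≤ 2 := by
    have hbud := growth_budget hn hp1 hgrow
    rw [hpot] at hmain
    have e : w * growth n q ρ ^ N / (1 / 2) ^ (q + 2) * (n * (1 / 4) ^ (q + 2)) =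
        w * (growth n q ρ ^ N / (1 / 2) ^ (q + 2) * (n * (1 / 4) ^ (q + 2))) := by ring
    rw [e] at hmain
    have := mul_le_mul_of_nonneg_left hbud hw0
    linarith
  have hwM : w = Mparam n K * walk ρ (fun x : Eu n => ‖x‖) N 0 :=
    walk_eq_sphere_mean hn hρ hL hf.nonneg hf.homog N
  have hM0 : 0 ≤ Mparam n K := integral_nonneg fun x => gauge_nonneg _
  have hMX : Mparam n K * √(n * β / 2) ≤ 10 := by
    have h1 := walk_norm_zero hn hρ N
    have h2 : √(n * β / 2) ≤ √(N * (n * s)) := by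
      apply Real.sqrt_le_sqrt
      nlinarith
    have h3 := mul_le_mul_of_nonneg_left (h1.trans' (mul_le_mul_of_nonneg_left h2 (by norm_num))) hM0
    linarith
  by_contra hcon
  push Not at hcon
  set D := 5000 * ψ * √ℓ / √(n : ℝ) with hD
  have hD0 : 0 ≤ D := by positivity
  have hX : 0 < √(n * β / 2) := Real.sqrt_pos.2 (by positivity)
  have hlt : D * √(n * β / 2) < 10 := (mul_lt_mul_of_pos_right hcon hX).trans_le hMX
  have hsq : (D * √(n * β / 2)) ^ 2 < 10 ^ 2 := by gcongr
  rw [mul_pow, Real.sq_sqrt (by positivity), hD, div_pow, mul_pow, Real.sq_sqrt (by positivity),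
    Real.sq_sqrt hn0.le, hβ] at hsq
  have e : (5000 * ψ) ^ 2 * ℓ / n * (n * (1 / (8910 * (q + 2) * ψ ^ 2)) / 2) =
      5000 ^ 2 * ℓ / (17820 * (q + 2)) := by field_simp; norm_num
  rw [e, div_lt_iff₀ (by positivity)] at hsq
  nlinarith

end
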